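/- Theorem 2 (joint source-channel coding for the MARC, Slepian-Wolf coding to the relay and CPM to the destination): The source pair (S1, S2) can be reliably transmitted over the discrete memoryless MARC with relay side information W3 and receiver side information W if there exists a joint pmf that factors as p(s1,s2,w3,w) p(x1|s1) p(x2|s2) p(x3|s1,s2) p(y3,y|x1,x2,x3) (where p(s1,s2,w3,w) is the given source distribution and p(y3,y|x1,x2,x3) is the given channel law) such that all of the following strict inequalities hold: H(S1|S2,W3) < I(X1;Y3|S1,X2,X3); H(S2|S1,W3) < I(X2;Y3|S2,X1,X3); H(S1,S2|W3) < I(X1,X2;Y3|S1,S2,X3); H(S1|S2,W) < I(X1,X3;Y|S2,X2,W); H(S2|S1,W) < I(X2,X3;Y|S1,X1,W); H(S1,S2|W) < I(X1,X2,X3;Y|W). -/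

import Mathlib

open scoped BigOperators

/-- A probability mass function on a finite type. -/
def IsPmf {α : Type*} [Fintype α] (p : α → ℝ) : Prop :=
  (∀ a, 0 ≤ p a) ∧ ∑ a, p a = 1

/-- Shannon entropy (natural logarithm) of the push-forward of `μ` under `X`. -/
noncomputable def entropyOf {Ω α : Type*} [Fintype Ω] [Fintype α] [DecidableEq α]
    (μ : Ω → ℝ) (X : Ω → α) : ℝ :=
  ∑ a : α, Real.negMulLog (∑ ω : Ω, if X ω = a then μ ω else 0)

/-- Conditional Shannon entropy `H(X | Y)` under `μ`. -/
noncomputable def condEntropyOf {Ω α β : Type*} [Fintype Ω] [Fintype α] [Fintype β]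
    [DecidableEq α] [DecidableEq β] (μ : Ω → ℝ) (X : Ω → α) (Y : Ω → β) : ℝ :=
  entropyOf μ (fun ω => (X ω, Y ω)) - entropyOf μ Y

/-- Mutual information `I(X ; Y)` under `μ`. -/
noncomputable def mutualInfoOf {Ω α β : Type*} [Fintype Ω] [Fintype α] [Fintype β]
    [DecidableEq α] [DecidableEq β] (μ : Ω → ℝ) (X : Ω → α) (Y : Ω → β) : ℝ :=
  entropyOf μ X + entropyOf μ Y - entropyOf μ (fun ω => (X ω, Y ω))

/-- Conditional mutual information `I(X ; Y | Z)` under `μ`. -/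
noncomputable def condMutualInfoOf {Ω α β γ : Type*} [Fintype Ω] [Fintype α] [Fintype β]
    [Fintype γ] [DecidableEq α] [DecidableEq β] [DecidableEq γ]
    (μ : Ω → ℝ) (X : Ω → α) (Y : Ω → β) (Z : Ω → γ) : ℝ :=
  entropyOf μ (fun ω => (X ω, Z ω)) + entropyOf μ (fun ω => (Y ω, Z ω))
    - entropyOf μ (fun ω => (X ω, Y ω, Z ω)) - entropyOf μ Z

/-- Causality of the relay encoding functions: the channel input of the relay at time `k`
depends on the relay channel outputs only through those at times `j < k`. -/
def CausalRelay {n : ℕ} {Y3 W3 X3 : Type*}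
    (f3 : Fin n → (Fin n → Y3) → (Fin n → W3) → X3) : Prop :=
  ∀ (k : Fin n) (y y' : Fin n → Y3) (w : Fin n → W3),
    (∀ j : Fin n, j < k → y j = y' j) → f3 k y w = f3 k y' w

/-- Error probability of a blocklength-`n` source-channel code over the discrete memoryless
MARC with source/side-information pmf `pSrc` (i.i.d. across time) and channel law `Q`. -/
noncomputable def marcErrProb {S1 S2 W W3 X1 X2 X3 Y Y3 : Type*}
    [Fintype S1] [Fintype S2] [Fintype W] [Fintype W3] [Fintype Y] [Fintype Y3]
    [DecidableEq S1] [DecidableEq S2]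
    (pSrc : S1 × S2 × W × W3 → ℝ) (Q : X1 × X2 × X3 → Y × Y3 → ℝ) (n : ℕ)
    (f1 : (Fin n → S1) → Fin n → X1) (f2 : (Fin n → S2) → Fin n → X2)
    (f3 : Fin n → (Fin n → Y3) → (Fin n → W3) → X3)
    (g : (Fin n → Y) → (Fin n → W) → (Fin n → S1) × (Fin n → S2)) : ℝ :=
  ∑ s1 : Fin n → S1, ∑ s2 : Fin n → S2, ∑ w : Fin n → W, ∑ w3 : Fin n → W3,
    ∑ y : Fin n → Y, ∑ y3 : Fin n → Y3,
      if g y w ≠ (s1, s2) then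
        (∏ k : Fin n, pSrc (s1 k, s2 k, w k, w3 k)) *
          ∏ k : Fin n, Q (f1 s1 k, f2 s2 k, f3 k y3 w3) (y k, y3 k)
      else 0

/-- The sources `(S1, S2)` can be reliably transmitted over the DM MARC: codes with
arbitrarily small error probability exist. -/
def MarcReliablyTransmitted {S1 S2 W W3 X1 X2 X3 Y Y3 : Type*}
    [Fintype S1] [Fintype S2] [Fintype W] [Fintype W3] [Fintype Y] [Fintype Y3]
    [DecidableEq S1] [DecidableEq S2]
    (pSrc : S1 × S2 × W × W3 → ℝ) (Q : X1 × X2 × X3 → Y × Y3 → ℝ) : Prop :=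
  ∀ ε : ℝ, 0 < ε → ∃ n : ℕ, 0 < n ∧
    ∃ (f1 : (Fin n → S1) → Fin n → X1) (f2 : (Fin n → S2) → Fin n → X2)
      (f3 : Fin n → (Fin n → Y3) → (Fin n → W3) → X3)
      (g : (Fin n → Y) → (Fin n → W) → (Fin n → S1) × (Fin n → S2)),
      CausalRelay f3 ∧ marcErrProb pSrc Q n f1 f2 f3 g ≤ ε

/-- The single-letter joint distribution of Theorem 2:
`p(s1,s2,w3,w) p(x1|s1) p(x2|s2) p(x3|s1,s2) p(y3,y|x1,x2,x3)`. -/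
noncomputable def thm2Joint {S1 S2 W W3 X1 X2 X3 Y Y3 : Type*}
    (pSrc : S1 × S2 × W × W3 → ℝ) (Q : X1 × X2 × X3 → Y × Y3 → ℝ)
    (pX1 : S1 → X1 → ℝ) (pX2 : S2 → X2 → ℝ) (pX3 : S1 → S2 → X3 → ℝ) :
    S1 × S2 × W3 × W × X1 × X2 × X3 × Y3 × Y → ℝ :=
  fun (s1, s2, w3, w, x1, x2, x3, y3, y) =>
    pSrc (s1, s2, w, w3) * pX1 s1 x1 * pX2 s2 x2 * pX3 s1 s2 x3 * Q (x1, x2, x3) (y, y3)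

/-- A product of pmfs has total mass one. -/
theorem sum_pi_prod_eq_one {ι α : Type*} [Fintype ι] [DecidableEq ι] [Fintype α]
    {p : ι → α → ℝ} (hp : ∀ i, IsPmf (p i)) : ∑ c : ι → α, ∏ i, p i (c i) = 1 := by
  rw [← Fintype.prod_sum]
  exact Finset.prod_eq_one fun i _ => (hp i).2

theorem isPmf_pi {ι α : Type*} [Fintype ι] [DecidableEq ι] [Fintype α]
    {p : ι → α → ℝ} (hp : ∀ i, IsPmf (p i)) : IsPmf fun c : ι → α => ∏ i, p i (c i) :=
  ⟨fun _ => Finset.prod_nonneg fun i _ => (hp i).1 _, sum_pi_prod_eq_one hp⟩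

/-- One-coordinate marginal of a product pmf. -/
theorem sum_pi_marginal {ι α : Type*} [Fintype ι] [DecidableEq ι] [Fintype α]
    {p : ι → α → ℝ} (hp : ∀ i, IsPmf (p i)) (i : ι) (F : α → ℝ) :
    ∑ c : ι → α, (∏ k, p k (c k)) * F (c i) = ∑ u, p i u * F u := by
  rw [← (Equiv.funSplitAt i α).symm.sum_comp, Fintype.sum_prod_type]
  refine Finset.sum_congr rfl fun u _ => ?_
  have h : ∀ r : {j // j ≠ i} → α,
      (∏ k, p k ((Equiv.funSplitAt i α).symm (u, r) k)) * F ((Equiv.funSplitAt i α).symm (u, r) i)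
        = p i u * F u * ∏ k : {j // j ≠ i}, p k (r k) := by
    intro r
    rw [Fintype.prod_eq_mul_prod_subtype_ne _ i]
    have h2 : ∀ k : {j // j ≠ i}, (Equiv.funSplitAt i α).symm (u, r) k = r k := fun k => by
      simp [Equiv.funSplitAt, Equiv.piSplitAt, k.2]
    simp only [h2]
    simp [Equiv.funSplitAt, Equiv.piSplitAt]
    ring
  simp only [h]
  rw [← Finset.mul_sum, sum_pi_prod_eq_one fun k : {j // j ≠ i} => hp k, mul_one]

/-- Two-coordinate marginal of a product pmf. -/
theorem sum_pi_marginal₂ {ι α : Type*} [Fintype ι] [DecidableEq ι] [Fintype α]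
    {p : ι → α → ℝ} (hp : ∀ i, IsPmf (p i)) {i j : ι} (hij : i ≠ j) (F : α → α → ℝ) :
    ∑ c : ι → α, (∏ k, p k (c k)) * F (c i) (c j)
      = ∑ u, ∑ v, p i u * p j v * F u v := by
  rw [← (Equiv.funSplitAt i α).symm.sum_comp, Fintype.sum_prod_type]
  refine Finset.sum_congr rfl fun u _ => ?_
  have h : ∀ r : {j // j ≠ i} → α,
      (∏ k, p k ((Equiv.funSplitAt i α).symm (u, r) k)) *
          F ((Equiv.funSplitAt i α).symm (u, r) i) ((Equiv.funSplitAt i α).symm (u, r) j)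
        = p i u * ((∏ k : {j // j ≠ i}, p k (r k)) * F u (r ⟨j, hij.symm⟩)) := by
    intro r
    rw [Fintype.prod_eq_mul_prod_subtype_ne _ i]
    have h2 : ∀ k : {j // j ≠ i}, (Equiv.funSplitAt i α).symm (u, r) k = r k := fun k => by
      simp [Equiv.funSplitAt, Equiv.piSplitAt, k.2]
    have h3 := h2 ⟨j, hij.symm⟩
    simp only at h3
    simp only [h2, h3]
    simp [Equiv.funSplitAt, Equiv.piSplitAt]
    ring
  simp only [h]
  rw [← Finset.mul_sum, sum_pi_marginal (p := fun k : {j // j ≠ i} => p k) (fun k => hp k)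
    ⟨j, hij.symm⟩ (F u), Finset.mul_sum]
  exact Finset.sum_congr rfl fun v _ => by ring

/-- A weighted average under a pmf dominates some value. -/
theorem IsPmf.exists_le_of_sum_mul_le {α : Type*} [Fintype α] {p : α → ℝ} (hp : IsPmf p)
    {f : α → ℝ} {b : ℝ} (h : ∑ a, p a * f a ≤ b) : ∃ a, f a ≤ b := by
  by_contra! hlt
  obtain ⟨a, ha⟩ : ∃ a, 0 < p a := by
    by_contra! hle
    have := Finset.sum_nonpos fun a (_ : a ∈ Finset.univ) => hle a
    linarith [hp.2]
  have : ∑ a, p a * b < ∑ a, p a * f a :=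
    Finset.sum_lt_sum (fun a _ => mul_le_mul_of_nonneg_left (hlt a).le (hp.1 a))
      ⟨a, Finset.mem_univ a, mul_lt_mul_of_pos_left (hlt a) ha⟩
  rw [← Finset.sum_mul, hp.2, one_mul] at this
  linarith

theorem IsPmf.nonempty {α : Type*} [Fintype α] {p : α → ℝ} (hp : IsPmf p) : Nonempty α := by
  by_contra h
  rw [not_nonempty_iff] at h
  simpa using hp.2

/-- For weights `c`, `q` and a kernel `K` with marginal `J g = ∑ v, q v g * K v g`, the
`τ`-moment of the likelihood ratio `J / K`. -/
noncomputable def ratioMoment {V G : Type*} [Fintype V] [Fintype G]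
    (c : G → ℝ) (q K : V → G → ℝ) (τ : ℝ) : ℝ :=
  ∑ g, c g * ∑ v, q v g * K v g * ((∑ v', q v' g * K v' g) / K v g) ^ τ

theorem ratioMoment_equiv {V G V' G' : Type*} [Fintype V] [Fintype G] [Fintype V'] [Fintype G']
    (eV : V ≃ V') (eG : G ≃ G') {c : G → ℝ} {q K : V → G → ℝ} {c' : G' → ℝ} {q' K' : V' → G' → ℝ}
    (hc : ∀ g, c g = c' (eG g)) (hq : ∀ v g, q v g = q' (eV v) (eG g))
    (hK : ∀ v g, K v g = K' (eV v) (eG g)) (τ : ℝ) :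
    ratioMoment c q K τ = ratioMoment c' q' K' τ := by
  unfold ratioMoment
  refine Fintype.sum_equiv eG _ _ fun g => ?_
  rw [hc]
  congr 1
  refine Fintype.sum_equiv eV _ _ fun v => ?_
  have : ∑ v', q v' g * K v' g = ∑ v', q' v' (eG g) * K' v' (eG g) :=
    Fintype.sum_equiv eV _ _ fun v' => by rw [hq, hK]
  rw [hq, hK, this]

theorem ratioMoment_pi {D V G : Type*} [Fintype D] [DecidableEq D] [Fintype V] [Fintype G]
    {c : D → G → ℝ} {q K : D → V → G → ℝ} (hq : ∀ d v g, 0 ≤ q d v g)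
    (hK : ∀ d v g, 0 ≤ K d v g) (τ : ℝ) :
    ratioMoment (fun g : D → G => ∏ d, c d (g d)) (fun (v : D → V) g => ∏ d, q d (v d) (g d))
        (fun (v : D → V) g => ∏ d, K d (v d) (g d)) τ = ∏ d, ratioMoment (c d) (q d) (K d) τ := by
  unfold ratioMoment
  rw [Fintype.prod_sum]
  refine Finset.sum_congr rfl fun g _ => ?_
  rw [Finset.prod_mul_distrib, Fintype.prod_sum]
  congr 1
  refine Finset.sum_congr rfl fun v _ => ?_
  have hJ : ∑ v' : D → V, (∏ d, q d (v' d) (g d)) * ∏ d, K d (v' d) (g d)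
      = ∏ d, ∑ v', q d v' (g d) * K d v' (g d) := by
    rw [Fintype.prod_sum]
    exact Finset.sum_congr rfl fun v' _ => Finset.prod_mul_distrib.symm
  rw [hJ, ← Finset.prod_div_distrib, ← Finset.prod_mul_distrib,
    ← Real.finsetProd_rpow _ _ fun d _ =>
      div_nonneg (Finset.sum_nonneg fun v' _ => mul_nonneg (hq _ _ _) (hK _ _ _)) (hK _ _ _),
    ← Finset.prod_mul_distrib]

theorem ratioMoment_prod {V G V' G' : Type*} [Fintype V] [Fintype G] [Fintype V'] [Fintype G']
    {c : G → ℝ} {q K : V → G → ℝ} {c' : G' → ℝ} {q' K' : V' → G' → ℝ}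
    (hq : ∀ v g, 0 ≤ q v g) (hK : ∀ v g, 0 ≤ K v g)
    (hq' : ∀ v g, 0 ≤ q' v g) (hK' : ∀ v g, 0 ≤ K' v g) (τ : ℝ) :
    ratioMoment (fun g : G × G' => c g.1 * c' g.2)
        (fun (v : V × V') g => q v.1 g.1 * q' v.2 g.2)
        (fun (v : V × V') g => K v.1 g.1 * K' v.2 g.2) τ
      = ratioMoment c q K τ * ratioMoment c' q' K' τ := by
  unfold ratioMoment
  rw [Finset.sum_mul_sum, Fintype.sum_prod_type]
  refine Finset.sum_congr rfl fun g _ => Finset.sum_congr rfl fun g' _ => ?_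
  rw [mul_mul_mul_comm, Finset.sum_mul_sum, Fintype.sum_prod_type]
  congr 1
  refine Finset.sum_congr rfl fun v _ => Finset.sum_congr rfl fun v' _ => ?_
  have hJ : ∑ x : V × V', q x.1 g * q' x.2 g' * (K x.1 g * K' x.2 g')
      = (∑ x, q x g * K x g) * ∑ x, q' x g' * K' x g' := by
    rw [Finset.sum_mul_sum, Fintype.sum_prod_type]
    exact Finset.sum_congr rfl fun _ _ => Finset.sum_congr rfl fun _ _ => by ring
  rw [hJ, mul_div_mul_comm, Real.mul_rpow
    (div_nonneg (Finset.sum_nonneg fun _ _ => mul_nonneg (hq _ _) (hK _ _)) (hK _ _))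
    (div_nonneg (Finset.sum_nonneg fun _ _ => mul_nonneg (hq' _ _) (hK' _ _)) (hK' _ _))]
  ring

/-- The moment of a family of ratios indexed by `D` together with copies of another ratio
indexed by `E`. -/
theorem ratioMoment_block {D E V G V' G' : Type*} [Fintype D] [DecidableEq D] [Fintype E]
    [DecidableEq E] [Fintype V] [Fintype G] [Fintype V'] [Fintype G']
    {c : D → G → ℝ} {q K : D → V → G → ℝ} {c' : G' → ℝ} {q' K' : V' → G' → ℝ}
    (hq : ∀ d v g, 0 ≤ q d v g) (hK : ∀ d v g, 0 ≤ K d v g)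
    (hq' : ∀ v g, 0 ≤ q' v g) (hK' : ∀ v g, 0 ≤ K' v g) (τ : ℝ) :
    ratioMoment (fun g : (D → G) × (E → G') => (∏ d, c d (g.1 d)) * ∏ e, c' (g.2 e))
        (fun (v : (D → V) × (E → V')) g => (∏ d, q d (v.1 d) (g.1 d)) * ∏ e, q' (v.2 e) (g.2 e))
        (fun (v : (D → V) × (E → V')) g => (∏ d, K d (v.1 d) (g.1 d)) * ∏ e, K' (v.2 e) (g.2 e)) τ
      = (∏ d, ratioMoment (c d) (q d) (K d) τ) * ratioMoment c' q' K' τ ^ Fintype.card E := by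
  refine (ratioMoment_prod (c := fun g : D → G => ∏ d, c d (g d))
    (q := fun (v : D → V) g => ∏ d, q d (v d) (g d))
    (K := fun (v : D → V) g => ∏ d, K d (v d) (g d))
    (c' := fun g : E → G' => ∏ d, c' (g d)) (q' := fun (v : E → V') g => ∏ d, q' (v d) (g d))
    (K' := fun (v : E → V') g => ∏ d, K' (v d) (g d))
    (fun _ _ => Finset.prod_nonneg fun _ _ => hq _ _ _)
    (fun _ _ => Finset.prod_nonneg fun _ _ => hK _ _ _)
    (fun _ _ => Finset.prod_nonneg fun _ _ => hq' _ _)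
    (fun _ _ => Finset.prod_nonneg fun _ _ => hK' _ _) τ).trans ?_
  rw [ratioMoment_pi hq hK, ratioMoment_pi (fun _ => hq') (fun _ => hK'), Finset.prod_const,
    Finset.card_univ]

open Classical in
/-- Markov's inequality for the likelihood ratio. -/
theorem sum_not_le_le_ratioMoment {V G : Type*} [Fintype V] [Fintype G]
    {c : G → ℝ} {q K : V → G → ℝ} (hc : ∀ g, 0 ≤ c g) (hq : ∀ v g, 0 ≤ q v g)
    (hK : ∀ v g, 0 ≤ K v g) {γ τ : ℝ} (hγ : 0 < γ) (hτ : 0 < τ) :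
    ∑ g, c g * ∑ v, q v g * K v g * (if ∑ v', q v' g * K v' g ≤ γ * K v g then 0 else 1)
      ≤ γ⁻¹ ^ τ * ratioMoment c q K τ := by
  unfold ratioMoment
  rw [Finset.mul_sum]
  refine Finset.sum_le_sum fun g _ => ?_
  rw [mul_left_comm]
  refine mul_le_mul_of_nonneg_left ?_ (hc g)
  rw [Finset.mul_sum]
  refine Finset.sum_le_sum fun v _ => ?_
  rcases (mul_nonneg (hq v g) (hK v g)).eq_or_lt with h0 | h0
  · simp [← h0]
  have hKpos : 0 < K v g := pos_of_mul_pos_right h0 (hq v g)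
  have hJ : 0 ≤ ∑ v', q v' g * K v' g :=
    Finset.sum_nonneg fun v' _ => mul_nonneg (hq v' g) (hK v' g)
  rw [mul_left_comm (γ⁻¹ ^ τ)]
  refine mul_le_mul_of_nonneg_left ?_ h0.le
  split_ifs with h
  · positivity
  · rw [← Real.mul_rpow (by positivity) (by positivity)]
    refine Real.one_le_rpow ?_ hτ.le
    rw [inv_mul_eq_div, div_div, one_le_div (by positivity), mul_comm]
    exact (not_le.1 h).le

theorem hasDerivAt_ratioMoment {V G : Type*} [Fintype V] [Fintype G]
    {c : G → ℝ} {q K : V → G → ℝ} (hq : ∀ v g, 0 ≤ q v g) (hK : ∀ v g, 0 ≤ K v g) :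
    HasDerivAt (ratioMoment c q K)
      (∑ g, c g * ∑ v, q v g * K v g * Real.log ((∑ v', q v' g * K v' g) / K v g)) 0 := by
  unfold ratioMoment
  refine HasDerivAt.fun_sum fun g _ => HasDerivAt.const_mul _ (HasDerivAt.fun_sum fun v _ => ?_)
  rcases (mul_nonneg (hq v g) (hK v g)).eq_or_lt with h0 | h0
  · simpa [← h0] using hasDerivAt_const (0 : ℝ) (0 : ℝ)
  · have hKpos : 0 < K v g := pos_of_mul_pos_right h0 (hq v g)
    have hJ : 0 < ∑ v', q v' g * K v' g :=
      h0.trans_le (Finset.single_le_sum (f := fun v' => q v' g * K v' g)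
        (fun v' _ => mul_nonneg (hq v' g) (hK v' g)) (Finset.mem_univ v))
    simpa using (HasDerivAt.const_mul (q v g * K v g)
      (Real.hasStrictDerivAt_const_rpow (div_pos hJ hKpos) 0).hasDerivAt)

theorem ratioMoment_zero {V G : Type*} [Fintype V] [Fintype G] (c : G → ℝ) (q K : V → G → ℝ) :
    ratioMoment c q K 0 = ∑ g, c g * ∑ v, q v g * K v g := by
  simp [ratioMoment]

/-- If `a 0 = b 0 = 1` and `a` decreases at `0`, a high power of `a` beats `b` at some positive
argument. -/
theorem eventually_exists_pow_mul_lt_one {a b : ℝ → ℝ} {a' b' : ℝ} (ha : HasDerivAt a a' 0)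
    (hb : HasDerivAt b b' 0) (ha0 : a 0 = 1) (hb0 : b 0 = 1) (ha' : a' < 0) :
    ∀ᶠ B : ℕ in Filter.atTop, ∃ τ > 0, 0 ≤ a τ ^ B * b τ ∧ a τ ^ B * b τ < 1 := by
  have hB : ∀ᶠ B : ℕ in Filter.atTop, (B : ℝ) * a' + b' < 0 := by
    obtain ⟨B0, hB0⟩ := exists_nat_gt (b' / -a')
    filter_upwards [Filter.eventually_ge_atTop B0] with B hB
    have : b' / -a' < B := hB0.trans_le (by exact_mod_cast hB)
    rw [div_lt_iff₀ (by linarith)] at this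
    linarith
  filter_upwards [hB] with B hB
  have hd : HasDerivAt (fun τ => a τ ^ B * b τ) (B * a' + b') 0 := by
    simpa [ha0, hb0] using (ha.fun_pow B).fun_mul hb
  have h1 := hd.tendsto_slope_zero_right.eventually (gt_mem_nhds hB)
  have h2 : ∀ᶠ τ in nhdsWithin 0 (Set.Ioi 0), 0 < a τ ^ B * b τ :=
    (hd.continuousAt.eventually_const_lt (by simp [ha0, hb0])).filter_mono nhdsWithin_le_nhds
  obtain ⟨τ, ⟨hτ, hτ'⟩, hτ0⟩ := ((h1.and h2).and self_mem_nhdsWithin).exists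
  refine ⟨τ, hτ0, hτ'.le, ?_⟩
  simp only [zero_add, ha0, hb0, one_pow, mul_one, smul_eq_mul] at hτ
  have := (mul_neg_iff.1 hτ)
  have hpos : (0 : ℝ) < τ⁻¹ := inv_pos.2 hτ0
  rcases this with h | h <;> linarith [h.1, h.2]

open Classical in
/-- Union bound for random coding: for codewords that are pairwise independent given a common
variable, the expected number of wrong messages passing a likelihood-ratio test with
threshold `γ` is at most `γ`. -/
theorem sum_confusion_le {Θ A U H Z : Type*} [Fintype Θ] [Fintype A] [Fintype U] [Fintype H]
    [Fintype Z] {w : Θ → ℝ} {C : Θ → A → U} {X : Θ → H} {c : H → ℝ} {q : A → U → ℝ}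
    (hc : ∀ h, 0 ≤ c h) (hq : ∀ a u, 0 ≤ q a u) {r : A → A → Prop}
    (hind : ∀ a a', r a a' → ∀ F : H → U → U → ℝ,
      ∑ θ, w θ * F (X θ) (C θ a) (C θ a')
        = ∑ h, ∑ u, ∑ u', c h * (q a u * q a' u') * F h u u')
    {K : A → U → H → Z → ℝ} (hK : ∀ a u h z, 0 ≤ K a u h z) {γ : ℝ}
    {T : A → U → H → Z → Prop}
    (hT : ∀ a u h z, T a u h z → ∑ a', ∑ u', q a' u' * K a' u' h z ≤ γ * K a u h z)
    (hγ : 0 ≤ γ) :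
    ∑ θ, w θ * ∑ a, ∑ z, K a (C θ a) (X θ) z *
        ∑ a', (if r a a' ∧ T a' (C θ a') (X θ) z then (1 : ℝ) else 0)
      ≤ γ * ∑ h, ∑ z, ∑ a, ∑ u, c h * (q a u * K a u h z) := by
  calc ∑ θ, w θ * ∑ a, ∑ z, K a (C θ a) (X θ) z *
        ∑ a', (if r a a' ∧ T a' (C θ a') (X θ) z then (1 : ℝ) else 0)
      = ∑ a, ∑ z, ∑ a', ∑ θ, w θ * (K a (C θ a) (X θ) z *
          (if r a a' ∧ T a' (C θ a') (X θ) z then (1 : ℝ) else 0)) := by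
        simp only [Finset.mul_sum]
        rw [Finset.sum_comm]
        refine Finset.sum_congr rfl fun a _ => ?_
        rw [Finset.sum_comm]
        refine Finset.sum_congr rfl fun z _ => ?_
        rw [Finset.sum_comm]
    _ ≤ ∑ a, ∑ z, ∑ a', ∑ h, ∑ u, ∑ u', c h * (q a u * q a' u') * (K a u h z *
          (if T a' u' h z then (1 : ℝ) else 0)) := by
        refine Finset.sum_le_sum fun a _ => Finset.sum_le_sum fun z _ =>
          Finset.sum_le_sum fun a' _ => ?_
        by_cases hr : r a a'
        · rw [hind a a' hr fun h u u' => K a u h z *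
            (if r a a' ∧ T a' u' h z then (1 : ℝ) else 0)]
          simp [hr]
        · simp only [hr, false_and, if_false, mul_zero, Finset.sum_const_zero]
          refine Finset.sum_nonneg fun h _ => Finset.sum_nonneg fun u _ =>
            Finset.sum_nonneg fun u' _ => ?_
          exact mul_nonneg (mul_nonneg (hc h) (mul_nonneg (hq _ _) (hq _ _)))
            (mul_nonneg (hK _ _ _ _) (by split_ifs <;> norm_num))
    _ = ∑ h, ∑ z, ∑ a', ∑ u', c h * (q a' u' * (if T a' u' h z then (1 : ℝ) else 0) *
          ∑ a, ∑ u, q a u * K a u h z) := by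
        simp only [Finset.mul_sum]
        simp only [← Fintype.sum_prod_type']
        refine Fintype.sum_equiv
          { toFun := fun x => (x.2.2.2.1, x.2.1, x.2.2.1, x.2.2.2.2.2, x.1, x.2.2.2.2.1)
            invFun := fun y => (y.2.2.2.2.1, y.2.1, y.2.2.1, y.1, y.2.2.2.2.2, y.2.2.2.1)
            left_inv := fun _ => rfl
            right_inv := fun _ => rfl } _ _ fun x => ?_
        simp only [Equiv.coe_fn_mk]
        ring
    _ ≤ ∑ h, ∑ z, ∑ a', ∑ u', c h * (q a' u' * (γ * K a' u' h z)) := by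
        refine Finset.sum_le_sum fun h _ => Finset.sum_le_sum fun z _ =>
          Finset.sum_le_sum fun a' _ => Finset.sum_le_sum fun u' _ =>
          mul_le_mul_of_nonneg_left ?_ (hc h)
        rw [mul_assoc]
        refine mul_le_mul_of_nonneg_left ?_ (hq a' u')
        split_ifs with h1
        · rw [one_mul]; exact hT _ _ _ _ h1
        · rw [zero_mul]; exact mul_nonneg hγ (hK _ _ _ _)
    _ = γ * ∑ h, ∑ z, ∑ a, ∑ u, c h * (q a u * K a u h z) := by
        simp only [Finset.mul_sum]
        refine Finset.sum_congr rfl fun h _ => Finset.sum_congr rfl fun z _ =>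
          Finset.sum_congr rfl fun a' _ => Finset.sum_congr rfl fun u' _ => by ring

/-- The data of a two-user random-coding argument: codeword laws `q₁`, `q₂`, `q₃` of the two
users and of their joint helper, and the joint weight `K` of messages and observation given
the codewords. -/
structure MacEnsemble (A1 A2 U1 U2 U3 Z : Type*) where
  /-- law of the codeword of user 1 -/
  q₁ : A1 → U1 → ℝ
  /-- law of the codeword of user 2 -/
  q₂ : A2 → U2 → ℝ
  /-- law of the codeword of the helper -/
  q₃ : A1 → A2 → U3 → ℝ
  /-- joint weight of the message pair and the observation -/
  K : A1 → A2 → U1 → U2 → U3 → Z → ℝ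

namespace MacEnsemble

variable {A1 A2 U1 U2 U3 Z : Type*} [Fintype A1] [Fintype A2] [Fintype U1] [Fintype U2]
  [Fintype U3] [Fintype Z] (M : MacEnsemble A1 A2 U1 U2 U3 Z)

/-- Ratio moment for a wrong first message. -/
noncomputable def moment₁ (τ : ℝ) : ℝ :=
  ratioMoment (fun g : A2 × U2 × Z => M.q₂ g.1 g.2.1)
    (fun (v : A1 × U1 × U3) g => M.q₁ v.1 v.2.1 * M.q₃ v.1 g.1 v.2.2)
    (fun v g => M.K v.1 g.1 v.2.1 g.2.1 v.2.2 g.2.2) τ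

/-- Ratio moment for a wrong second message. -/
noncomputable def moment₂ (τ : ℝ) : ℝ :=
  ratioMoment (fun g : A1 × U1 × Z => M.q₁ g.1 g.2.1)
    (fun (v : A2 × U2 × U3) g => M.q₂ v.1 v.2.1 * M.q₃ g.1 v.1 v.2.2)
    (fun v g => M.K g.1 v.1 g.2.1 v.2.1 v.2.2 g.2.2) τ

/-- Ratio moment for a wrong pair of messages. -/
noncomputable def moment₁₂ (τ : ℝ) : ℝ :=
  ratioMoment (fun _ : Z => 1)
    (fun (v : A1 × A2 × U1 × U2 × U3) _ =>
      M.q₁ v.1 v.2.2.1 * M.q₂ v.2.1 v.2.2.2.1 * M.q₃ v.1 v.2.1 v.2.2.2.2)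
    (fun v z => M.K v.1 v.2.1 v.2.2.1 v.2.2.2.1 v.2.2.2.2 z) τ

/-- Likelihood-ratio test against a wrong first message. -/
def Test₁ (γ : ℝ) (a1 : A1) (a2 : A2) (u1 : U1) (u2 : U2) (u3 : U3) (z : Z) : Prop :=
  ∑ v : A1 × U1 × U3, M.q₁ v.1 v.2.1 * M.q₃ v.1 a2 v.2.2 * M.K v.1 a2 v.2.1 u2 v.2.2 z
    ≤ γ * M.K a1 a2 u1 u2 u3 z

/-- Likelihood-ratio test against a wrong second message. -/
def Test₂ (γ : ℝ) (a1 : A1) (a2 : A2) (u1 : U1) (u2 : U2) (u3 : U3) (z : Z) : Prop :=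
  ∑ v : A2 × U2 × U3, M.q₂ v.1 v.2.1 * M.q₃ a1 v.1 v.2.2 * M.K a1 v.1 u1 v.2.1 v.2.2 z
    ≤ γ * M.K a1 a2 u1 u2 u3 z

/-- Likelihood-ratio test against a wrong pair of messages. -/
def Test₁₂ (γ : ℝ) (a1 : A1) (a2 : A2) (u1 : U1) (u2 : U2) (u3 : U3) (z : Z) : Prop :=
  ∑ v : A1 × A2 × U1 × U2 × U3, M.q₁ v.1 v.2.2.1 * M.q₂ v.2.1 v.2.2.2.1 *
      M.q₃ v.1 v.2.1 v.2.2.2.2 * M.K v.1 v.2.1 v.2.2.1 v.2.2.2.1 v.2.2.2.2 z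
    ≤ γ * M.K a1 a2 u1 u2 u3 z

/-- A message pair is accepted if it passes all three tests. -/
def Test (γ : ℝ) (a1 : A1) (a2 : A2) (u1 : U1) (u2 : U2) (u3 : U3) (z : Z) : Prop :=
  M.Test₁ γ a1 a2 u1 u2 u3 z ∧ M.Test₂ γ a1 a2 u1 u2 u3 z ∧ M.Test₁₂ γ a1 a2 u1 u2 u3 z

/-- Total weight of the messages, codewords and observations. -/
noncomputable def mass : ℝ :=
  ∑ a1, ∑ a2, ∑ u1, ∑ u2, ∑ u3, ∑ z,
    M.q₁ a1 u1 * M.q₂ a2 u2 * M.q₃ a1 a2 u3 * M.K a1 a2 u1 u2 u3 z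

open Classical in
/-- The probability that the transmitted pair fails the test. -/
theorem sum_not_test_le (h₁ : ∀ a u, 0 ≤ M.q₁ a u) (h₂ : ∀ a u, 0 ≤ M.q₂ a u)
    (h₃ : ∀ a1 a2 u, 0 ≤ M.q₃ a1 a2 u) (hK : ∀ a1 a2 u1 u2 u3 z, 0 ≤ M.K a1 a2 u1 u2 u3 z)
    {γ τ₁ τ₂ τ₃ : ℝ} (hγ : 0 < γ) (hτ₁ : 0 < τ₁) (hτ₂ : 0 < τ₂) (hτ₃ : 0 < τ₃) :
    ∑ a1, ∑ a2, ∑ u1, ∑ u2, ∑ u3, ∑ z,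
      M.q₁ a1 u1 * M.q₂ a2 u2 * M.q₃ a1 a2 u3 * M.K a1 a2 u1 u2 u3 z *
        (if M.Test γ a1 a2 u1 u2 u3 z then 0 else 1)
      ≤ γ⁻¹ ^ τ₁ * M.moment₁ τ₁ + γ⁻¹ ^ τ₂ * M.moment₂ τ₂ + γ⁻¹ ^ τ₃ * M.moment₁₂ τ₃ := by
  have e₁ := sum_not_le_le_ratioMoment (c := fun g : A2 × U2 × Z => M.q₂ g.1 g.2.1)
    (q := fun (v : A1 × U1 × U3) g => M.q₁ v.1 v.2.1 * M.q₃ v.1 g.1 v.2.2)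
    (K := fun v g => M.K v.1 g.1 v.2.1 g.2.1 v.2.2 g.2.2)
    (fun _ => h₂ _ _) (fun _ _ => mul_nonneg (h₁ _ _) (h₃ _ _ _)) (fun _ _ => hK _ _ _ _ _ _)
    hγ hτ₁
  have e₂ := sum_not_le_le_ratioMoment (c := fun g : A1 × U1 × Z => M.q₁ g.1 g.2.1)
    (q := fun (v : A2 × U2 × U3) g => M.q₂ v.1 v.2.1 * M.q₃ g.1 v.1 v.2.2)
    (K := fun v g => M.K g.1 v.1 g.2.1 v.2.1 v.2.2 g.2.2)
    (fun _ => h₁ _ _) (fun _ _ => mul_nonneg (h₂ _ _) (h₃ _ _ _)) (fun _ _ => hK _ _ _ _ _ _)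
    hγ hτ₂
  have e₃ := sum_not_le_le_ratioMoment (c := fun _ : Z => 1)
    (q := fun (v : A1 × A2 × U1 × U2 × U3) _ =>
      M.q₁ v.1 v.2.2.1 * M.q₂ v.2.1 v.2.2.2.1 * M.q₃ v.1 v.2.1 v.2.2.2.2)
    (K := fun v z => M.K v.1 v.2.1 v.2.2.1 v.2.2.2.1 v.2.2.2.2 z)
    (fun _ => zero_le_one) (fun _ _ => mul_nonneg (mul_nonneg (h₁ _ _) (h₂ _ _)) (h₃ _ _ _))
    (fun _ _ => hK _ _ _ _ _ _) hγ hτ₃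
  refine le_trans ?_ (add_le_add (add_le_add e₁ e₂) e₃)
  have r₁ : ∑ g : A2 × U2 × Z, M.q₂ g.1 g.2.1 * ∑ v : A1 × U1 × U3,
        M.q₁ v.1 v.2.1 * M.q₃ v.1 g.1 v.2.2 * M.K v.1 g.1 v.2.1 g.2.1 v.2.2 g.2.2 *
        (if M.Test₁ γ v.1 g.1 v.2.1 g.2.1 v.2.2 g.2.2 then (0 : ℝ) else 1)
      = ∑ x : A1 × A2 × U1 × U2 × U3 × Z, M.q₁ x.1 x.2.2.1 * M.q₂ x.2.1 x.2.2.2.1 *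
        M.q₃ x.1 x.2.1 x.2.2.2.2.1 * M.K x.1 x.2.1 x.2.2.1 x.2.2.2.1 x.2.2.2.2.1 x.2.2.2.2.2 *
        (if M.Test₁ γ x.1 x.2.1 x.2.2.1 x.2.2.2.1 x.2.2.2.2.1 x.2.2.2.2.2 then 0 else 1) := by
    simp only [Finset.mul_sum, ← Fintype.sum_prod_type']
    refine Fintype.sum_equiv
      { toFun := fun x => (x.2.1, x.1.1, x.2.2.1, x.1.2.1, x.2.2.2, x.1.2.2)
        invFun := fun y => ((y.2.1, y.2.2.2.1, y.2.2.2.2.2), y.1, y.2.2.1, y.2.2.2.2.1)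
        left_inv := fun _ => rfl
        right_inv := fun _ => rfl } _ _ fun x => ?_
    simp only [Equiv.coe_fn_mk]
    ring
  have r₂ : ∑ g : A1 × U1 × Z, M.q₁ g.1 g.2.1 * ∑ v : A2 × U2 × U3,
        M.q₂ v.1 v.2.1 * M.q₃ g.1 v.1 v.2.2 * M.K g.1 v.1 g.2.1 v.2.1 v.2.2 g.2.2 *
        (if M.Test₂ γ g.1 v.1 g.2.1 v.2.1 v.2.2 g.2.2 then (0 : ℝ) else 1)
      = ∑ x : A1 × A2 × U1 × U2 × U3 × Z, M.q₁ x.1 x.2.2.1 * M.q₂ x.2.1 x.2.2.2.1 *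
        M.q₃ x.1 x.2.1 x.2.2.2.2.1 * M.K x.1 x.2.1 x.2.2.1 x.2.2.2.1 x.2.2.2.2.1 x.2.2.2.2.2 *
        (if M.Test₂ γ x.1 x.2.1 x.2.2.1 x.2.2.2.1 x.2.2.2.2.1 x.2.2.2.2.2 then 0 else 1) := by
    simp only [Finset.mul_sum, ← Fintype.sum_prod_type']
    refine Fintype.sum_equiv
      { toFun := fun x => (x.1.1, x.2.1, x.1.2.1, x.2.2.1, x.2.2.2, x.1.2.2)
        invFun := fun y => ((y.1, y.2.2.1, y.2.2.2.2.2), y.2.1, y.2.2.2.1, y.2.2.2.2.1)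
        left_inv := fun _ => rfl
        right_inv := fun _ => rfl } _ _ fun x => ?_
    simp only [Equiv.coe_fn_mk]
    ring
  have r₃ : ∑ z : Z, (1 : ℝ) * ∑ v : A1 × A2 × U1 × U2 × U3,
        M.q₁ v.1 v.2.2.1 * M.q₂ v.2.1 v.2.2.2.1 * M.q₃ v.1 v.2.1 v.2.2.2.2 *
        M.K v.1 v.2.1 v.2.2.1 v.2.2.2.1 v.2.2.2.2 z *
        (if M.Test₁₂ γ v.1 v.2.1 v.2.2.1 v.2.2.2.1 v.2.2.2.2 z then (0 : ℝ) else 1)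
      = ∑ x : A1 × A2 × U1 × U2 × U3 × Z, M.q₁ x.1 x.2.2.1 * M.q₂ x.2.1 x.2.2.2.1 *
        M.q₃ x.1 x.2.1 x.2.2.2.2.1 * M.K x.1 x.2.1 x.2.2.1 x.2.2.2.1 x.2.2.2.2.1 x.2.2.2.2.2 *
        (if M.Test₁₂ γ x.1 x.2.1 x.2.2.1 x.2.2.2.1 x.2.2.2.2.1 x.2.2.2.2.2 then 0 else 1) := by
    simp only [Finset.mul_sum, ← Fintype.sum_prod_type']
    refine Fintype.sum_equiv
      { toFun := fun x => (x.2.1, x.2.2.1, x.2.2.2.1, x.2.2.2.2.1, x.2.2.2.2.2, x.1)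
        invFun := fun y => (y.2.2.2.2.2, y.1, y.2.1, y.2.2.1, y.2.2.2.1, y.2.2.2.2.1)
        left_inv := fun _ => rfl
        right_inv := fun _ => rfl } _ _ fun x => ?_
    simp only [Equiv.coe_fn_mk]
    ring
  refine le_of_le_of_eq ?_ (congrArg₂ (· + ·) (congrArg₂ (· + ·) r₁ r₂) r₃).symm
  simp only [← Fintype.sum_prod_type']
  rw [← Finset.sum_add_distrib, ← Finset.sum_add_distrib]
  refine Finset.sum_le_sum fun x _ => ?_
  rw [← mul_add, ← mul_add]
  refine mul_le_mul_of_nonneg_left ?_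
    (mul_nonneg (mul_nonneg (mul_nonneg (h₁ _ _) (h₂ _ _)) (h₃ _ _ _)) (hK _ _ _ _ _ _))
  unfold Test
  split_ifs <;> first | tauto | norm_num

end MacEnsemble

section Codebook

variable {κ1 κ2 κ3 U1 U2 U3 : Type*} [Fintype κ1] [Fintype κ2] [Fintype κ3] [Fintype U1]
  [Fintype U2] [Fintype U3]

/-- Weight of a triple of codebooks with independent codewords. -/
noncomputable def codebookWeight (p₁ : κ1 → U1 → ℝ) (p₂ : κ2 → U2 → ℝ) (p₃ : κ3 → U3 → ℝ)
    (θ : (κ1 → U1) × (κ2 → U2) × (κ3 → U3)) : ℝ :=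
  (∏ k, p₁ k (θ.1 k)) * (∏ k, p₂ k (θ.2.1 k)) * ∏ k, p₃ k (θ.2.2 k)

variable [DecidableEq κ1] [DecidableEq κ2] [DecidableEq κ3]
  {p₁ : κ1 → U1 → ℝ} {p₂ : κ2 → U2 → ℝ} {p₃ : κ3 → U3 → ℝ}

theorem sum_codebookWeight_mul (F : (κ1 → U1) → (κ2 → U2) → (κ3 → U3) → ℝ) :
    ∑ θ, codebookWeight p₁ p₂ p₃ θ * F θ.1 θ.2.1 θ.2.2
      = ∑ c1 : κ1 → U1, (∏ k, p₁ k (c1 k)) * ∑ c2 : κ2 → U2, (∏ k, p₂ k (c2 k)) *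
          ∑ c3 : κ3 → U3, (∏ k, p₃ k (c3 k)) * F c1 c2 c3 := by
  simp only [Fintype.sum_prod_type, codebookWeight, Finset.mul_sum, mul_assoc]

theorem isPmf_codebookWeight (h₁ : ∀ k, IsPmf (p₁ k)) (h₂ : ∀ k, IsPmf (p₂ k))
    (h₃ : ∀ k, IsPmf (p₃ k)) : IsPmf (codebookWeight p₁ p₂ p₃) := by
  refine ⟨fun θ => mul_nonneg (mul_nonneg ((isPmf_pi h₁).1 _) ((isPmf_pi h₂).1 _))
    ((isPmf_pi h₃).1 _), ?_⟩
  simpa [sum_pi_prod_eq_one h₁, sum_pi_prod_eq_one h₂, sum_pi_prod_eq_one h₃] using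
    sum_codebookWeight_mul (p₁ := p₁) (p₂ := p₂) (p₃ := p₃) fun _ _ _ => 1

theorem sum_codebookWeight_marginal (h₁ : ∀ k, IsPmf (p₁ k)) (h₂ : ∀ k, IsPmf (p₂ k))
    (h₃ : ∀ k, IsPmf (p₃ k)) (k1 : κ1) (k2 : κ2) (k3 : κ3) (F : U1 → U2 → U3 → ℝ) :
    ∑ θ, codebookWeight p₁ p₂ p₃ θ * F (θ.1 k1) (θ.2.1 k2) (θ.2.2 k3)
      = ∑ u1, ∑ u2, ∑ u3, p₁ k1 u1 * p₂ k2 u2 * p₃ k3 u3 * F u1 u2 u3 := by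
  rw [sum_codebookWeight_mul fun c1 c2 c3 => F (c1 k1) (c2 k2) (c3 k3)]
  have e3 : ∀ u1 u2, ∑ c3 : κ3 → U3, (∏ k, p₃ k (c3 k)) * F u1 u2 (c3 k3)
      = ∑ u3, p₃ k3 u3 * F u1 u2 u3 := fun u1 u2 => sum_pi_marginal h₃ k3 (F u1 u2)
  simp only [e3]
  have e2 : ∀ u1, ∑ c2 : κ2 → U2, (∏ k, p₂ k (c2 k)) * ∑ u3, p₃ k3 u3 * F u1 (c2 k2) u3
      = ∑ u2, p₂ k2 u2 * ∑ u3, p₃ k3 u3 * F u1 u2 u3 := fun u1 =>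
    sum_pi_marginal h₂ k2 fun u2 => ∑ u3, p₃ k3 u3 * F u1 u2 u3
  simp only [e2]
  rw [sum_pi_marginal h₁ k1 fun u1 => ∑ u2, p₂ k2 u2 * ∑ u3, p₃ k3 u3 * F u1 u2 u3]
  simp only [Finset.mul_sum, mul_assoc]

theorem sum_codebookWeight_marginal₁ (h₁ : ∀ k, IsPmf (p₁ k)) (h₂ : ∀ k, IsPmf (p₂ k))
    (h₃ : ∀ k, IsPmf (p₃ k)) {k1 k1' : κ1} (hk1 : k1 ≠ k1') (k2 : κ2) {k3 k3' : κ3}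
    (hk3 : k3 ≠ k3') (F : U2 → U1 × U3 → U1 × U3 → ℝ) :
    ∑ θ, codebookWeight p₁ p₂ p₃ θ *
        F (θ.2.1 k2) (θ.1 k1, θ.2.2 k3) (θ.1 k1', θ.2.2 k3')
      = ∑ h, ∑ u : U1 × U3, ∑ u' : U1 × U3,
          p₂ k2 h * (p₁ k1 u.1 * p₃ k3 u.2 * (p₁ k1' u'.1 * p₃ k3' u'.2)) * F h u u' := by
  rw [sum_codebookWeight_mul fun c1 c2 c3 => F (c2 k2) (c1 k1, c3 k3) (c1 k1', c3 k3')]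
  have e3 : ∀ h u1 v1, ∑ c3 : κ3 → U3, (∏ k, p₃ k (c3 k)) * F h (u1, c3 k3) (v1, c3 k3')
      = ∑ u3, ∑ v3, p₃ k3 u3 * p₃ k3' v3 * F h (u1, u3) (v1, v3) := fun h u1 v1 =>
    sum_pi_marginal₂ h₃ hk3 fun u3 v3 => F h (u1, u3) (v1, v3)
  simp only [e3]
  have e2 : ∀ u1 v1, ∑ c2 : κ2 → U2, (∏ k, p₂ k (c2 k)) *
        ∑ u3, ∑ v3, p₃ k3 u3 * p₃ k3' v3 * F (c2 k2) (u1, u3) (v1, v3)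
      = ∑ h, p₂ k2 h * ∑ u3, ∑ v3, p₃ k3 u3 * p₃ k3' v3 * F h (u1, u3) (v1, v3) :=
    fun u1 v1 => sum_pi_marginal h₂ k2
      fun h => ∑ u3, ∑ v3, p₃ k3 u3 * p₃ k3' v3 * F h (u1, u3) (v1, v3)
  simp only [e2]
  rw [sum_pi_marginal₂ h₁ hk1 fun u1 v1 => ∑ h, p₂ k2 h *
    ∑ u3, ∑ v3, p₃ k3 u3 * p₃ k3' v3 * F h (u1, u3) (v1, v3)]
  simp only [Finset.mul_sum, ← Fintype.sum_prod_type']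
  refine Fintype.sum_equiv
    { toFun := fun x => (x.2.2.1, (x.1, x.2.2.2.1), (x.2.1, x.2.2.2.2))
      invFun := fun y => (y.2.1.1, y.2.2.1, y.1, y.2.1.2, y.2.2.2)
      left_inv := fun _ => rfl
      right_inv := fun _ => rfl } _ _ fun x => ?_
  simp only [Equiv.coe_fn_mk]
  ring

theorem sum_codebookWeight_marginal₂ (h₁ : ∀ k, IsPmf (p₁ k)) (h₂ : ∀ k, IsPmf (p₂ k))
    (h₃ : ∀ k, IsPmf (p₃ k)) (k1 : κ1) {k2 k2' : κ2} (hk2 : k2 ≠ k2') {k3 k3' : κ3}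
    (hk3 : k3 ≠ k3') (F : U1 → U2 × U3 → U2 × U3 → ℝ) :
    ∑ θ, codebookWeight p₁ p₂ p₃ θ *
        F (θ.1 k1) (θ.2.1 k2, θ.2.2 k3) (θ.2.1 k2', θ.2.2 k3')
      = ∑ h, ∑ u : U2 × U3, ∑ u' : U2 × U3,
          p₁ k1 h * (p₂ k2 u.1 * p₃ k3 u.2 * (p₂ k2' u'.1 * p₃ k3' u'.2)) * F h u u' := by
  refine Eq.trans ?_ (sum_codebookWeight_marginal₁ h₂ h₁ h₃ hk2 k1 hk3 F)
  refine Fintype.sum_equiv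
    { toFun := fun x => (x.2.1, x.1, x.2.2)
      invFun := fun y => (y.2.1, y.1, y.2.2)
      left_inv := fun _ => rfl
      right_inv := fun _ => rfl } _ _ fun x => ?_
  simp only [Equiv.coe_fn_mk, codebookWeight]
  ring

theorem sum_codebookWeight_marginal₁₂ (h₁ : ∀ k, IsPmf (p₁ k)) (h₂ : ∀ k, IsPmf (p₂ k))
    (h₃ : ∀ k, IsPmf (p₃ k)) {k1 k1' : κ1} (hk1 : k1 ≠ k1') {k2 k2' : κ2} (hk2 : k2 ≠ k2')
    {k3 k3' : κ3} (hk3 : k3 ≠ k3') (F : U1 × U2 × U3 → U1 × U2 × U3 → ℝ) :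
    ∑ θ, codebookWeight p₁ p₂ p₃ θ *
        F (θ.1 k1, θ.2.1 k2, θ.2.2 k3) (θ.1 k1', θ.2.1 k2', θ.2.2 k3')
      = ∑ u : U1 × U2 × U3, ∑ u' : U1 × U2 × U3,
          p₁ k1 u.1 * p₂ k2 u.2.1 * p₃ k3 u.2.2 *
            (p₁ k1' u'.1 * p₂ k2' u'.2.1 * p₃ k3' u'.2.2) * F u u' := by
  rw [sum_codebookWeight_mul fun c1 c2 c3 => F (c1 k1, c2 k2, c3 k3) (c1 k1', c2 k2', c3 k3')]
  have e3 : ∀ u1 v1 u2 v2, ∑ c3 : κ3 → U3, (∏ k, p₃ k (c3 k)) *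
        F (u1, u2, c3 k3) (v1, v2, c3 k3')
      = ∑ u3, ∑ v3, p₃ k3 u3 * p₃ k3' v3 * F (u1, u2, u3) (v1, v2, v3) := fun u1 v1 u2 v2 =>
    sum_pi_marginal₂ h₃ hk3 fun u3 v3 => F (u1, u2, u3) (v1, v2, v3)
  simp only [e3]
  have e2 : ∀ u1 v1, ∑ c2 : κ2 → U2, (∏ k, p₂ k (c2 k)) *
        ∑ u3, ∑ v3, p₃ k3 u3 * p₃ k3' v3 * F (u1, c2 k2, u3) (v1, c2 k2', v3)
      = ∑ u2, ∑ v2, p₂ k2 u2 * p₂ k2' v2 *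
        ∑ u3, ∑ v3, p₃ k3 u3 * p₃ k3' v3 * F (u1, u2, u3) (v1, v2, v3) :=
    fun u1 v1 => sum_pi_marginal₂ h₂ hk2
      fun u2 v2 => ∑ u3, ∑ v3, p₃ k3 u3 * p₃ k3' v3 * F (u1, u2, u3) (v1, v2, v3)
  simp only [e2]
  rw [sum_pi_marginal₂ h₁ hk1 fun u1 v1 => ∑ u2, ∑ v2, p₂ k2 u2 * p₂ k2' v2 *
        ∑ u3, ∑ v3, p₃ k3 u3 * p₃ k3' v3 * F (u1, u2, u3) (v1, v2, v3)]
  simp only [Finset.mul_sum, ← Fintype.sum_prod_type']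
  refine Fintype.sum_equiv
    { toFun := fun x => ((x.1, x.2.2.1, x.2.2.2.2.1), (x.2.1, x.2.2.2.1, x.2.2.2.2.2))
      invFun := fun y => (y.1.1, y.2.1, y.1.2.1, y.2.2.1, y.1.2.2, y.2.2.2)
      left_inv := fun _ => rfl
      right_inv := fun _ => rfl } _ _ fun x => ?_
  simp only [Equiv.coe_fn_mk]
  ring

end Codebook

namespace MacEnsemble

variable {A1 A2 U1 U2 U3 Z κ1 κ2 κ3 : Type*} [Fintype A1] [Fintype A2] [Fintype U1] [Fintype U2]
  [Fintype U3] [Fintype κ1] [Fintype κ2] [Fintype κ3]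
  (M : MacEnsemble A1 A2 U1 U2 U3 Z)

/-- The threshold decoder: some message pair accepted by the test. -/
noncomputable def decode [Nonempty (A1 × A2)] (γ : ℝ) (v1 : A1 → U1) (v2 : A2 → U2)
    (v3 : A1 → A2 → U3) (z : Z) : A1 × A2 :=
  Classical.epsilon fun a => M.Test γ a.1 a.2 (v1 a.1) (v2 a.2) (v3 a.1 a.2) z

open Classical in
/-- A decoding error requires that the true pair fails the test or that some wrong pair
passes it. -/
theorem decode_ne_le [Nonempty (A1 × A2)] (γ : ℝ) (v1 : A1 → U1) (v2 : A2 → U2)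
    (v3 : A1 → A2 → U3) (z : Z) (a1 : A1) (a2 : A2) :
    (if M.decode γ v1 v2 v3 z = (a1, a2) then (0 : ℝ) else 1)
      ≤ (if M.Test γ a1 a2 (v1 a1) (v2 a2) (v3 a1 a2) z then 0 else 1)
        + ∑ b1, (if a1 ≠ b1 ∧ M.Test₁ γ b1 a2 (v1 b1) (v2 a2) (v3 b1 a2) z then 1 else 0)
        + ∑ b2, (if a2 ≠ b2 ∧ M.Test₂ γ a1 b2 (v1 a1) (v2 b2) (v3 a1 b2) z then 1 else 0)
        + ∑ b : A1 × A2, (if (a1 ≠ b.1 ∧ a2 ≠ b.2) ∧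
            M.Test₁₂ γ b.1 b.2 (v1 b.1) (v2 b.2) (v3 b.1 b.2) z then 1 else 0) := by
  have n0 : ∀ (p : Prop) [Decidable p], (0 : ℝ) ≤ if p then 1 else 0 :=
    fun p _ => by split_ifs <;> norm_num
  have n1 := Finset.sum_nonneg fun b1 (_ : b1 ∈ Finset.univ) =>
    n0 (a1 ≠ b1 ∧ M.Test₁ γ b1 a2 (v1 b1) (v2 a2) (v3 b1 a2) z)
  have n2 := Finset.sum_nonneg fun b2 (_ : b2 ∈ Finset.univ) =>
    n0 (a2 ≠ b2 ∧ M.Test₂ γ a1 b2 (v1 a1) (v2 b2) (v3 a1 b2) z)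
  have n3 := Finset.sum_nonneg fun (b : A1 × A2) (_ : b ∈ Finset.univ) =>
    n0 ((a1 ≠ b.1 ∧ a2 ≠ b.2) ∧ M.Test₁₂ γ b.1 b.2 (v1 b.1) (v2 b.2) (v3 b.1 b.2) z)
  by_cases ht : M.Test γ a1 a2 (v1 a1) (v2 a2) (v3 a1 a2) z
  swap
  · rw [if_neg ht]
    have : (if M.decode γ v1 v2 v3 z = (a1, a2) then (0 : ℝ) else 1) ≤ 1 := by
      split_ifs <;> norm_num
    linarith
  by_cases hd : M.decode γ v1 v2 v3 z = (a1, a2)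
  · rw [if_pos hd, if_pos ht]; linarith
  rw [if_neg hd, if_pos ht]
  have hs : M.Test γ (M.decode γ v1 v2 v3 z).1 (M.decode γ v1 v2 v3 z).2
      (v1 (M.decode γ v1 v2 v3 z).1) (v2 (M.decode γ v1 v2 v3 z).2)
      (v3 (M.decode γ v1 v2 v3 z).1 (M.decode γ v1 v2 v3 z).2) z :=
    Classical.epsilon_spec (p := fun a : A1 × A2 =>
      M.Test γ a.1 a.2 (v1 a.1) (v2 a.2) (v3 a.1 a.2) z) ⟨(a1, a2), ht⟩
  generalize M.decode γ v1 v2 v3 z = b at hd hs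
  obtain ⟨b1, b2⟩ := b
  obtain ⟨s1, s2, s3⟩ := hs
  by_cases h1 : a1 = b1
  · subst h1
    have h2 : a2 ≠ b2 := fun h2 => hd (by rw [h2])
    have := Finset.single_le_sum (f := fun b2 => if a2 ≠ b2 ∧
      M.Test₂ γ a1 b2 (v1 a1) (v2 b2) (v3 a1 b2) z then (1 : ℝ) else 0)
      (fun _ _ => n0 _) (Finset.mem_univ b2)
    simp only [if_pos (And.intro h2 s2)] at this
    linarith
  by_cases h2 : a2 = b2
  · subst h2
    have := Finset.single_le_sum (f := fun b1 => if a1 ≠ b1 ∧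
      M.Test₁ γ b1 a2 (v1 b1) (v2 a2) (v3 b1 a2) z then (1 : ℝ) else 0)
      (fun _ _ => n0 _) (Finset.mem_univ b1)
    simp only [if_pos (And.intro h1 s1)] at this
    linarith
  · have := Finset.single_le_sum (f := fun b : A1 × A2 => if (a1 ≠ b.1 ∧ a2 ≠ b.2) ∧
      M.Test₁₂ γ b.1 b.2 (v1 b.1) (v2 b.2) (v3 b.1 b.2) z then (1 : ℝ) else 0)
      (fun _ _ => n0 _) (Finset.mem_univ (b1, b2))
    simp only [if_pos (And.intro (And.intro h1 h2) s3)] at this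
    linarith

variable [Fintype Z] [DecidableEq κ1] [DecidableEq κ2] [DecidableEq κ3]
  {p₁ : κ1 → U1 → ℝ} {p₂ : κ2 → U2 → ℝ} {p₃ : κ3 → U3 → ℝ}
  {e1 : A1 → κ1} {e2 : A2 → κ2} {e3 : A1 × A2 → κ3}

open Classical in
/-- Random coding bound: the codebook-averaged error weight of the threshold decoder. -/
theorem sum_codebookWeight_decode_le [Nonempty (A1 × A2)] (h₁ : ∀ k, IsPmf (p₁ k))
    (h₂ : ∀ k, IsPmf (p₂ k)) (h₃ : ∀ k, IsPmf (p₃ k))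
    (he1 : e1.Injective) (he2 : e2.Injective) (he3 : e3.Injective)
    (hM₁ : ∀ a, M.q₁ a = p₁ (e1 a)) (hM₂ : ∀ a, M.q₂ a = p₂ (e2 a))
    (hM₃ : ∀ a b, M.q₃ a b = p₃ (e3 (a, b)))
    (hK : ∀ a1 a2 u1 u2 u3 z, 0 ≤ M.K a1 a2 u1 u2 u3 z)
    {γ τ₁ τ₂ τ₃ : ℝ} (hγ : 0 < γ) (hτ₁ : 0 < τ₁) (hτ₂ : 0 < τ₂) (hτ₃ : 0 < τ₃) :
    ∑ θ, codebookWeight p₁ p₂ p₃ θ * ∑ a1, ∑ a2, ∑ z,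
        M.K a1 a2 (θ.1 (e1 a1)) (θ.2.1 (e2 a2)) (θ.2.2 (e3 (a1, a2))) z *
          (if M.decode γ (fun a => θ.1 (e1 a)) (fun a => θ.2.1 (e2 a))
            (fun a b => θ.2.2 (e3 (a, b))) z = (a1, a2) then (0 : ℝ) else 1)
      ≤ γ⁻¹ ^ τ₁ * M.moment₁ τ₁ + γ⁻¹ ^ τ₂ * M.moment₂ τ₂ + γ⁻¹ ^ τ₃ * M.moment₁₂ τ₃
        + γ * M.mass + γ * M.mass + γ * M.mass := by
  have hw := (isPmf_codebookWeight h₁ h₂ h₃).1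
  have q₁0 : ∀ a u, 0 ≤ M.q₁ a u := fun a u => by rw [hM₁]; exact (h₁ _).1 _
  have q₂0 : ∀ a u, 0 ≤ M.q₂ a u := fun a u => by rw [hM₂]; exact (h₂ _).1 _
  have q₃0 : ∀ a b u, 0 ≤ M.q₃ a b u := fun a b u => by rw [hM₃]; exact (h₃ _).1 _
  have e₀ : ∑ θ, codebookWeight p₁ p₂ p₃ θ * ∑ a1, ∑ a2, ∑ z,
        M.K a1 a2 (θ.1 (e1 a1)) (θ.2.1 (e2 a2)) (θ.2.2 (e3 (a1, a2))) z *
          (if M.Test γ a1 a2 (θ.1 (e1 a1)) (θ.2.1 (e2 a2)) (θ.2.2 (e3 (a1, a2))) z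
            then (0 : ℝ) else 1)
      ≤ γ⁻¹ ^ τ₁ * M.moment₁ τ₁ + γ⁻¹ ^ τ₂ * M.moment₂ τ₂ + γ⁻¹ ^ τ₃ * M.moment₁₂ τ₃ := by
    refine le_of_eq_of_le ?_ (M.sum_not_test_le q₁0 q₂0 q₃0 hK hγ hτ₁ hτ₂ hτ₃)
    simp only [Finset.mul_sum]
    rw [Finset.sum_comm]
    refine Finset.sum_congr rfl fun a1 _ => ?_
    rw [Finset.sum_comm]
    refine Finset.sum_congr rfl fun a2 _ => ?_
    simp only [← Finset.mul_sum]
    rw [sum_codebookWeight_marginal h₁ h₂ h₃ (e1 a1) (e2 a2) (e3 (a1, a2))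
      fun u1 u2 u3 => ∑ z, M.K a1 a2 u1 u2 u3 z *
        (if M.Test γ a1 a2 u1 u2 u3 z then (0 : ℝ) else 1)]
    simp only [hM₁, hM₂, hM₃, Finset.mul_sum, mul_assoc]
  have e₁ : ∑ θ, codebookWeight p₁ p₂ p₃ θ * ∑ a1, ∑ a2, ∑ z,
        M.K a1 a2 (θ.1 (e1 a1)) (θ.2.1 (e2 a2)) (θ.2.2 (e3 (a1, a2))) z *
          ∑ b1, (if a1 ≠ b1 ∧ M.Test₁ γ b1 a2 (θ.1 (e1 b1)) (θ.2.1 (e2 a2))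
            (θ.2.2 (e3 (b1, a2))) z then (1 : ℝ) else 0) ≤ γ * M.mass := by
    have key := fun a2 : A2 => sum_confusion_le (w := codebookWeight p₁ p₂ p₃)
      (C := fun θ a => (θ.1 (e1 a), θ.2.2 (e3 (a, a2)))) (X := fun θ => θ.2.1 (e2 a2))
      (c := M.q₂ a2) (q := fun a (u : U1 × U3) => M.q₁ a u.1 * M.q₃ a a2 u.2)
      (r := fun a b => a ≠ b) (q₂0 a2) (fun _ _ => mul_nonneg (q₁0 _ _) (q₃0 _ _ _))
      (fun a b hab F => by
        simp only [hM₁, hM₂, hM₃]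
        exact sum_codebookWeight_marginal₁ h₁ h₂ h₃ (fun h => hab (he1 h)) (e2 a2)
          (fun h => hab (congrArg Prod.fst (he3 h))) F)
      (K := fun a u h (z : Z) => M.K a a2 u.1 h u.2 z) (fun _ _ _ _ => hK _ _ _ _ _ _)
      (γ := γ) (T := fun a u h z => M.Test₁ γ a a2 u.1 h u.2 z)
      (fun a u h z hT => by
        simp only [Test₁, Fintype.sum_prod_type] at hT
        simpa only [Fintype.sum_prod_type] using hT) hγ.le
    refine le_trans (le_of_eq ?_) ((Finset.sum_le_sum (s := Finset.univ) fun a2 _ => key a2).trans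
      (le_of_eq ?_))
    · rw [Finset.sum_comm]
      refine Finset.sum_congr rfl fun θ _ => ?_
      rw [← Finset.mul_sum, Finset.sum_comm]
      congr!
    · rw [← Finset.mul_sum, mass]
      congr 1
      simp only [← Fintype.sum_prod_type']
      refine Fintype.sum_equiv
        { toFun := fun x => (x.2.2.2.1, x.1, x.2.2.2.2.1, x.2.1, x.2.2.2.2.2, x.2.2.1)
          invFun := fun y => (y.2.1, y.2.2.2.1, y.2.2.2.2.2, y.1, y.2.2.1, y.2.2.2.2.1)
          left_inv := fun _ => rfl
          right_inv := fun _ => rfl } _ _ fun x => ?_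
      simp only [Equiv.coe_fn_mk]
      ring
  have e₂ : ∑ θ, codebookWeight p₁ p₂ p₃ θ * ∑ a1, ∑ a2, ∑ z,
        M.K a1 a2 (θ.1 (e1 a1)) (θ.2.1 (e2 a2)) (θ.2.2 (e3 (a1, a2))) z *
          ∑ b2, (if a2 ≠ b2 ∧ M.Test₂ γ a1 b2 (θ.1 (e1 a1)) (θ.2.1 (e2 b2))
            (θ.2.2 (e3 (a1, b2))) z then (1 : ℝ) else 0) ≤ γ * M.mass := by
    have key := fun a1 : A1 => sum_confusion_le (w := codebookWeight p₁ p₂ p₃)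
      (C := fun θ a => (θ.2.1 (e2 a), θ.2.2 (e3 (a1, a)))) (X := fun θ => θ.1 (e1 a1))
      (c := M.q₁ a1) (q := fun a (u : U2 × U3) => M.q₂ a u.1 * M.q₃ a1 a u.2)
      (r := fun a b => a ≠ b) (q₁0 a1) (fun _ _ => mul_nonneg (q₂0 _ _) (q₃0 _ _ _))
      (fun a b hab F => by
        simp only [hM₁, hM₂, hM₃]
        exact sum_codebookWeight_marginal₂ h₁ h₂ h₃ (e1 a1) (fun h => hab (he2 h))
          (fun h => hab (congrArg Prod.snd (he3 h))) F)
      (K := fun a u h (z : Z) => M.K a1 a h u.1 u.2 z) (fun _ _ _ _ => hK _ _ _ _ _ _)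
      (γ := γ) (T := fun a u h z => M.Test₂ γ a1 a h u.1 u.2 z)
      (fun a u h z hT => by
        simp only [Test₂, Fintype.sum_prod_type] at hT
        simpa only [Fintype.sum_prod_type] using hT) hγ.le
    refine le_trans (le_of_eq ?_) ((Finset.sum_le_sum (s := Finset.univ) fun a1 _ => key a1).trans
      (le_of_eq ?_))
    · rw [Finset.sum_comm]
      refine Finset.sum_congr rfl fun θ _ => ?_
      rw [← Finset.mul_sum]
      congr!
    · rw [← Finset.mul_sum, mass]
      congr 1
      simp only [← Fintype.sum_prod_type']
      refine Fintype.sum_equiv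
        { toFun := fun x => (x.1, x.2.2.2.1, x.2.1, x.2.2.2.2.1, x.2.2.2.2.2, x.2.2.1)
          invFun := fun y => (y.1, y.2.2.1, y.2.2.2.2.2, y.2.1, y.2.2.2.1, y.2.2.2.2.1)
          left_inv := fun _ => rfl
          right_inv := fun _ => rfl } _ _ fun x => ?_
      simp only [Equiv.coe_fn_mk]
      ring
  have e₃ : ∑ θ, codebookWeight p₁ p₂ p₃ θ * ∑ a1, ∑ a2, ∑ z,
        M.K a1 a2 (θ.1 (e1 a1)) (θ.2.1 (e2 a2)) (θ.2.2 (e3 (a1, a2))) z *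
          ∑ b : A1 × A2, (if (a1 ≠ b.1 ∧ a2 ≠ b.2) ∧ M.Test₁₂ γ b.1 b.2 (θ.1 (e1 b.1))
            (θ.2.1 (e2 b.2)) (θ.2.2 (e3 (b.1, b.2))) z then (1 : ℝ) else 0) ≤ γ * M.mass := by
    have key := sum_confusion_le (w := codebookWeight p₁ p₂ p₃) (A := A1 × A2)
      (C := fun θ a => (θ.1 (e1 a.1), θ.2.1 (e2 a.2), θ.2.2 (e3 (a.1, a.2))))
      (X := fun _ => ()) (c := fun _ => 1)
      (q := fun a (u : U1 × U2 × U3) => M.q₁ a.1 u.1 * M.q₂ a.2 u.2.1 * M.q₃ a.1 a.2 u.2.2)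
      (r := fun a b => a.1 ≠ b.1 ∧ a.2 ≠ b.2) (fun _ => zero_le_one)
      (fun _ _ => mul_nonneg (mul_nonneg (q₁0 _ _) (q₂0 _ _)) (q₃0 _ _ _))
      (fun a b hab F => by
        simp only [hM₁, hM₂, hM₃, Finset.univ_unique, Finset.sum_singleton, one_mul]
        exact sum_codebookWeight_marginal₁₂ h₁ h₂ h₃ (fun h => hab.1 (he1 h))
          (fun h => hab.2 (he2 h)) (fun h => hab.1 (congrArg Prod.fst (he3 h))) (F ()))
      (K := fun a u _ (z : Z) => M.K a.1 a.2 u.1 u.2.1 u.2.2 z) (fun _ _ _ _ => hK _ _ _ _ _ _)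
      (γ := γ) (T := fun a u _ z => M.Test₁₂ γ a.1 a.2 u.1 u.2.1 u.2.2 z)
      (fun a u h z hT => by
        simp only [Test₁₂, Fintype.sum_prod_type] at hT
        simpa only [Fintype.sum_prod_type] using hT) hγ.le
    refine le_trans (le_of_eq ?_) (key.trans (le_of_eq ?_))
    · refine Finset.sum_congr rfl fun θ _ => ?_
      rw [Fintype.sum_prod_type]
      congr!
    · rw [mass]
      congr 1
      simp only [Finset.univ_unique, Finset.sum_singleton, one_mul, ← Fintype.sum_prod_type']
      refine Fintype.sum_equiv
        { toFun := fun x => (x.2.1.1, x.2.1.2, x.2.2.1, x.2.2.2.1, x.2.2.2.2, x.1)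
          invFun := fun y => (y.2.2.2.2.2, (y.1, y.2.1), (y.2.2.1, y.2.2.2.1, y.2.2.2.2.1))
          left_inv := fun _ => rfl
          right_inv := fun _ => rfl } _ _ fun x => ?_
      simp only [Equiv.coe_fn_mk]
  refine le_trans ?_ (add_le_add (add_le_add (add_le_add e₀ e₁) e₂) e₃)
  rw [← Finset.sum_add_distrib, ← Finset.sum_add_distrib, ← Finset.sum_add_distrib]
  refine Finset.sum_le_sum fun θ _ => ?_
  rw [← mul_add, ← mul_add, ← mul_add]
  refine mul_le_mul_of_nonneg_left ?_ (hw θ)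
  simp only [← Finset.sum_add_distrib, ← mul_add]
  refine Finset.sum_le_sum fun a1 _ => Finset.sum_le_sum fun a2 _ =>
    Finset.sum_le_sum fun z _ => mul_le_mul_of_nonneg_left ?_ (hK _ _ _ _ _ _)
  exact M.decode_ne_le γ (fun a => θ.1 (e1 a)) (fun a => θ.2.1 (e2 a))
    (fun a b => θ.2.2 (e3 (a, b))) z a1 a2

end MacEnsemble

/-- A memoryless channel with causal feedback-dependent inputs has total output mass one. -/
theorem sum_prod_causal_eq_one {X O : Type*} [Fintype O] [Nonempty O] {V : X → O → ℝ}
    (hV : ∀ x, ∑ o, V x o = 1) : ∀ {n : ℕ} (x : Fin n → (Fin n → O) → X),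
    (∀ b o o', (∀ j, j < b → o j = o' j) → x b o = x b o') →
    ∑ o : Fin n → O, ∏ b, V (x b o) (o b) = 1
  | 0, _, _ => by simp
  | n + 1, x, hx => by
    obtain ⟨o₀⟩ := ‹Nonempty O›
    rw [← (Fin.snocEquiv fun _ => O).sum_comp, Fintype.sum_prod_type, Finset.sum_comm]
    have key : ∀ (os : Fin n → O) (o : O) (b : Fin (n + 1)),
        x b (Fin.snoc os o : Fin (n + 1) → O) = x b (Fin.snoc os o₀ : Fin (n + 1) → O) := by
      refine fun os o b => hx b _ _ fun j hj => ?_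
      obtain ⟨i, rfl⟩ : ∃ i : Fin n, i.castSucc = j :=
        Fin.exists_castSucc_eq.2 (ne_of_lt (hj.trans_le (Fin.le_last b)))
      simp only [Fin.snoc_castSucc]
    simp only [Fin.snocEquiv, Equiv.coe_fn_mk, Fin.prod_univ_castSucc, Fin.snoc_castSucc,
      Fin.snoc_last, key]
    simp only [← Finset.mul_sum, hV, mul_one]
    refine sum_prod_causal_eq_one hV
      (fun b os => x b.castSucc (Fin.snoc os o₀ : Fin (n + 1) → O)) fun b o o' h => ?_
    refine hx _ _ _ fun j hj => ?_
    obtain ⟨i, rfl⟩ : ∃ i : Fin n, i.castSucc = j :=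
      Fin.exists_castSucc_eq.2 (ne_of_lt (hj.trans_le (Fin.le_last _)))
    simpa only [Fin.snoc_castSucc] using h i (by simpa using hj)

section BlockMarkov

variable {A1 A2 W W3 U1 U2 U3 Y Y3 : Type*}

/-- The codeword triple of a block with fresh pair `s` and previous pair `r`. -/
def blockInput (c1 : A1 × A1 → U1) (c2 : A2 × A2 → U2) (c3 : A1 × A2 → U3) (s r : A1 × A2) :
    U1 × U2 × U3 :=
  (c1 (s.1, r.1), c2 (s.2, r.2), c3 r)

/-- The forward estimates of the relay. -/
def relayEstimate (dr : A1 × A2 → Y3 → W3 → A1 × A2) (a : A1 × A2) {B : ℕ}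
    (y3 : Fin (B + 1) → Y3) (w3 : Fin B → W3) : Fin (B + 1) → A1 × A2 :=
  fun b => Fin.induction a (fun i e => dr e (y3 i.castSucc) (w3 i)) b

/-- The backward estimates of the destination. -/
def destEstimate (dd : A1 × A2 → Y → W → A1 × A2) (a : A1 × A2) {B : ℕ}
    (y : Fin (B + 1) → Y) (w : Fin B → W) : Fin (B + 1) → A1 × A2 :=
  fun b => Fin.reverseInduction a (fun i e => dd e (y i.succ) (w i)) b

theorem relayEstimate_congr (dr : A1 × A2 → Y3 → W3 → A1 × A2) (a : A1 × A2) {B : ℕ}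
    {y3 y3' : Fin (B + 1) → Y3} (w3 : Fin B → W3) (b : Fin (B + 1))
    (h : ∀ j, j < b → y3 j = y3' j) :
    relayEstimate dr a y3 w3 b = relayEstimate dr a y3' w3 b := by
  induction b using Fin.induction with
  | zero => rfl
  | succ i ih =>
    have h1 := ih fun j hj => h j (hj.trans Fin.castSucc_lt_succ)
    have h2 := h i.castSucc Fin.castSucc_lt_succ
    simp only [relayEstimate, Fin.induction_succ] at h1 ⊢
    rw [h1, h2]

theorem relayEstimate_eq (dr : A1 × A2 → Y3 → W3 → A1 × A2) (a : A1 × A2) {B : ℕ}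
    (y3 : Fin (B + 1) → Y3) (w3 : Fin B → W3) (s : Fin B → A1 × A2)
    (h : ∀ i : Fin B, dr ((Fin.cons a s : Fin (B + 1) → A1 × A2) i.castSucc) (y3 i.castSucc)
      (w3 i) = s i) :
    relayEstimate dr a y3 w3 = Fin.cons a s := by
  funext b
  induction b using Fin.induction with
  | zero => rfl
  | succ i ih =>
    have := h i
    simp only [relayEstimate, Fin.induction_succ, Fin.cons_succ] at ih ⊢
    rw [ih, this]

theorem destEstimate_eq (dd : A1 × A2 → Y → W → A1 × A2) (a : A1 × A2) {B : ℕ}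
    (y : Fin (B + 1) → Y) (w : Fin B → W) (s : Fin B → A1 × A2)
    (h : ∀ i : Fin B, dd ((Fin.snoc s a : Fin (B + 1) → A1 × A2) i.succ) (y i.succ)
      (w i) = s i) :
    destEstimate dd a y w = Fin.snoc s a := by
  funext b
  induction b using Fin.reverseInduction with
  | last => simp [destEstimate]
  | cast i ih =>
    have := h i
    simp only [destEstimate, Fin.reverseInduction_castSucc, Fin.snoc_castSucc] at ih ⊢
    rw [ih, this]

variable [Fintype Y] [Fintype Y3] [DecidableEq A1] [DecidableEq A2]

/-- Error probability of the relay in a block, given its true context `r`. -/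
def relayErr (V : U1 × U2 × U3 → Y × Y3 → ℝ) (c1 : A1 × A1 → U1) (c2 : A2 × A2 → U2)
    (c3 : A1 × A2 → U3) (dr : A1 × A2 → Y3 → W3 → A1 × A2) (r s : A1 × A2) (w3 : W3) : ℝ :=
  ∑ o, V (blockInput c1 c2 c3 s r) o * (if dr r o.2 w3 = s then 0 else 1)

/-- Error probability of the destination in a block, given the true next pair `a`. -/
def destErr (V : U1 × U2 × U3 → Y × Y3 → ℝ) (c1 : A1 × A1 → U1) (c2 : A2 × A2 → U2)
    (c3 : A1 × A2 → U3) (dd : A1 × A2 → Y → W → A1 × A2) (a s : A1 × A2) (w : W) : ℝ :=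
  ∑ o, V (blockInput c1 c2 c3 a s) o * (if dd a o.1 w = s then 0 else 1)

/-- Conditional error probability of the block Markov scheme given the sources. -/
theorem sum_blockMarkov_le {V : U1 × U2 × U3 → Y × Y3 → ℝ} (hV : ∀ u, IsPmf (V u))
    (c1 : A1 × A1 → U1) (c2 : A2 × A2 → U2) (c3 : A1 × A2 → U3)
    (dr : A1 × A2 → Y3 → W3 → A1 × A2) (dd : A1 × A2 → Y → W → A1 × A2) (a a' : A1 × A2) {B : ℕ}
    (s : Fin B → A1 × A2) (w : Fin B → W) (w3 : Fin B → W3) :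
    ∑ o : Fin (B + 1) → Y × Y3,
      (∏ b, V (c1 (((Fin.snoc s a' : Fin (B + 1) → A1 × A2) b).1,
            ((Fin.cons a s : Fin (B + 1) → A1 × A2) b).1),
          c2 (((Fin.snoc s a' : Fin (B + 1) → A1 × A2) b).2,
            ((Fin.cons a s : Fin (B + 1) → A1 × A2) b).2),
          c3 (relayEstimate dr a (fun b => (o b).2) w3 b)) (o b)) *
        (if (fun i : Fin B => destEstimate dd a' (fun b => (o b).1) w i.castSucc) = s
          then (0 : ℝ) else 1)
      ≤ ∑ i : Fin B, (relayErr V c1 c2 c3 dr ((Fin.cons a s : Fin (B + 1) → A1 × A2) i.castSucc)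
          (s i) (w3 i) +
        destErr V c1 c2 c3 dd ((Fin.snoc s a' : Fin (B + 1) → A1 × A2) i.succ) (s i) (w i)) := by
  classical
  have : Nonempty (Y × Y3) := (hV (blockInput c1 c2 c3 a a)).nonempty
  set p : Fin (B + 1) → A1 × A2 := Fin.cons a s with hp
  set q : Fin (B + 1) → A1 × A2 := Fin.snoc s a' with hq
  set act : (Fin (B + 1) → Y × Y3) → ℝ := fun o => ∏ b, V (c1 ((q b).1, (p b).1),
    c2 ((q b).2, (p b).2), c3 (relayEstimate dr a (fun b => (o b).2) w3 b)) (o b) with hact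
  set gen : (Fin (B + 1) → Y × Y3) → ℝ := fun o => ∏ b, V (blockInput c1 c2 c3 (q b) (p b)) (o b)
    with hgen
  have hgen0 : ∀ o, 0 ≤ gen o := fun o => Finset.prod_nonneg fun b _ => (hV _).1 _
  have hact0 : ∀ o, 0 ≤ act o := fun o => Finset.prod_nonneg fun b _ => (hV _).1 _
  have hgen1 : ∑ o, gen o = 1 :=
    sum_pi_prod_eq_one (p := fun b => V (blockInput c1 c2 c3 (q b) (p b))) fun b => hV _
  have hact1 : ∑ o, act o = 1 :=
    sum_prod_causal_eq_one (fun u => (hV u).2) (fun b o => (c1 ((q b).1, (p b).1),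
      c2 ((q b).2, (p b).2), c3 (relayEstimate dr a (fun b => (o b).2) w3 b)))
      fun b o o' h => congrArg (fun e =>
        (c1 ((q b).1, (p b).1), c2 ((q b).2, (p b).2), c3 e))
        (relayEstimate_congr dr a w3 b fun j hj => congrArg Prod.snd (h j hj))
  set ok : (Fin (B + 1) → Y × Y3) → Prop := fun o => ∀ i : Fin B,
    dr (p i.castSucc) (o i.castSucc).2 (w3 i) = s i ∧ dd (q i.succ) (o i.succ).1 (w i) = s i
    with hok
  have h1 : ∀ o, act o * (if (fun i : Fin B => destEstimate dd a' (fun b => (o b).1) w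
      i.castSucc) = s then (0 : ℝ) else 1) ≤ act o - gen o * (if ok o then 1 else 0) := by
    intro o
    by_cases ho : ok o
    · have e1 : relayEstimate dr a (fun b => (o b).2) w3 = p :=
        relayEstimate_eq dr a _ w3 s fun i => (ho i).1
      have e2 : destEstimate dd a' (fun b => (o b).1) w = q :=
        destEstimate_eq dd a' _ w s fun i => (ho i).2
      have e3 : act o = gen o := by simp only [hact, hgen, e1, blockInput]
      rw [if_pos ho, e2, e3, if_pos (by funext i; simp [hq])]
      simp
    · rw [if_neg ho]
      have := hact0 o
      split_ifs <;> linarith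
  have h2 : ∀ o, gen o - gen o * (if ok o then 1 else 0) ≤ ∑ i : Fin B,
      (gen o * (if dr (p i.castSucc) (o i.castSucc).2 (w3 i) = s i then 0 else 1) +
        gen o * (if dd (q i.succ) (o i.succ).1 (w i) = s i then 0 else 1)) := by
    intro o
    have n0 : ∀ i : Fin B, (0 : ℝ) ≤
        gen o * (if dr (p i.castSucc) (o i.castSucc).2 (w3 i) = s i then 0 else 1) +
          gen o * (if dd (q i.succ) (o i.succ).1 (w i) = s i then 0 else 1) := fun i =>
      add_nonneg (mul_nonneg (hgen0 o) (by split_ifs <;> norm_num))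
        (mul_nonneg (hgen0 o) (by split_ifs <;> norm_num))
    by_cases ho : ok o
    · rw [if_pos ho, mul_one, sub_self]
      exact Finset.sum_nonneg fun i _ => n0 i
    · rw [if_neg ho, mul_zero, sub_zero]
      simp only [hok, not_forall] at ho
      obtain ⟨i, hi⟩ := ho
      refine le_trans ?_ (Finset.single_le_sum (fun i _ => n0 i) (Finset.mem_univ i))
      have := hgen0 o
      split_ifs with g1 g2 g2
      · exact absurd ⟨g1, g2⟩ hi
      all_goals linarith
  calc ∑ o, act o * (if (fun i : Fin B => destEstimate dd a' (fun b => (o b).1) w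
        i.castSucc) = s then (0 : ℝ) else 1)
      ≤ ∑ o, (act o - gen o * (if ok o then 1 else 0)) := Finset.sum_le_sum fun o _ => h1 o
    _ = ∑ o, (gen o - gen o * (if ok o then 1 else 0)) := by
        rw [Finset.sum_sub_distrib, Finset.sum_sub_distrib, hact1, hgen1]
    _ ≤ ∑ o, ∑ i : Fin B,
        (gen o * (if dr (p i.castSucc) (o i.castSucc).2 (w3 i) = s i then 0 else 1) +
        gen o * (if dd (q i.succ) (o i.succ).1 (w i) = s i then 0 else 1)) :=
        Finset.sum_le_sum fun o _ => h2 o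
    _ = _ := by
        rw [Finset.sum_comm]
        refine Finset.sum_congr rfl fun i _ => ?_
        rw [Finset.sum_add_distrib]
        have m1 := sum_pi_marginal (p := fun b => V (blockInput c1 c2 c3 (q b) (p b)))
          (fun b => hV _) i.castSucc
          fun o => if dr (p i.castSucc) o.2 (w3 i) = s i then (0 : ℝ) else 1
        have m2 := sum_pi_marginal (p := fun b => V (blockInput c1 c2 c3 (q b) (p b)))
          (fun b => hV _) i.succ
          fun o => if dd (q i.succ) o.1 (w i) = s i then (0 : ℝ) else 1
        simp only [hgen, m1, m2, relayErr, destErr]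
        simp [hp, hq]

end BlockMarkov

theorem sum_pi_marginal_cons {F : Type*} [Fintype F] {P : F → ℝ} (hP : IsPmf P) {B : ℕ}
    (i : Fin B) (R : F → F → ℝ) :
    ∑ f, P f * ∑ s : Fin B → F, (∏ j, P (s j)) *
        R ((Fin.cons f s : Fin (B + 1) → F) i.castSucc) (s i)
      = ∑ f', ∑ f, P f' * P f * R f' f := by
  rw [← sum_pi_marginal₂ (p := fun _ : Fin (B + 1) => P) (fun _ => hP)
    (Fin.castSucc_lt_succ (i := i)).ne R, ← (Fin.consEquiv fun _ => F).sum_comp,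
    Fintype.sum_prod_type]
  refine Finset.sum_congr rfl fun f _ => ?_
  rw [Finset.mul_sum]
  refine Finset.sum_congr rfl fun s _ => ?_
  simp [Fin.consEquiv, Fin.prod_univ_succ, mul_assoc]

section BlockMarkov

variable {A1 A2 W W3 U1 U2 U3 Y Y3 : Type*} [Fintype Y] [Fintype Y3]
  [DecidableEq A1] [DecidableEq A2]

/-- The pair of source messages. -/
def msg (f : A1 × A2 × W × W3) : A1 × A2 := (f.1, f.2.1)

theorem destErr_nonneg {V : U1 × U2 × U3 → Y × Y3 → ℝ} (hV : ∀ u, IsPmf (V u))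
    (c1 : A1 × A1 → U1) (c2 : A2 × A2 → U2) (c3 : A1 × A2 → U3)
    (dd : A1 × A2 → Y → W → A1 × A2) (a s : A1 × A2) (w : W) :
    0 ≤ destErr V c1 c2 c3 dd a s w :=
  Finset.sum_nonneg fun _ _ => mul_nonneg ((hV _).1 _) (by split_ifs <;> norm_num)

variable [Fintype A1] [Fintype A2] [Fintype W] [Fintype W3]

/-- Average error probability of the relay in a block. -/
def meanRelayErr (P : A1 × A2 × W × W3 → ℝ) (V : U1 × U2 × U3 → Y × Y3 → ℝ)
    (c1 : A1 × A1 → U1) (c2 : A2 × A2 → U2) (c3 : A1 × A2 → U3)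
    (dr : A1 × A2 → Y3 → W3 → A1 × A2) : ℝ :=
  ∑ f', ∑ f, P f' * P f * relayErr V c1 c2 c3 dr (msg f') (msg f) f.2.2.2

/-- Average error probability of the destination in a block, given the next pair. -/
def meanDestErr (P : A1 × A2 × W × W3 → ℝ) (V : U1 × U2 × U3 → Y × Y3 → ℝ)
    (c1 : A1 × A1 → U1) (c2 : A2 × A2 → U2) (c3 : A1 × A2 → U3)
    (dd : A1 × A2 → Y → W → A1 × A2) (a : A1 × A2) : ℝ :=
  ∑ f, P f * destErr V c1 c2 c3 dd a (msg f) f.2.2.1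

theorem meanDestErr_nonneg {P : A1 × A2 × W × W3 → ℝ} (hP : IsPmf P)
    {V : U1 × U2 × U3 → Y × Y3 → ℝ} (hV : ∀ u, IsPmf (V u))
    (c1 : A1 × A1 → U1) (c2 : A2 × A2 → U2) (c3 : A1 × A2 → U3)
    (dd : A1 × A2 → Y → W → A1 × A2) (a : A1 × A2) :
    0 ≤ meanDestErr P V c1 c2 c3 dd a :=
  Finset.sum_nonneg fun _ _ => mul_nonneg (hP.1 _) (destErr_nonneg hV _ _ _ _ _ _ _)

/-- Some known start pair makes the average error of the block Markov scheme small. -/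
theorem exists_start_blockMarkov_le {P : A1 × A2 × W × W3 → ℝ} (hP : IsPmf P)
    {V : U1 × U2 × U3 → Y × Y3 → ℝ} (hV : ∀ u, IsPmf (V u))
    (c1 : A1 × A1 → U1) (c2 : A2 × A2 → U2) (c3 : A1 × A2 → U3)
    (dr : A1 × A2 → Y3 → W3 → A1 × A2) (dd : A1 × A2 → Y → W → A1 × A2) (a' : A1 × A2) (B : ℕ) :
    ∃ a : A1 × A2, ∑ f : Fin B → A1 × A2 × W × W3, (∏ i, P (f i)) *
        ∑ i : Fin B, (relayErr V c1 c2 c3 dr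
          ((Fin.cons a (fun i => msg (f i)) : Fin (B + 1) → A1 × A2) i.castSucc)
            (msg (f i)) (f i).2.2.2 +
          destErr V c1 c2 c3 dd
            ((Fin.snoc (fun i => msg (f i)) a' : Fin (B + 1) → A1 × A2) i.succ)
            (msg (f i)) (f i).2.2.1)
      ≤ B * (meanRelayErr P V c1 c2 c3 dr +
        (∑ f, P f * meanDestErr P V c1 c2 c3 dd (msg f) + meanDestErr P V c1 c2 c3 dd a')) := by
  have hcons : ∀ (f₀ : A1 × A2 × W × W3) (f : Fin B → A1 × A2 × W × W3) (i : Fin B),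
      (Fin.cons (msg f₀) (fun i => msg (f i)) : Fin (B + 1) → A1 × A2) i.castSucc
        = msg ((Fin.cons f₀ f : Fin (B + 1) → A1 × A2 × W × W3) i.castSucc) := by
    intro f₀ f i
    generalize i.castSucc = j
    cases j using Fin.cases <;> rfl
  have hN := meanDestErr_nonneg hP hV c1 c2 c3 dd
  have hD : ∀ i : Fin B, ∑ f : Fin B → A1 × A2 × W × W3, (∏ i, P (f i)) *
      destErr V c1 c2 c3 dd
        ((Fin.snoc (fun i => msg (f i)) a' : Fin (B + 1) → A1 × A2) i.succ)
        (msg (f i)) (f i).2.2.1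
      ≤ ∑ f, P f * meanDestErr P V c1 c2 c3 dd (msg f) + meanDestErr P V c1 c2 c3 dd a' := by
    intro i
    by_cases hi : i.succ = Fin.last B
    · rw [hi]
      simp only [Fin.snoc_last]
      rw [sum_pi_marginal (p := fun _ => P) (fun _ => hP) i
        fun f => destErr V c1 c2 c3 dd a' (msg f) f.2.2.1]
      exact le_add_of_nonneg_left (Finset.sum_nonneg fun f _ => mul_nonneg (hP.1 _) (hN _))
    · obtain ⟨j, hj⟩ := Fin.exists_castSucc_eq.2 hi
      have hij : j ≠ i := by
        rintro rfl
        exact (Fin.castSucc_lt_succ (i := j)).ne hj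
      rw [← hj]
      simp only [Fin.snoc_castSucc]
      rw [sum_pi_marginal₂ (p := fun _ => P) (fun _ => hP) hij
        fun g f => destErr V c1 c2 c3 dd (msg g) (msg f) f.2.2.1]
      refine le_add_of_le_of_nonneg (le_of_eq ?_) (hN _)
      simp only [meanDestErr, Finset.mul_sum, mul_assoc]
  suffices key : _ by
    obtain ⟨f₀, h⟩ := hP.exists_le_of_sum_mul_le key
    exact ⟨msg f₀, h⟩
  calc ∑ f₀, P f₀ * ∑ f : Fin B → A1 × A2 × W × W3, (∏ i, P (f i)) *
        ∑ i : Fin B, (relayErr V c1 c2 c3 dr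
          ((Fin.cons (msg f₀) (fun i => msg (f i)) : Fin (B + 1) → A1 × A2) i.castSucc)
            (msg (f i)) (f i).2.2.2 +
          destErr V c1 c2 c3 dd
            ((Fin.snoc (fun i => msg (f i)) a' : Fin (B + 1) → A1 × A2) i.succ)
            (msg (f i)) (f i).2.2.1)
      = ∑ i : Fin B, (∑ f₀, P f₀ * ∑ f : Fin B → A1 × A2 × W × W3, (∏ i, P (f i)) *
          relayErr V c1 c2 c3 dr
          (msg ((Fin.cons f₀ f : Fin (B + 1) → A1 × A2 × W × W3) i.castSucc))
            (msg (f i)) (f i).2.2.2 +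
          ∑ f : Fin B → A1 × A2 × W × W3, (∏ i, P (f i)) * destErr V c1 c2 c3 dd
            ((Fin.snoc (fun i => msg (f i)) a' : Fin (B + 1) → A1 × A2) i.succ)
            (msg (f i)) (f i).2.2.1) := by
        simp only [hcons, Finset.sum_add_distrib, mul_add, Finset.mul_sum]
        congr 1
        · exact (Finset.sum_congr rfl fun _ _ => Finset.sum_comm).trans Finset.sum_comm
        · simp only [← Finset.mul_sum]
          rw [← Finset.sum_mul, hP.2, one_mul]
          simp only [Finset.mul_sum]
          exact Finset.sum_comm
    _ ≤ ∑ i : Fin B, (meanRelayErr P V c1 c2 c3 dr +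
        (∑ f, P f * meanDestErr P V c1 c2 c3 dd (msg f) + meanDestErr P V c1 c2 c3 dd a')) := by
        refine Finset.sum_le_sum fun i _ => add_le_add (le_of_eq ?_) (hD i)
        exact sum_pi_marginal_cons hP i fun f' f =>
          relayErr V c1 c2 c3 dr (msg f') (msg f) f.2.2.2
    _ = _ := by simp; ring

end BlockMarkov

namespace MacEnsemble

section Block

variable {D E S1 S2 X1 X2 X3 Z Z' : Type*} [Fintype D] [DecidableEq D] [Fintype E]
  [DecidableEq E] [Fintype S1] [Fintype S2] [Fintype X1] [Fintype X2] [Fintype X3] [Fintype Z]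
  [Fintype Z']

/-- The ensemble of messages indexed by `D ⊕ E`, where the letters in `D` are sent over the
channel and those in `E` are only observed through `K'`. -/
noncomputable def block (E : Type*) [Fintype E] (N : D → MacEnsemble S1 S2 X1 X2 X3 Z)
    (K' : S1 → S2 → Z' → ℝ) :
    MacEnsemble (D ⊕ E → S1) (D ⊕ E → S2) (D → X1) (D → X2) (D → X3) ((D → Z) × (E → Z')) where
  q₁ a u := ∏ d, (N d).q₁ (a (.inl d)) (u d)
  q₂ a u := ∏ d, (N d).q₂ (a (.inl d)) (u d)
  q₃ a b u := ∏ d, (N d).q₃ (a (.inl d)) (b (.inl d)) (u d)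
  K a b u1 u2 u3 z := (∏ d, (N d).K (a (.inl d)) (b (.inl d)) (u1 d) (u2 d) (u3 d) (z.1 d)) *
    ∏ e, K' (a (.inr e)) (b (.inr e)) (z.2 e)

/-- Ratio moment of the source alone, for a wrong first message. -/
noncomputable def sideMoment₁ (K' : S1 → S2 → Z' → ℝ) : ℝ → ℝ :=
  ratioMoment (fun _ : S2 × Z' => 1) (fun _ _ => 1) fun s g => K' s g.1 g.2

/-- Ratio moment of the source alone, for a wrong second message. -/
noncomputable def sideMoment₂ (K' : S1 → S2 → Z' → ℝ) : ℝ → ℝ :=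
  ratioMoment (fun _ : S1 × Z' => 1) (fun _ _ => 1) fun s g => K' g.1 s g.2

/-- Ratio moment of the source alone, for a wrong pair of messages. -/
noncomputable def sideMoment₁₂ (K' : S1 → S2 → Z' → ℝ) : ℝ → ℝ :=
  ratioMoment (fun _ : Z' => 1) (fun _ _ => 1) fun (s : S1 × S2) z => K' s.1 s.2 z

variable {N : D → MacEnsemble S1 S2 X1 X2 X3 Z} {K' : S1 → S2 → Z' → ℝ}
  (h₁ : ∀ d a u, 0 ≤ (N d).q₁ a u) (h₂ : ∀ d a u, 0 ≤ (N d).q₂ a u)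
  (h₃ : ∀ d a b u, 0 ≤ (N d).q₃ a b u)
  (hK : ∀ d a b u1 u2 u3 z, 0 ≤ (N d).K a b u1 u2 u3 z) (hK' : ∀ a b z, 0 ≤ K' a b z)

include h₁ h₃ hK hK' in
theorem block_moment₁ (τ : ℝ) :
    (block E N K').moment₁ τ
      = (∏ d, (N d).moment₁ τ) * sideMoment₁ K' τ ^ Fintype.card E := by
  unfold moment₁ sideMoment₁
  rw [← ratioMoment_block (fun d v g => mul_nonneg (h₁ d _ _) (h₃ d _ _ _))
    (fun d v g => hK d _ _ _ _ _ _) (fun _ _ => zero_le_one) (fun _ _ => hK' _ _ _)]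
  refine ratioMoment_equiv
    { toFun := fun v => (fun d => (v.1 (.inl d), v.2.1 d, v.2.2 d), fun e => v.1 (.inr e))
      invFun := fun w => (Sum.elim (fun d => (w.1 d).1) w.2, fun d => (w.1 d).2.1,
        fun d => (w.1 d).2.2)
      left_inv := fun v => Prod.ext (funext (Sum.rec (fun _ => rfl) fun _ => rfl)) rfl
      right_inv := fun _ => rfl }
    { toFun := fun g => (fun d => (g.1 (.inl d), g.2.1 d, g.2.2.1 d),
        fun e => (g.1 (.inr e), g.2.2.2 e))
      invFun := fun w => (Sum.elim (fun d => (w.1 d).1) fun e => (w.2 e).1, fun d => (w.1 d).2.1,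
        fun d => (w.1 d).2.2, fun e => (w.2 e).2)
      left_inv := fun v => Prod.ext (funext (Sum.rec (fun _ => rfl) fun _ => rfl)) rfl
      right_inv := fun _ => rfl } ?_ ?_ ?_ τ
  · intro g
    simp only [block, Finset.prod_const_one, mul_one]
    rfl
  · intro v g
    simp only [block, Finset.prod_const_one, mul_one]
    exact Finset.prod_mul_distrib.symm
  · exact fun _ _ => rfl

include h₂ h₃ hK hK' in
theorem block_moment₂ (τ : ℝ) :
    (block E N K').moment₂ τ
      = (∏ d, (N d).moment₂ τ) * sideMoment₂ K' τ ^ Fintype.card E := by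
  unfold moment₂ sideMoment₂
  rw [← ratioMoment_block (fun d v g => mul_nonneg (h₂ d _ _) (h₃ d _ _ _))
    (fun d v g => hK d _ _ _ _ _ _) (fun _ _ => zero_le_one) (fun _ _ => hK' _ _ _)]
  refine ratioMoment_equiv
    { toFun := fun v => (fun d => (v.1 (.inl d), v.2.1 d, v.2.2 d), fun e => v.1 (.inr e))
      invFun := fun w => (Sum.elim (fun d => (w.1 d).1) w.2, fun d => (w.1 d).2.1,
        fun d => (w.1 d).2.2)
      left_inv := fun v => Prod.ext (funext (Sum.rec (fun _ => rfl) fun _ => rfl)) rfl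
      right_inv := fun _ => rfl }
    { toFun := fun g => (fun d => (g.1 (.inl d), g.2.1 d, g.2.2.1 d),
        fun e => (g.1 (.inr e), g.2.2.2 e))
      invFun := fun w => (Sum.elim (fun d => (w.1 d).1) fun e => (w.2 e).1, fun d => (w.1 d).2.1,
        fun d => (w.1 d).2.2, fun e => (w.2 e).2)
      left_inv := fun v => Prod.ext (funext (Sum.rec (fun _ => rfl) fun _ => rfl)) rfl
      right_inv := fun _ => rfl } ?_ ?_ ?_ τ
  · intro g
    simp only [block, Finset.prod_const_one, mul_one]
    rfl
  · intro v g
    simp only [block, Finset.prod_const_one, mul_one]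
    exact Finset.prod_mul_distrib.symm
  · exact fun _ _ => rfl

include h₁ h₂ h₃ hK hK' in
theorem block_moment₁₂ (τ : ℝ) :
    (block E N K').moment₁₂ τ
      = (∏ d, (N d).moment₁₂ τ) * sideMoment₁₂ K' τ ^ Fintype.card E := by
  unfold moment₁₂ sideMoment₁₂
  rw [← ratioMoment_block
    (fun d v g => mul_nonneg (mul_nonneg (h₁ d _ _) (h₂ d _ _)) (h₃ d _ _ _))
    (fun d v g => hK d _ _ _ _ _ _) (fun _ _ => zero_le_one) (fun _ _ => hK' _ _ _)]
  refine ratioMoment_equiv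
    { toFun := fun v => (fun d => (v.1 (.inl d), v.2.1 (.inl d), v.2.2.1 d, v.2.2.2.1 d,
        v.2.2.2.2 d), fun e => (v.1 (.inr e), v.2.1 (.inr e)))
      invFun := fun w => (Sum.elim (fun d => (w.1 d).1) fun e => (w.2 e).1,
        Sum.elim (fun d => (w.1 d).2.1) fun e => (w.2 e).2, fun d => (w.1 d).2.2.1,
        fun d => (w.1 d).2.2.2.1, fun d => (w.1 d).2.2.2.2)
      left_inv := fun v => Prod.ext (funext (Sum.rec (fun _ => rfl) fun _ => rfl))
        (Prod.ext (funext (Sum.rec (fun _ => rfl) fun _ => rfl)) rfl)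
      right_inv := fun _ => rfl }
    { toFun := fun g => (g.1, g.2)
      invFun := fun g => (g.1, g.2)
      left_inv := fun _ => rfl
      right_inv := fun _ => rfl } ?_ ?_ ?_ τ
  · simp
  · intro v g
    simp only [block, Finset.prod_const_one, mul_one]
    rw [← Finset.prod_mul_distrib, ← Finset.prod_mul_distrib]
    rfl
  · exact fun _ _ => rfl

theorem mass_eq_moment₁₂ {A1 A2 U1 U2 U3 Z : Type*} [Fintype A1] [Fintype A2] [Fintype U1]
    [Fintype U2] [Fintype U3] [Fintype Z] (M : MacEnsemble A1 A2 U1 U2 U3 Z) :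
    M.mass = M.moment₁₂ 0 := by
  rw [moment₁₂, ratioMoment_zero, mass]
  simp only [Finset.mul_sum, ← Fintype.sum_prod_type']
  refine Fintype.sum_equiv
    { toFun := fun x => (x.2.2.2.2.2, x.1, x.2.1, x.2.2.1, x.2.2.2.1, x.2.2.2.2.1)
      invFun := fun y => (y.2.1, y.2.2.1, y.2.2.2.1, y.2.2.2.2.1, y.2.2.2.2.2, y.1)
      left_inv := fun _ => rfl
      right_inv := fun _ => rfl } _ _ fun x => ?_
  simp

end Block

end MacEnsemble

section Marginals

variable {S1 S2 W W3 X Y Y3 : Type*} [Fintype W] [Fintype W3] [Fintype Y] [Fintype Y3]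

/-- Joint law of the sources and the side information of the destination. -/
def srcDest (p : S1 × S2 × W × W3 → ℝ) (s1 : S1) (s2 : S2) (w : W) : ℝ :=
  ∑ w3, p (s1, s2, w, w3)

/-- Joint law of the sources and the side information of the relay. -/
def srcRelay (p : S1 × S2 × W × W3 → ℝ) (s1 : S1) (s2 : S2) (w3 : W3) : ℝ :=
  ∑ w, p (s1, s2, w, w3)

/-- Channel from the inputs to the destination. -/
def chanDest (Q : X → Y × Y3 → ℝ) (x : X) (y : Y) : ℝ :=
  ∑ y3, Q x (y, y3)

/-- Channel from the inputs to the relay. -/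
def chanRelay (Q : X → Y × Y3 → ℝ) (x : X) (y3 : Y3) : ℝ :=
  ∑ y, Q x (y, y3)

omit [Fintype W] in
theorem srcDest_nonneg {p : S1 × S2 × W × W3 → ℝ} (hp : ∀ f, 0 ≤ p f) (s1 : S1) (s2 : S2)
    (w : W) : 0 ≤ srcDest p s1 s2 w :=
  Finset.sum_nonneg fun _ _ => hp _

omit [Fintype W3] in
theorem srcRelay_nonneg {p : S1 × S2 × W × W3 → ℝ} (hp : ∀ f, 0 ≤ p f) (s1 : S1) (s2 : S2)
    (w3 : W3) : 0 ≤ srcRelay p s1 s2 w3 :=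
  Finset.sum_nonneg fun _ _ => hp _

theorem isPmf_chanDest {Q : X → Y × Y3 → ℝ} (hQ : ∀ x, IsPmf (Q x)) (x : X) :
    IsPmf (chanDest Q x) :=
  ⟨fun _ => Finset.sum_nonneg fun _ _ => (hQ x).1 _, by
    rw [← (hQ x).2, Fintype.sum_prod_type]; rfl⟩

theorem isPmf_chanRelay {Q : X → Y × Y3 → ℝ} (hQ : ∀ x, IsPmf (Q x)) (x : X) :
    IsPmf (chanRelay Q x) :=
  ⟨fun _ => Finset.sum_nonneg fun _ _ => (hQ x).1 _, by
    rw [← (hQ x).2, Fintype.sum_prod_type_right]; rfl⟩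

theorem sum_srcDest [Fintype S1] [Fintype S2] {p : S1 × S2 × W × W3 → ℝ} (hp : IsPmf p) :
    ∑ s1, ∑ s2, ∑ w, srcDest p s1 s2 w = 1 := by
  rw [← hp.2]
  simp only [Fintype.sum_prod_type, srcDest]

theorem sum_srcRelay [Fintype S1] [Fintype S2] {p : S1 × S2 × W × W3 → ℝ} (hp : IsPmf p) :
    ∑ s1, ∑ s2, ∑ w3, srcRelay p s1 s2 w3 = 1 := by
  rw [← hp.2]
  simp only [Fintype.sum_prod_type, srcRelay]
  exact Finset.sum_congr rfl fun _ _ => Finset.sum_congr rfl fun _ _ => Finset.sum_comm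

end Marginals

section Blocks

variable {I D E S1 S2 W W3 X1 X2 X3 Y Y3 : Type*} [Fintype I] [Fintype D] [Fintype E]

/-- Law of a block of sources and side information. -/
def srcBlock (I : Type*) [Fintype I] (p : S1 × S2 × W × W3 → ℝ)
    (f : (I → S1) × (I → S2) × (I → W) × (I → W3)) : ℝ :=
  ∏ i, p (f.1 i, f.2.1 i, f.2.2.1 i, f.2.2.2 i)

/-- Law of a block of channel outputs. -/
def chanBlock (D : Type*) [Fintype D] (Q : X1 × X2 × X3 → Y × Y3 → ℝ)
    (u : (D → X1) × (D → X2) × (D → X3)) (o : (D → Y) × (D → Y3)) : ℝ :=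
  ∏ d, Q (u.1 d, u.2.1 d, u.2.2 d) (o.1 d, o.2 d)

variable [DecidableEq I] [DecidableEq D] [DecidableEq E] [Fintype W] [Fintype W3] [Fintype Y]
  [Fintype Y3]

theorem isPmf_srcBlock [Fintype S1] [Fintype S2] {p : S1 × S2 × W × W3 → ℝ} (hp : IsPmf p) :
    IsPmf (srcBlock I p) := by
  refine ⟨fun _ => Finset.prod_nonneg fun _ _ => hp.1 _, ?_⟩
  rw [← sum_pi_prod_eq_one fun _ : I => hp]
  exact Fintype.sum_equiv
    { toFun := fun f i => (f.1 i, f.2.1 i, f.2.2.1 i, f.2.2.2 i)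
      invFun := fun c => (fun i => (c i).1, fun i => (c i).2.1, fun i => (c i).2.2.1,
        fun i => (c i).2.2.2)
      left_inv := fun _ => rfl
      right_inv := fun _ => rfl } _ _ fun _ => rfl

theorem isPmf_chanBlock {Q : X1 × X2 × X3 → Y × Y3 → ℝ} (hQ : ∀ x, IsPmf (Q x))
    (u : (D → X1) × (D → X2) × (D → X3)) : IsPmf (chanBlock D Q u) := by
  refine ⟨fun _ => Finset.prod_nonneg fun _ _ => (hQ _).1 _, ?_⟩
  rw [← sum_pi_prod_eq_one fun d : D => hQ (u.1 d, u.2.1 d, u.2.2 d)]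
  exact Fintype.sum_equiv
    { toFun := fun f i => (f.1 i, f.2 i)
      invFun := fun c => (fun i => (c i).1, fun i => (c i).2)
      left_inv := fun _ => rfl
      right_inv := fun _ => rfl } _ _ fun _ => rfl

theorem sum_srcBlock_dest [Fintype S1] [Fintype S2] (p : S1 × S2 × W × W3 → ℝ)
    (F : (I → S1) → (I → S2) → (I → W) → ℝ) :
    ∑ f, srcBlock I p f * F f.1 f.2.1 f.2.2.1
      = ∑ a1, ∑ a2, ∑ w, (∏ i, srcDest p (a1 i) (a2 i) (w i)) * F a1 a2 w := by
  simp only [Fintype.sum_prod_type, srcBlock, ← Finset.sum_mul, srcDest, Fintype.prod_sum]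

theorem sum_srcBlock_relay [Fintype S1] [Fintype S2] (p : S1 × S2 × W × W3 → ℝ)
    (F : (I → S1) → (I → S2) → (I → W3) → ℝ) :
    ∑ f, srcBlock I p f * F f.1 f.2.1 f.2.2.2
      = ∑ a1, ∑ a2, ∑ w3, (∏ i, srcRelay p (a1 i) (a2 i) (w3 i)) * F a1 a2 w3 := by
  simp only [Fintype.sum_prod_type, srcBlock, srcRelay, Fintype.prod_sum, Finset.sum_mul]
  exact Finset.sum_congr rfl fun _ _ => Finset.sum_congr rfl fun _ _ => Finset.sum_comm

theorem sum_chanBlock_dest (Q : X1 × X2 × X3 → Y × Y3 → ℝ)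
    (u : (D → X1) × (D → X2) × (D → X3)) (F : (D → Y) → ℝ) :
    ∑ o, chanBlock D Q u o * F o.1
      = ∑ y, (∏ d, chanDest Q (u.1 d, u.2.1 d, u.2.2 d) (y d)) * F y := by
  simp only [Fintype.sum_prod_type, chanBlock, ← Finset.sum_mul, chanDest, Fintype.prod_sum]

theorem sum_chanBlock_relay (Q : X1 × X2 × X3 → Y × Y3 → ℝ)
    (u : (D → X1) × (D → X2) × (D → X3)) (F : (D → Y3) → ℝ) :
    ∑ o, chanBlock D Q u o * F o.2
      = ∑ y3, (∏ d, chanRelay Q (u.1 d, u.2.1 d, u.2.2 d) (y3 d)) * F y3 := by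
  simp only [Fintype.sum_prod_type_right, chanBlock, ← Finset.sum_mul, chanRelay,
    Fintype.prod_sum]

/-- The side information of a block and the channel outputs, letter by letter. -/
def blockObs {V O : Type*} (v : D ⊕ E → V) (o : D → O) : (D → V × O) × (E → V) :=
  (fun d => (v (.inl d), o d), fun e => v (.inr e))

theorem sum_blockObs {V O : Type*} [Fintype V] [Fintype O] (k : D ⊕ E → V → ℝ)
    (L : D → O → ℝ) (F : (D → V × O) × (E → V) → ℝ) :
    ∑ v : D ⊕ E → V, (∏ i, k i (v i)) * ∑ o : D → O, (∏ d, L d (o d)) * F (blockObs v o)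
      = ∑ z : (D → V × O) × (E → V), ((∏ d, k (.inl d) (z.1 d).1 * L d (z.1 d).2) *
          ∏ e, k (.inr e) (z.2 e)) * F z := by
  simp only [Finset.mul_sum]
  rw [← Fintype.sum_prod_type']
  refine Fintype.sum_equiv
    { toFun := fun x => blockObs x.1 x.2
      invFun := fun z => (Sum.elim (fun d => (z.1 d).1) z.2, fun d => (z.1 d).2)
      left_inv := fun x => Prod.ext (funext (Sum.rec (fun _ => rfl) fun _ => rfl)) rfl
      right_inv := fun _ => rfl } _ _ fun x => ?_
  simp only [Equiv.coe_fn_mk, Fintype.prod_sum_type, Finset.prod_mul_distrib, blockObs]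
  ring

end Blocks

section Letters

variable {S1 S2 W W3 X1 X2 X3 Y Y3 : Type*} [Fintype S1] [Fintype S2] [Fintype W] [Fintype W3]
  [Fintype X1] [Fintype X2] [Fintype X3] [Fintype Y] [Fintype Y3]

/-- The single-letter ensemble seen by the destination. -/
noncomputable def destLetter (p : S1 × S2 × W × W3 → ℝ) (Q : X1 × X2 × X3 → Y × Y3 → ℝ)
    (pX1 : S1 → X1 → ℝ) (pX2 : S2 → X2 → ℝ) (pX3 : S1 → S2 → X3 → ℝ) :
    MacEnsemble S1 S2 X1 X2 X3 (W × Y) where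
  q₁ := pX1
  q₂ := pX2
  q₃ := pX3
  K s1 s2 x1 x2 x3 z := srcDest p s1 s2 z.1 * chanDest Q (x1, x2, x3) z.2

/-- The single-letter ensemble seen by the relay, given the previous source letters and the
letter it sends. -/
noncomputable def relayLetter (p : S1 × S2 × W × W3 → ℝ) (Q : X1 × X2 × X3 → Y × Y3 → ℝ)
    (pX1 : S1 → X1 → ℝ) (pX2 : S2 → X2 → ℝ) (r1 : S1) (r2 : S2) (x3 : X3) :
    MacEnsemble S1 S2 X1 X2 Unit (W3 × Y3) where
  q₁ _ := pX1 r1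
  q₂ _ := pX2 r2
  q₃ _ _ _ := 1
  K s1 s2 x1 x2 _ z := srcRelay p s1 s2 z.1 * chanRelay Q (x1, x2, x3) z.2

/-- Average of a function of the previous source letters and the letter sent by the relay. -/
noncomputable def relayAverage (p : S1 × S2 × W × W3 → ℝ) (pX3 : S1 → S2 → X3 → ℝ)
    (h : S1 → S2 → X3 → ℝ) : ℝ :=
  ∑ f, p f * ∑ x3, pX3 f.1 f.2.1 x3 * h f.1 f.2.1 x3

theorem MacEnsemble.sideMoment₁₂_srcDest {p : S1 × S2 × W × W3 → ℝ} (hp : IsPmf p) :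
    MacEnsemble.sideMoment₁₂ (srcDest p) 0 = 1 := by
  rw [MacEnsemble.sideMoment₁₂, ratioMoment_zero]
  refine Eq.trans ?_ (sum_srcDest hp)
  simp only [one_mul, Fintype.sum_prod_type]
  rw [Finset.sum_comm]
  exact Finset.sum_congr rfl fun _ _ => Finset.sum_comm

theorem MacEnsemble.sideMoment₁₂_srcRelay {p : S1 × S2 × W × W3 → ℝ} (hp : IsPmf p) :
    MacEnsemble.sideMoment₁₂ (srcRelay p) 0 = 1 := by
  rw [MacEnsemble.sideMoment₁₂, ratioMoment_zero]
  refine Eq.trans ?_ (sum_srcRelay hp)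
  simp only [one_mul, Fintype.sum_prod_type]
  rw [Finset.sum_comm]
  exact Finset.sum_congr rfl fun _ _ => Finset.sum_comm

variable {p : S1 × S2 × W × W3 → ℝ} (hp : IsPmf p) {Q : X1 × X2 × X3 → Y × Y3 → ℝ}
  (hQ : ∀ x, IsPmf (Q x)) {pX1 : S1 → X1 → ℝ} {pX2 : S2 → X2 → ℝ} {pX3 : S1 → S2 → X3 → ℝ}
  (h₁ : ∀ s, IsPmf (pX1 s)) (h₂ : ∀ s, IsPmf (pX2 s)) (h₃ : ∀ s s', IsPmf (pX3 s s'))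

include hp hQ h₁ h₂ h₃ in
theorem destLetter_mass : (destLetter p Q pX1 pX2 pX3).mass = 1 := by
  simp only [MacEnsemble.mass, destLetter, Fintype.sum_prod_type, ← Finset.mul_sum,
    (isPmf_chanDest hQ _).2, mul_one]
  rw [← sum_srcDest hp]
  refine Finset.sum_congr rfl fun s1 _ => Finset.sum_congr rfl fun s2 _ => ?_
  simp only [← Finset.sum_mul, ← Finset.mul_sum, (h₁ _).2, (h₂ _).2, (h₃ _ _).2, mul_one, one_mul]

omit [Fintype X3] in
include hp hQ h₁ h₂ in
theorem relayLetter_mass (r1 : S1) (r2 : S2) (x3 : X3) :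
    (relayLetter p Q pX1 pX2 r1 r2 x3).mass = 1 := by
  simp only [MacEnsemble.mass, relayLetter, Fintype.sum_prod_type, ← Finset.mul_sum,
    (isPmf_chanRelay hQ _).2, mul_one, Fintype.sum_unique]
  rw [← sum_srcRelay hp]
  refine Finset.sum_congr rfl fun s1 _ => Finset.sum_congr rfl fun s2 _ => ?_
  simp only [← Finset.sum_mul, ← Finset.mul_sum, (h₁ _).2, (h₂ _).2, mul_one, one_mul]

/-- The threshold bound for a block of `m` channel letters and `k` further source letters. -/
noncomputable def blockBound (m k : ℕ) (γ τ₁ τ₂ τ₃ : ℝ) (Φ₁ Φ₂ Φ₃ Ψ₁ Ψ₂ Ψ₃ : ℝ → ℝ) : ℝ :=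
  γ⁻¹ ^ τ₁ * (Φ₁ τ₁ ^ m * Ψ₁ τ₁ ^ k) + γ⁻¹ ^ τ₂ * (Φ₂ τ₂ ^ m * Ψ₂ τ₂ ^ k)
    + γ⁻¹ ^ τ₃ * (Φ₃ τ₃ ^ m * Ψ₃ τ₃ ^ k) + 3 * γ

variable {D E : Type*} [Fintype D] [DecidableEq D] [Fintype E] [DecidableEq E]
  [DecidableEq S1] [DecidableEq S2]

/-- Weight of a random choice of codebooks. -/
noncomputable def blockCodebookWeight (D E : Type*) [Fintype D] [DecidableEq D] [Fintype E]
    [DecidableEq E] (pX1 : S1 → X1 → ℝ) (pX2 : S2 → X2 → ℝ) (pX3 : S1 → S2 → X3 → ℝ) :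
    (((D ⊕ E → S1) × (D ⊕ E → S1) → D → X1) × ((D ⊕ E → S2) × (D ⊕ E → S2) → D → X2) ×
      ((D ⊕ E → S1) × (D ⊕ E → S2) → D → X3)) → ℝ :=
  codebookWeight (fun k u => ∏ d, pX1 (k.2 (.inl d)) (u d))
    (fun k u => ∏ d, pX2 (k.2 (.inl d)) (u d))
    (fun k u => ∏ d, pX3 (k.1 (.inl d)) (k.2 (.inl d)) (u d))

/-- The block decoder of the destination. -/
noncomputable def destDecoder [Nonempty ((D ⊕ E → S1) × (D ⊕ E → S2))]
    (p : S1 × S2 × W × W3 → ℝ) (Q : X1 × X2 × X3 → Y × Y3 → ℝ)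
    (pX1 : S1 → X1 → ℝ) (pX2 : S2 → X2 → ℝ) (pX3 : S1 → S2 → X3 → ℝ) (γ : ℝ)
    (c1 : (D ⊕ E → S1) × (D ⊕ E → S1) → D → X1) (c2 : (D ⊕ E → S2) × (D ⊕ E → S2) → D → X2)
    (c3 : (D ⊕ E → S1) × (D ⊕ E → S2) → D → X3) (a : (D ⊕ E → S1) × (D ⊕ E → S2))
    (y : D → Y) (w : D ⊕ E → W) : (D ⊕ E → S1) × (D ⊕ E → S2) :=
  (MacEnsemble.block E (fun _ : D => destLetter p Q pX1 pX2 pX3) (srcDest p)).decode γ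
    (fun a1 => c1 (a.1, a1)) (fun a2 => c2 (a.2, a2)) (fun a1 a2 => c3 (a1, a2)) (blockObs w y)

theorem injective_mk_left {A B : Type*} (a : A) : Function.Injective (fun b : B => (a, b)) :=
  fun _ _ h => (Prod.ext_iff.1 h).2

set_option synthInstance.maxSize 1000 in
include hp hQ h₁ h₂ h₃ in
theorem sum_meanDestErr_le [Nonempty ((D ⊕ E → S1) × (D ⊕ E → S2))] {γ τ₁ τ₂ τ₃ : ℝ}
    (hγ : 0 < γ) (hτ₁ : 0 < τ₁) (hτ₂ : 0 < τ₂) (hτ₃ : 0 < τ₃)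
    (a : (D ⊕ E → S1) × (D ⊕ E → S2)) :
    ∑ θ, blockCodebookWeight D E pX1 pX2 pX3 θ *
        meanDestErr (srcBlock (D ⊕ E) p) (chanBlock D Q) θ.1 θ.2.1 θ.2.2
          (destDecoder p Q pX1 pX2 pX3 γ θ.1 θ.2.1 θ.2.2) a
      ≤ blockBound (Fintype.card D) (Fintype.card E) γ τ₁ τ₂ τ₃
          (destLetter p Q pX1 pX2 pX3).moment₁ (destLetter p Q pX1 pX2 pX3).moment₂
          (destLetter p Q pX1 pX2 pX3).moment₁₂ (MacEnsemble.sideMoment₁ (srcDest p))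
          (MacEnsemble.sideMoment₂ (srcDest p)) (MacEnsemble.sideMoment₁₂ (srcDest p)) := by
  have hK : ∀ s1 s2 x1 x2 x3 z, 0 ≤ (destLetter p Q pX1 pX2 pX3).K s1 s2 x1 x2 x3 z :=
    fun _ _ _ _ _ _ => mul_nonneg (srcDest_nonneg hp.1 _ _ _) ((isPmf_chanDest hQ _).1 _)
  have hK' := srcDest_nonneg hp.1
  have hbm₁ := MacEnsemble.block_moment₁ (E := E)
    (N := fun _ : D => destLetter p Q pX1 pX2 pX3) (K' := srcDest p)
    (fun _ s u => (h₁ s).1 u) (fun _ s s' u => (h₃ s s').1 u) (fun _ => hK) hK'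
  have hbm₂ := MacEnsemble.block_moment₂ (E := E)
    (N := fun _ : D => destLetter p Q pX1 pX2 pX3) (K' := srcDest p)
    (fun _ s u => (h₂ s).1 u) (fun _ s s' u => (h₃ s s').1 u) (fun _ => hK) hK'
  have hbm₃ := MacEnsemble.block_moment₁₂ (E := E)
    (N := fun _ : D => destLetter p Q pX1 pX2 pX3) (K' := srcDest p) (fun _ s u => (h₁ s).1 u)
    (fun _ s u => (h₂ s).1 u) (fun _ s s' u => (h₃ s s').1 u) (fun _ => hK) hK'
  have main := (MacEnsemble.block E (fun _ : D => destLetter p Q pX1 pX2 pX3)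
      (srcDest p)).sum_codebookWeight_decode_le
    (p₁ := fun k : (D ⊕ E → S1) × (D ⊕ E → S1) => fun u => ∏ d, pX1 (k.2 (.inl d)) (u d))
    (p₂ := fun k : (D ⊕ E → S2) × (D ⊕ E → S2) => fun u => ∏ d, pX2 (k.2 (.inl d)) (u d))
    (p₃ := fun k : (D ⊕ E → S1) × (D ⊕ E → S2) =>
      fun u => ∏ d, pX3 (k.1 (.inl d)) (k.2 (.inl d)) (u d))
    (e1 := fun a1 => (a.1, a1)) (e2 := fun a2 => (a.2, a2)) (e3 := id)
    (fun k => isPmf_pi fun d => h₁ (k.2 (.inl d))) (fun k => isPmf_pi fun d => h₂ (k.2 (.inl d)))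
    (fun k => isPmf_pi fun d => h₃ (k.1 (.inl d)) (k.2 (.inl d)))
    (injective_mk_left _) (injective_mk_left _) Function.injective_id (fun _ => rfl)
    (fun _ => rfl) (fun _ _ => rfl)
    (fun _ _ _ _ _ _ => mul_nonneg (Finset.prod_nonneg fun _ _ => hK _ _ _ _ _ _)
      (Finset.prod_nonneg fun _ _ => hK' _ _ _)) hγ hτ₁ hτ₂ hτ₃
  rw [MacEnsemble.mass_eq_moment₁₂, hbm₃, hbm₃, hbm₁, hbm₂,
    MacEnsemble.sideMoment₁₂_srcDest hp, ← MacEnsemble.mass_eq_moment₁₂,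
    destLetter_mass hp hQ h₁ h₂ h₃] at main
  simp only [Finset.prod_const, Finset.card_univ, one_pow, mul_one] at main
  refine le_of_eq_of_le (Finset.sum_congr rfl fun θ _ => ?_) (main.trans_eq ?_)
  · rw [blockCodebookWeight]
    congr 1
    rw [meanDestErr]
    have e := sum_srcBlock_dest (I := D ⊕ E) p fun a1 a2 w =>
      destErr (chanBlock D Q) θ.1 θ.2.1 θ.2.2 (destDecoder p Q pX1 pX2 pX3 γ θ.1 θ.2.1 θ.2.2) a
        (a1, a2) w
    refine e.trans (Finset.sum_congr rfl fun a1 _ => Finset.sum_congr rfl fun a2 _ => ?_)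
    have e' := sum_blockObs (D := D) (E := E) (fun i w => srcDest p (a1 i) (a2 i) w)
      (fun d y => chanDest Q (θ.1 (a.1, a1) d, θ.2.1 (a.2, a2) d, θ.2.2 (a1, a2) d) y)
      (fun z => if (MacEnsemble.block E (fun _ : D => destLetter p Q pX1 pX2 pX3)
        (srcDest p)).decode γ (fun a1 => θ.1 (a.1, a1)) (fun a2 => θ.2.1 (a.2, a2))
        (fun a1 a2 => θ.2.2 (a1, a2)) z = (a1, a2) then (0 : ℝ) else 1)
    refine Eq.trans (Finset.sum_congr rfl fun w _ => ?_) (e'.trans ?_)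
    · congr 1
      exact sum_chanBlock_dest Q (θ.1 (a.1, a1), θ.2.1 (a.2, a2), θ.2.2 (a1, a2)) fun y =>
        if destDecoder p Q pX1 pX2 pX3 γ θ.1 θ.2.1 θ.2.2 a y w = (a1, a2) then (0 : ℝ) else 1
    · refine Finset.sum_congr rfl fun z _ => ?_
      congr!
  · rw [blockBound]
    ring

end Letters

section RelayBlocks

variable {S1 S2 W W3 X1 X2 X3 Y Y3 : Type*} [Fintype S1] [Fintype S2] [Fintype W] [Fintype W3]
  [Fintype X1] [Fintype X2] [Fintype X3] [Fintype Y] [Fintype Y3]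
  {p : S1 × S2 × W × W3 → ℝ} (hp : IsPmf p) {Q : X1 × X2 × X3 → Y × Y3 → ℝ}
  (hQ : ∀ x, IsPmf (Q x)) {pX1 : S1 → X1 → ℝ} {pX2 : S2 → X2 → ℝ} {pX3 : S1 → S2 → X3 → ℝ}
  (h₁ : ∀ s, IsPmf (pX1 s)) (h₂ : ∀ s, IsPmf (pX2 s)) (h₃ : ∀ s s', IsPmf (pX3 s s'))
  {D E : Type*} [Fintype D] [DecidableEq D] [Fintype E] [DecidableEq E]
  [DecidableEq S1] [DecidableEq S2]

omit [DecidableEq S1] [DecidableEq S2] in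
include hp in
/-- The letters of a block are independent. -/
theorem sum_srcBlock_mul_prod_relayAverage (h : S1 → S2 → X3 → ℝ) :
    ∑ f, srcBlock (D ⊕ E) p f * ∑ x3 : D → X3,
        (∏ d, pX3 (f.1 (.inl d)) (f.2.1 (.inl d)) (x3 d)) *
          ∏ d, h (f.1 (.inl d)) (f.2.1 (.inl d)) (x3 d)
      = relayAverage p pX3 h ^ Fintype.card D := by
  have e : ∏ i : D ⊕ E, ∑ f, p f * Sum.elim
      (fun _ => ∑ x3, pX3 f.1 f.2.1 x3 * h f.1 f.2.1 x3) (fun _ => 1) i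
      = relayAverage p pX3 h ^ Fintype.card D := by
    simp [Fintype.prod_sum_type, relayAverage, hp.2]
  rw [← e, Fintype.prod_sum]
  refine Fintype.sum_equiv
    { toFun := fun f i => (f.1 i, f.2.1 i, f.2.2.1 i, f.2.2.2 i)
      invFun := fun c => (fun i => (c i).1, fun i => (c i).2.1, fun i => (c i).2.2.1,
        fun i => (c i).2.2.2)
      left_inv := fun _ => rfl
      right_inv := fun _ => rfl } _ _ fun f => ?_
  simp only [Equiv.coe_fn_mk]
  rw [Finset.prod_mul_distrib, srcBlock]
  congr 1
  simp only [Fintype.prod_sum_type, Sum.elim_inl, Sum.elim_inr, Finset.prod_const_one, mul_one,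
    Fintype.prod_sum, Finset.prod_mul_distrib]

/-- The block decoder of the relay. -/
noncomputable def relayDecoder [Nonempty ((D ⊕ E → S1) × (D ⊕ E → S2))]
    (p : S1 × S2 × W × W3 → ℝ) (Q : X1 × X2 × X3 → Y × Y3 → ℝ)
    (pX1 : S1 → X1 → ℝ) (pX2 : S2 → X2 → ℝ) (γ : ℝ)
    (c1 : (D ⊕ E → S1) × (D ⊕ E → S1) → D → X1) (c2 : (D ⊕ E → S2) × (D ⊕ E → S2) → D → X2)
    (c3 : (D ⊕ E → S1) × (D ⊕ E → S2) → D → X3) (r : (D ⊕ E → S1) × (D ⊕ E → S2))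
    (y3 : D → Y3) (w3 : D ⊕ E → W3) : (D ⊕ E → S1) × (D ⊕ E → S2) :=
  (MacEnsemble.block E (fun d => relayLetter p Q pX1 pX2 (r.1 (.inl d)) (r.2 (.inl d)) (c3 r d))
    (srcRelay p)).decode γ (fun a1 => c1 (a1, r.1)) (fun a2 => c2 (a2, r.2)) (fun _ _ _ => ())
    (blockObs w3 y3)

theorem sum_codebookWeight_unique {κ1 κ2 κ3 U1 U2 U3 : Type*} [Fintype κ1] [Fintype κ2]
    [Fintype κ3] [Fintype U3] [Unique U3] [Fintype U1] [Fintype U2]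
    [DecidableEq κ1] [DecidableEq κ2] [DecidableEq κ3]
    (p₁ : κ1 → U1 → ℝ) (p₂ : κ2 → U2 → ℝ) (F : (κ1 → U1) → (κ2 → U2) → ℝ) :
    ∑ θ, codebookWeight p₁ p₂ (fun (_ : κ3) (_ : U3) => 1) θ * F θ.1 θ.2.1
      = ∑ c1, (∏ k, p₁ k (c1 k)) * ∑ c2, (∏ k, p₂ k (c2 k)) * F c1 c2 :=
  (sum_codebookWeight_mul fun c1 c2 _ => F c1 c2).trans (by simp)

theorem sum_mul_sum_mul_sum_rotate {C1 C2 C3 : Type*} [Fintype C1] [Fintype C2] [Fintype C3]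
    (w₁ : C1 → ℝ) (w₂ : C2 → ℝ) (w₃ : C3 → ℝ) (G : C1 → C2 → C3 → ℝ) :
    ∑ c3, w₃ c3 * ∑ c1, w₁ c1 * ∑ c2, w₂ c2 * G c1 c2 c3
      = ∑ c1, w₁ c1 * ∑ c2, w₂ c2 * ∑ c3, w₃ c3 * G c1 c2 c3 := by
  simp only [Finset.mul_sum]
  rw [Finset.sum_comm]
  refine Finset.sum_congr rfl fun c1 _ => ?_
  rw [Finset.sum_comm]
  refine Finset.sum_congr rfl fun c2 _ => Finset.sum_congr rfl fun c3 _ => ?_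
  ring

theorem injective_mk_right {A B : Type*} (b : B) : Function.Injective (fun a : A => (a, b)) :=
  fun _ _ h => (Prod.ext_iff.1 h).1

set_option maxHeartbeats 400000 in
set_option synthInstance.maxSize 1000 in
omit [Fintype X3] in
include hp hQ h₁ h₂ in
/-- Error of the relay for a given previous pair `r` and relay codeword `x3`. -/
theorem sum_relayErr_le [Nonempty ((D ⊕ E → S1) × (D ⊕ E → S2))] {γ τ₁ τ₂ τ₃ : ℝ}
    (hγ : 0 < γ) (hτ₁ : 0 < τ₁) (hτ₂ : 0 < τ₂) (hτ₃ : 0 < τ₃)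
    (r : (D ⊕ E → S1) × (D ⊕ E → S2)) (x3 : D → X3) :
    ∑ c1 : (D ⊕ E → S1) × (D ⊕ E → S1) → D → X1, (∏ k, ∏ d, pX1 (k.2 (.inl d)) (c1 k d)) *
      ∑ c2 : (D ⊕ E → S2) × (D ⊕ E → S2) → D → X2, (∏ k, ∏ d, pX2 (k.2 (.inl d)) (c2 k d)) *
        ∑ f, srcBlock (D ⊕ E) p f * relayErr (chanBlock D Q) c1 c2 (fun _ => x3)
          (relayDecoder p Q pX1 pX2 γ c1 c2 fun _ => x3) r (msg f) f.2.2.2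
      ≤ γ⁻¹ ^ τ₁ * ((∏ d, (relayLetter p Q pX1 pX2 (r.1 (.inl d)) (r.2 (.inl d)) (x3 d)).moment₁ τ₁)
            * MacEnsemble.sideMoment₁ (srcRelay p) τ₁ ^ Fintype.card E)
        + γ⁻¹ ^ τ₂ *
          ((∏ d, (relayLetter p Q pX1 pX2 (r.1 (.inl d)) (r.2 (.inl d)) (x3 d)).moment₂ τ₂)
            * MacEnsemble.sideMoment₂ (srcRelay p) τ₂ ^ Fintype.card E)
        + γ⁻¹ ^ τ₃ *
          ((∏ d, (relayLetter p Q pX1 pX2 (r.1 (.inl d)) (r.2 (.inl d)) (x3 d)).moment₁₂ τ₃)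
            * MacEnsemble.sideMoment₁₂ (srcRelay p) τ₃ ^ Fintype.card E) + 3 * γ := by
  set N : D → MacEnsemble S1 S2 X1 X2 Unit (W3 × Y3) :=
    fun d => relayLetter p Q pX1 pX2 (r.1 (.inl d)) (r.2 (.inl d)) (x3 d) with hN
  have hK : ∀ d s1 s2 x1 x2 x3 z, 0 ≤ (N d).K s1 s2 x1 x2 x3 z :=
    fun _ _ _ _ _ _ _ => mul_nonneg (srcRelay_nonneg hp.1 _ _ _) ((isPmf_chanRelay hQ _).1 _)
  have hK' := srcRelay_nonneg hp.1
  have hbm₁ := MacEnsemble.block_moment₁ (E := E) (N := N) (K' := srcRelay p)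
    (fun _ _ u => (h₁ _).1 u) (fun _ _ _ _ => zero_le_one) hK hK'
  have hbm₂ := MacEnsemble.block_moment₂ (E := E) (N := N) (K' := srcRelay p)
    (fun _ _ u => (h₂ _).1 u) (fun _ _ _ _ => zero_le_one) hK hK'
  have hbm₃ := MacEnsemble.block_moment₁₂ (E := E) (N := N) (K' := srcRelay p)
    (fun _ _ u => (h₁ _).1 u) (fun _ _ u => (h₂ _).1 u) (fun _ _ _ _ => zero_le_one) hK hK'
  have main := (MacEnsemble.block E N (srcRelay p)).sum_codebookWeight_decode_le
    (p₁ := fun k : (D ⊕ E → S1) × (D ⊕ E → S1) => fun u => ∏ d, pX1 (k.2 (.inl d)) (u d))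
    (p₂ := fun k : (D ⊕ E → S2) × (D ⊕ E → S2) => fun u => ∏ d, pX2 (k.2 (.inl d)) (u d))
    (p₃ := fun _ : (D ⊕ E → S1) × (D ⊕ E → S2) => fun _ => 1)
    (e1 := fun a1 => (a1, r.1)) (e2 := fun a2 => (a2, r.2)) (e3 := id)
    (fun k => isPmf_pi fun d => h₁ (k.2 (.inl d))) (fun k => isPmf_pi fun d => h₂ (k.2 (.inl d)))
    (fun k => ⟨fun _ => zero_le_one, by simp⟩)
    (injective_mk_right _) (injective_mk_right _) Function.injective_id (fun _ => rfl)
    (fun _ => rfl) (fun _ _ => by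
      funext u
      simp [MacEnsemble.block, hN, relayLetter])
    (fun _ _ _ _ _ _ => mul_nonneg (Finset.prod_nonneg fun _ _ => hK _ _ _ _ _ _ _)
      (Finset.prod_nonneg fun _ _ => hK' _ _ _)) hγ hτ₁ hτ₂ hτ₃
  have hmass : (MacEnsemble.block E N (srcRelay p)).mass = 1 := by
    rw [MacEnsemble.mass_eq_moment₁₂, hbm₃, MacEnsemble.sideMoment₁₂_srcRelay hp, one_pow,
      mul_one]
    exact Finset.prod_eq_one fun d _ =>
      (MacEnsemble.mass_eq_moment₁₂ _).symm.trans (relayLetter_mass hp hQ h₁ h₂ _ _ _)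
  rw [hmass, hbm₃, hbm₁, hbm₂] at main
  have unit := sum_codebookWeight_unique (κ3 := (D ⊕ E → S1) × (D ⊕ E → S2)) (U3 := D → Unit)
    (fun (k : (D ⊕ E → S1) × (D ⊕ E → S1)) (u : D → X1) => ∏ d, pX1 (k.2 (.inl d)) (u d))
    (fun (k : (D ⊕ E → S2) × (D ⊕ E → S2)) (u : D → X2) => ∏ d, pX2 (k.2 (.inl d)) (u d))
    fun c1 c2 => ∑ f, srcBlock (D ⊕ E) p f * relayErr (chanBlock D Q) c1 c2 (fun _ => x3)
          (relayDecoder p Q pX1 pX2 γ c1 c2 fun _ => x3) r (msg f) f.2.2.2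
  rw [← unit]
  refine le_of_eq_of_le (Finset.sum_congr rfl fun θ _ => congrArg _ ?_) (main.trans_eq (by ring))
  have e := sum_srcBlock_relay (I := D ⊕ E) p fun a1 a2 w3 =>
    relayErr (chanBlock D Q) θ.1 θ.2.1 (fun _ => x3)
        (relayDecoder p Q pX1 pX2 γ θ.1 θ.2.1 fun _ => x3) r (a1, a2) w3
  refine e.trans (Finset.sum_congr rfl fun a1 _ => Finset.sum_congr rfl fun a2 _ => ?_)
  have e' := sum_blockObs (D := D) (E := E) (fun i w => srcRelay p (a1 i) (a2 i) w)
    (fun d y => chanRelay Q (θ.1 (a1, r.1) d, θ.2.1 (a2, r.2) d, x3 d) y)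
    (fun z => if (MacEnsemble.block E N (srcRelay p)).decode γ (fun a1 => θ.1 (a1, r.1))
      (fun a2 => θ.2.1 (a2, r.2)) (fun _ _ _ => ()) z = (a1, a2) then (0 : ℝ) else 1)
  refine Eq.trans (Finset.sum_congr rfl fun w _ => ?_) (e'.trans ?_)
  · congr 1
    exact sum_chanBlock_relay Q (θ.1 (a1, r.1), θ.2.1 (a2, r.2), x3) fun y =>
      if relayDecoder p Q pX1 pX2 γ θ.1 θ.2.1 (fun _ => x3) r y w = (a1, a2) then (0 : ℝ) else 1
  · refine Finset.sum_congr rfl fun z _ => ?_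
    congr!

set_option maxHeartbeats 400000 in
set_option synthInstance.maxSize 1000 in
include hp hQ h₁ h₂ h₃ in
theorem sum_meanRelayErr_le [Nonempty ((D ⊕ E → S1) × (D ⊕ E → S2))] {γ τ₁ τ₂ τ₃ : ℝ}
    (hγ : 0 < γ) (hτ₁ : 0 < τ₁) (hτ₂ : 0 < τ₂) (hτ₃ : 0 < τ₃) :
    ∑ θ, blockCodebookWeight D E pX1 pX2 pX3 θ *
        meanRelayErr (srcBlock (D ⊕ E) p) (chanBlock D Q) θ.1 θ.2.1 θ.2.2
          (relayDecoder p Q pX1 pX2 γ θ.1 θ.2.1 θ.2.2)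
      ≤ blockBound (Fintype.card D) (Fintype.card E) γ τ₁ τ₂ τ₃
          (fun τ => relayAverage p pX3 fun s1 s2 x3 =>
            (relayLetter p Q pX1 pX2 s1 s2 x3).moment₁ τ)
          (fun τ => relayAverage p pX3 fun s1 s2 x3 =>
            (relayLetter p Q pX1 pX2 s1 s2 x3).moment₂ τ)
          (fun τ => relayAverage p pX3 fun s1 s2 x3 =>
            (relayLetter p Q pX1 pX2 s1 s2 x3).moment₁₂ τ)
          (MacEnsemble.sideMoment₁ (srcRelay p)) (MacEnsemble.sideMoment₂ (srcRelay p))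
          (MacEnsemble.sideMoment₁₂ (srcRelay p)) := by
  have hP := isPmf_srcBlock (I := D ⊕ E) hp
  let T : (D ⊕ E → S1) × (D ⊕ E → S2) → (D → X3) → ℝ := fun r x3 =>
    ∑ c1 : (D ⊕ E → S1) × (D ⊕ E → S1) → D → X1, (∏ k, ∏ d, pX1 (k.2 (.inl d)) (c1 k d)) *
      ∑ c2 : (D ⊕ E → S2) × (D ⊕ E → S2) → D → X2, (∏ k, ∏ d, pX2 (k.2 (.inl d)) (c2 k d)) *
        ∑ f, srcBlock (D ⊕ E) p f * relayErr (chanBlock D Q) c1 c2 (fun _ => x3)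
          (relayDecoder p Q pX1 pX2 γ c1 c2 fun _ => x3) r (msg f) f.2.2.2
  have e : ∑ θ, blockCodebookWeight D E pX1 pX2 pX3 θ *
        meanRelayErr (srcBlock (D ⊕ E) p) (chanBlock D Q) θ.1 θ.2.1 θ.2.2
          (relayDecoder p Q pX1 pX2 γ θ.1 θ.2.1 θ.2.2)
      = ∑ f', srcBlock (D ⊕ E) p f' * ∑ x3 : D → X3,
        (∏ d, pX3 (f'.1 (.inl d)) (f'.2.1 (.inl d)) (x3 d)) * T (msg f') x3 := by
    have key : ∀ f' : (D ⊕ E → S1) × (D ⊕ E → S2) × (D ⊕ E → W) × (D ⊕ E → W3), ∑ x3 : D → X3,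
        (∏ d, pX3 (f'.1 (.inl d)) (f'.2.1 (.inl d)) (x3 d)) * T (msg f') x3
        = ∑ θ, blockCodebookWeight D E pX1 pX2 pX3 θ *
          ∑ f, srcBlock (D ⊕ E) p f * relayErr (chanBlock D Q) θ.1 θ.2.1 θ.2.2
            (relayDecoder p Q pX1 pX2 γ θ.1 θ.2.1 θ.2.2) (msg f') (msg f) f.2.2.2 := by
      intro f'
      have hm := sum_pi_marginal
        (p := fun k : (D ⊕ E → S1) × (D ⊕ E → S2) =>
          fun u : D → X3 => ∏ d, pX3 (k.1 (.inl d)) (k.2 (.inl d)) (u d))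
        (fun k => isPmf_pi fun d => h₃ (k.1 (.inl d)) (k.2 (.inl d))) (msg f') (T (msg f'))
      refine hm.symm.trans ?_
      rw [blockCodebookWeight]
      refine Eq.trans ?_ (sum_codebookWeight_mul fun c1 c2 c3 =>
        ∑ f, srcBlock (D ⊕ E) p f * relayErr (chanBlock D Q) c1 c2 c3
            (relayDecoder p Q pX1 pX2 γ c1 c2 c3) (msg f') (msg f) f.2.2.2).symm
      exact sum_mul_sum_mul_sum_rotate
        (fun c1 : (D ⊕ E → S1) × (D ⊕ E → S1) → D → X1 => ∏ k, ∏ d, pX1 (k.2 (.inl d)) (c1 k d))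
        (fun c2 : (D ⊕ E → S2) × (D ⊕ E → S2) → D → X2 => ∏ k, ∏ d, pX2 (k.2 (.inl d)) (c2 k d))
        (fun c3 : (D ⊕ E → S1) × (D ⊕ E → S2) → D → X3 =>
          ∏ k, ∏ d, pX3 (k.1 (.inl d)) (k.2 (.inl d)) (c3 k d))
        (fun c1 c2 c3 => ∑ f, srcBlock (D ⊕ E) p f * relayErr (chanBlock D Q) c1 c2
          (fun _ => c3 (msg f')) (relayDecoder p Q pX1 pX2 γ c1 c2 fun _ => c3 (msg f'))
          (msg f') (msg f) f.2.2.2)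
    simp only [key]
    simp only [meanRelayErr, Finset.mul_sum]
    rw [Finset.sum_comm]
    exact Finset.sum_congr rfl fun _ _ => Finset.sum_congr rfl fun _ _ =>
      Finset.sum_congr rfl fun _ _ => by ring
  rw [e]
  refine (Finset.sum_le_sum fun f' _ => mul_le_mul_of_nonneg_left
    (Finset.sum_le_sum fun x3 _ => mul_le_mul_of_nonneg_left
      (sum_relayErr_le hp hQ h₁ h₂ hγ hτ₁ hτ₂ hτ₃ (msg f') x3)
      (Finset.prod_nonneg fun _ _ => (h₃ _ _).1 _)) (hP.1 _)).trans_eq ?_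
  have avg : ∀ (c s : ℝ) (h : S1 → S2 → X3 → ℝ), ∑ f, srcBlock (D ⊕ E) p f * ∑ x3 : D → X3,
      (∏ d, pX3 (f.1 (.inl d)) (f.2.1 (.inl d)) (x3 d)) *
        (c * ((∏ d, h (f.1 (.inl d)) (f.2.1 (.inl d)) (x3 d)) * s))
      = c * (relayAverage p pX3 h ^ Fintype.card D * s) := by
    intro c s h
    rw [← sum_srcBlock_mul_prod_relayAverage (E := E) hp h]
    simp only [Finset.mul_sum, Finset.sum_mul]
    exact Finset.sum_congr rfl fun _ _ => Finset.sum_congr rfl fun _ _ => by ring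
  have tot : ∑ f, srcBlock (D ⊕ E) p f * ∑ x3 : D → X3,
      (∏ d, pX3 (f.1 (.inl d)) (f.2.1 (.inl d)) (x3 d)) * (3 * γ) = 3 * γ := by
    simp only [← Finset.sum_mul,
      (isPmf_pi fun d : D => h₃ _ _).2, one_mul, hP.2]
  rw [blockBound, ← avg, ← avg, ← avg]
  refine Eq.trans ?_ (congrArg (_ + ·) tot)
  simp only [msg, mul_add, Finset.sum_add_distrib]

end RelayBlocks

section Entropy

/-- Weight that the push-forward of `μ` under `X` gives to a point. -/
def pushSum {Ω α : Type*} [Fintype Ω] [DecidableEq α] (μ : Ω → ℝ) (X : Ω → α) (a : α) : ℝ :=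
  ∑ ω, if X ω = a then μ ω else 0

theorem pushSum_equiv {Ω α R : Type*} [Fintype Ω] [DecidableEq α] [Fintype R] (μ : Ω → ℝ)
    (X : Ω → α) (e : α × R ≃ Ω) (he : ∀ p, X (e p) = p.1) (a : α) :
    pushSum μ X a = ∑ r, μ (e (a, r)) := by
  classical
  rw [pushSum, Finset.sum_ite, Finset.sum_const_zero, add_zero]
  symm
  refine Finset.sum_bij (fun r _ => e (a, r)) (fun r _ => by simp [he])
    (fun r _ r' _ h => (Prod.ext_iff.1 (e.injective h)).2) (fun ω hω => ?_) fun _ _ => rfl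
  refine ⟨(e.symm ω).2, Finset.mem_univ _, ?_⟩
  have h1 := he (e.symm ω)
  rw [e.apply_symm_apply, (Finset.mem_filter.1 hω).2] at h1
  rw [h1, Prod.mk.eta, e.apply_symm_apply]

theorem entropyOf_pushSum {Ω α β : Type*} [Fintype Ω] [Fintype α] [Fintype β] [DecidableEq α]
    [DecidableEq β] (μ : Ω → ℝ) (X : Ω → α) (g : α → β) :
    entropyOf μ (fun ω => g (X ω)) = entropyOf (pushSum μ X) g := by
  unfold entropyOf
  refine Finset.sum_congr rfl fun b _ => congrArg _ ?_
  have : ∀ a, (if g a = b then pushSum μ X a else 0)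
      = ∑ ω, if X ω = a then (if g (X ω) = b then μ ω else 0) else 0 := by
    intro a
    split_ifs with h
    · exact Finset.sum_congr rfl fun ω _ => by
        split_ifs with h1 h2 <;> simp_all
    · symm
      exact Finset.sum_eq_zero fun ω _ => by split_ifs <;> simp_all
  simp only [this]
  rw [Finset.sum_comm]
  exact Finset.sum_congr rfl fun ω _ => by simp

theorem condEntropyOf_eq {Ω α β : Type*} [Fintype Ω] [Fintype α] [Fintype β] [DecidableEq α]
    [DecidableEq β] {μ : Ω → ℝ} {X : Ω → α} {Y : Ω → β} (A : α → β → ℝ)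
    (h : ∀ a b, pushSum μ (fun ω => (X ω, Y ω)) (a, b) = A a b) :
    condEntropyOf μ X Y
      = ∑ a, ∑ b, A a b * (Real.log (∑ a', A a' b) - Real.log (A a b)) := by
  have h2 := entropyOf_pushSum μ (fun ω => (X ω, Y ω)) Prod.snd
  have h1 := entropyOf_pushSum μ (fun ω => (X ω, Y ω)) id
  simp only [id] at h1
  rw [condEntropyOf, h1, h2, entropyOf, entropyOf]
  simp only [Fintype.sum_prod_type, h, id, Prod.mk.injEq, Real.negMulLog]
  have e1 : ∀ a b, (∑ x, ∑ x', if x = a ∧ x' = b then A x x' else 0) = A a b := fun a b => by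
    simp [ite_and]
  have e2 : ∀ b, (∑ x, ∑ x', if x' = b then A x x' else 0) = ∑ x, A x b := fun b => by simp
  simp only [e1, e2]
  simp only [mul_sub, Finset.sum_sub_distrib, neg_mul, Finset.sum_neg_distrib, Finset.sum_mul]
  rw [Finset.sum_comm (f := fun a b => A a b * Real.log (∑ a', A a' b))]
  ring

theorem condMutualInfoOf_eq {Ω α β γ : Type*} [Fintype Ω] [Fintype α] [Fintype β] [Fintype γ]
    [DecidableEq α] [DecidableEq β] [DecidableEq γ] {μ : Ω → ℝ} {X : Ω → α} {Y : Ω → β}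
    {Z : Ω → γ} (R : α → γ → ℝ) (V : α → γ → β → ℝ) (hV : ∀ a c, ∑ b, V a c b = 1)
    (h : ∀ a b c, pushSum μ (fun ω => (X ω, Y ω, Z ω)) (a, b, c) = R a c * V a c b) :
    condMutualInfoOf μ X Y Z = ∑ a, ∑ b, ∑ c, R a c * V a c b *
      (Real.log (V a c b) + Real.log (∑ a', R a' c) - Real.log (∑ a', R a' c * V a' c b)) := by
  have h0 := entropyOf_pushSum μ (fun ω => (X ω, Y ω, Z ω)) id
  have h1 := entropyOf_pushSum μ (fun ω => (X ω, Y ω, Z ω)) fun t => (t.1, t.2.2)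
  have h2 := entropyOf_pushSum μ (fun ω => (X ω, Y ω, Z ω)) fun t => t.2
  have h3 := entropyOf_pushSum μ (fun ω => (X ω, Y ω, Z ω)) fun t => t.2.2
  simp only [id] at h0
  rw [condMutualInfoOf, h0, h1, h2, h3]
  simp only [entropyOf, Fintype.sum_prod_type, h, id, Prod.mk.injEq, Real.negMulLog]
  have e0 : ∀ a b c, (∑ x, ∑ y, ∑ z, if x = a ∧ y = b ∧ z = c then R x z * V x z y else 0)
      = R a c * V a c b := fun a b c => by simp [ite_and]
  have e1 : ∀ a c, (∑ x, ∑ y, ∑ z, if x = a ∧ z = c then R x z * V x z y else 0)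
      = R a c := fun a c => by simp [ite_and, ← Finset.mul_sum, hV]
  have e2 : ∀ b c, (∑ x, ∑ y, ∑ z, if y = b ∧ z = c then R x z * V x z y else 0)
      = ∑ x, R x c * V x c b := fun b c => by simp [ite_and]
  have e3 : ∀ c, (∑ x, ∑ y, ∑ z, if z = c then R x z * V x z y else 0)
      = ∑ x, R x c := fun c => by simp [← Finset.mul_sum, hV]
  simp only [e0, e1, e2, e3]
  have l : ∀ a b c, R a c * V a c b * Real.log (R a c * V a c b)
      = R a c * V a c b * Real.log (R a c) + R a c * V a c b * Real.log (V a c b) := by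
    intro a b c
    rcases eq_or_ne (R a c) 0 with h | h
    · simp [h]
    rcases eq_or_ne (V a c b) 0 with h' | h'
    · simp [h']
    rw [Real.log_mul h h', mul_add]
  simp only [neg_mul, Finset.sum_neg_distrib, l, mul_add, mul_sub, Finset.sum_add_distrib,
    Finset.sum_sub_distrib]
  have t1 : ∑ a, ∑ c, R a c * Real.log (R a c)
      = ∑ a, ∑ b, ∑ c, R a c * V a c b * Real.log (R a c) := by
    refine Finset.sum_congr rfl fun a _ => ?_
    rw [Finset.sum_comm]
    exact Finset.sum_congr rfl fun c _ => by rw [← Finset.sum_mul, ← Finset.mul_sum, hV, mul_one]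
  have t2 : ∑ b, ∑ c, (∑ a, R a c * V a c b) * Real.log (∑ a, R a c * V a c b)
      = ∑ a, ∑ b, ∑ c, R a c * V a c b * Real.log (∑ a', R a' c * V a' c b) := by
    rw [Finset.sum_comm (s := (Finset.univ : Finset α))]
    refine Finset.sum_congr rfl fun b _ => ?_
    rw [Finset.sum_comm (s := (Finset.univ : Finset α))]
    exact Finset.sum_congr rfl fun c _ => by rw [Finset.sum_mul]
  have t3 : ∑ c, (∑ a, R a c) * Real.log (∑ a, R a c)
      = ∑ a, ∑ b, ∑ c, R a c * V a c b * Real.log (∑ a', R a' c) := by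
    simp only [Finset.sum_comm (s := (Finset.univ : Finset β)), ← Finset.sum_mul,
      ← Finset.mul_sum, hV, mul_one]
    rw [Finset.sum_comm]
    simp only [← Finset.sum_mul]
  rw [t1, t2, t3]
  ring

end Entropy

section LogRatio

variable {A T K X Y : Type*} [Fintype A] [Fintype T] [Fintype K] [Fintype X] [Fintype Y]
  {P : A → T → ℝ} {r : T → K → ℝ} {q : A → T → X → ℝ} {V : X → K → Y → ℝ}

/-- The expected log-likelihood ratio splits into a source part and a channel part. -/
theorem sum_log_ratio_eq (hP : ∀ a t, 0 ≤ P a t) (hr : ∀ t, IsPmf (r t))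
    (hq : ∀ a t, IsPmf (q a t)) (hV : ∀ x k, IsPmf (V x k)) :
    ∑ t, ∑ k, ∑ y, r t k * ∑ a, ∑ x, q a t x * (P a t * V x k y) *
        Real.log ((∑ a', ∑ x', q a' t x' * (P a' t * V x' k y)) / (P a t * V x k y))
      = ∑ a, ∑ t, P a t * (Real.log (∑ a', P a' t) - Real.log (P a t))
        - ∑ x, ∑ y, ∑ t, ∑ k, (∑ a, P a t * q a t x * r t k) * V x k y *
          (Real.log (V x k y) + Real.log (∑ x', ∑ a, P a t * q a t x' * r t k)
            - Real.log (∑ x', (∑ a, P a t * q a t x' * r t k) * V x' k y)) := by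
  set J : T → K → Y → ℝ := fun t k y => ∑ a', ∑ x', q a' t x' * (P a' t * V x' k y) with hJ
  set B : T → ℝ := fun t => ∑ a', P a' t with hB
  have e1 : ∀ t k, ∑ x', ∑ a, P a t * q a t x' * r t k = B t * r t k := by
    intro t k
    rw [Finset.sum_comm]
    simp only [← Finset.sum_mul, ← Finset.mul_sum, (hq _ _).2, mul_one, hB]
  have e2 : ∀ t k y, ∑ x', (∑ a, P a t * q a t x' * r t k) * V x' k y = J t k y * r t k := by
    intro t k y
    simp only [hJ, Finset.sum_mul]
    rw [Finset.sum_comm]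
    exact Finset.sum_congr rfl fun a _ => Finset.sum_congr rfl fun x _ => by ring
  simp only [e1, e2]
  have e3 : ∑ a, ∑ t, P a t * (Real.log (B t) - Real.log (P a t))
      = ∑ a, ∑ t, ∑ k, ∑ x, ∑ y, P a t * q a t x * r t k * V x k y *
          (Real.log (B t) - Real.log (P a t)) := by
    refine Finset.sum_congr rfl fun a _ => Finset.sum_congr rfl fun t _ => ?_
    simp only [← Finset.sum_mul, ← Finset.mul_sum, (hV _ _).2, mul_one, (hr _).2, (hq _ _).2]
  have e4 : ∑ x, ∑ y, ∑ t, ∑ k, (∑ a, P a t * q a t x * r t k) * V x k y *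
          (Real.log (V x k y) + Real.log (B t * r t k) - Real.log (J t k y * r t k))
      = ∑ a, ∑ t, ∑ k, ∑ x, ∑ y, P a t * q a t x * r t k * V x k y *
          (Real.log (V x k y) + Real.log (B t * r t k) - Real.log (J t k y * r t k)) := by
    simp only [Finset.sum_mul, ← Fintype.sum_prod_type']
    exact Fintype.sum_equiv
      { toFun := fun v => (v.2.2.2.2, v.2.2.1, v.2.2.2.1, v.1, v.2.1)
        invFun := fun v => (v.2.2.2.1, v.2.2.2.2, v.2.1, v.2.2.1, v.1)
        left_inv := fun _ => rfl
        right_inv := fun _ => rfl } _ _ fun x => rfl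
  rw [e3, e4]
  simp only [Finset.mul_sum, ← Fintype.sum_prod_type', ← Finset.sum_sub_distrib]
  refine Fintype.sum_equiv
    { toFun := fun v => (v.2.2.2.1, v.1, v.2.1, v.2.2.2.2, v.2.2.1)
      invFun := fun v => (v.2.1, v.2.2.1, v.2.2.2.2, v.1, v.2.2.2.1)
      left_inv := fun _ => rfl
      right_inv := fun _ => rfl } _ _ fun v => ?_
  obtain ⟨t, k, y, a, x⟩ := v
  simp only [Equiv.coe_fn_mk]
  rcases eq_or_ne (P a t) 0 with h1 | h1
  · simp [h1]
  rcases eq_or_ne (q a t x) 0 with h2 | h2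
  · simp [h2]
  rcases eq_or_ne (r t k) 0 with h3 | h3
  · simp [h3]
  rcases eq_or_ne (V x k y) 0 with h4 | h4
  · simp [h4]
  have n1 := (hP a t).lt_of_ne' h1
  have n2 := ((hq a t).1 x).lt_of_ne' h2
  have n4 := ((hV x k).1 y).lt_of_ne' h4
  have hBpos : 0 < B t := n1.trans_le (Finset.single_le_sum (f := fun a => P a t)
    (fun _ _ => hP _ _) (Finset.mem_univ a))
  have nn : ∀ a' x', 0 ≤ q a' t x' * (P a' t * V x' k y) := fun a' x' =>
    mul_nonneg ((hq _ _).1 _) (mul_nonneg (hP _ _) ((hV _ _).1 _))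
  have hJpos : 0 < J t k y := (by positivity : 0 < q a t x * (P a t * V x k y)).trans_le
    ((Finset.single_le_sum (f := fun x' => q a t x' * (P a t * V x' k y)) (fun _ _ => nn _ _)
      (Finset.mem_univ x)).trans (Finset.single_le_sum
        (f := fun a' => ∑ x', q a' t x' * (P a' t * V x' k y))
        (fun _ _ => Finset.sum_nonneg fun _ _ => nn _ _) (Finset.mem_univ a)))
  have hJ' : ∑ x : A × X, q x.1 t x.2 * (P x.1 t * V x.2 k y) = J t k y := Fintype.sum_prod_type _
  rw [hJ', Real.log_div hJpos.ne' (by positivity), Real.log_mul h1 h4, Real.log_mul hBpos.ne' h3,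
    Real.log_mul hJpos.ne' h3]
  ring

/-- The case in which the codewords do not depend on the source letters. -/
theorem sum_log_ratio_eq_of_indep (hP : ∀ a t, 0 ≤ P a t) (hP1 : ∑ a, ∑ t, P a t = 1)
    {r : K → ℝ} (hr : IsPmf r) {q : X → ℝ} (hq : IsPmf q) (hV : ∀ x k, IsPmf (V x k)) :
    ∑ t, ∑ k, ∑ y, r k * ∑ a, ∑ x, q x * (P a t * V x k y) *
        Real.log ((∑ a', ∑ x', q x' * (P a' t * V x' k y)) / (P a t * V x k y))
      = ∑ a, ∑ t, P a t * (Real.log (∑ a', P a' t) - Real.log (P a t))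
        - ∑ x, ∑ y, ∑ k, r k * q x * V x k y *
          (Real.log (V x k y) - Real.log (∑ x', q x' * V x' k y)) := by
  rw [sum_log_ratio_eq hP (fun _ => hr) (fun _ _ => hq) hV]
  congr 1
  refine Finset.sum_congr rfl fun x _ => Finset.sum_congr rfl fun y _ => ?_
  rw [Finset.sum_comm]
  refine Finset.sum_congr rfl fun k _ => ?_
  have e1 : ∀ t x, ∑ a, P a t * q x * r k = (∑ a, P a t) * q x * r k := by
    intro t x; simp only [Finset.sum_mul]
  have e2 : ∀ t, (∑ a, P a t * q x * r k) * V x k y *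
      (Real.log (V x k y) + Real.log (∑ x', ∑ a, P a t * q x' * r k)
        - Real.log (∑ x', (∑ a, P a t * q x' * r k) * V x' k y))
      = (∑ a, P a t) * (r k * q x * V x k y *
          (Real.log (V x k y) - Real.log (∑ x', q x' * V x' k y))) := by
    intro t
    simp only [e1]
    have e3 : ∑ x', (∑ a, P a t) * q x' * r k = (∑ a, P a t) * r k := by
      rw [← Finset.sum_mul, ← Finset.mul_sum, hq.2, mul_one]
    have e4 : ∑ x', (∑ a, P a t) * q x' * r k * V x' k y
        = (∑ a, P a t) * r k * ∑ x', q x' * V x' k y := by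
      rw [Finset.mul_sum]
      exact Finset.sum_congr rfl fun _ _ => by ring
    rw [e3, e4]
    rcases eq_or_ne (∑ a, P a t) 0 with h1 | h1
    · simp [h1]
    rcases eq_or_ne (q x) 0 with h2 | h2
    · simp [h2]
    rcases eq_or_ne (r k) 0 with h3 | h3
    · simp [h3]
    rcases eq_or_ne (V x k y) 0 with h4 | h4
    · simp [h4]
    have n2 := (hq.1 x).lt_of_ne' h2
    have n4 := ((hV x k).1 y).lt_of_ne' h4
    have hJpos : 0 < ∑ x', q x' * V x' k y := (by positivity : 0 < q x * V x k y).trans_le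
      (Finset.single_le_sum (f := fun x' => q x' * V x' k y)
        (fun _ _ => mul_nonneg (hq.1 _) ((hV _ _).1 _)) (Finset.mem_univ x))
    rw [Real.log_mul (mul_ne_zero h1 h3) hJpos.ne']
    ring
  rw [Finset.sum_congr rfl fun t _ => e2 t, ← Finset.sum_mul]
  rw [Finset.sum_comm] at hP1
  rw [hP1, one_mul]

end LogRatio

section Derivatives

variable {S1 S2 W W3 X1 X2 X3 Y Y3 : Type*} [Fintype S1] [Fintype S2] [Fintype W] [Fintype W3]
  [Fintype X1] [Fintype X2] [Fintype X3] [Fintype Y] [Fintype Y3]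
  [DecidableEq S1] [DecidableEq S2] [DecidableEq W] [DecidableEq W3]
  [DecidableEq X1] [DecidableEq X2] [DecidableEq X3] [DecidableEq Y] [DecidableEq Y3]
  {p : S1 × S2 × W × W3 → ℝ} (hp : IsPmf p) {Q : X1 × X2 × X3 → Y × Y3 → ℝ}
  (hQ : ∀ x, IsPmf (Q x)) {pX1 : S1 → X1 → ℝ} {pX2 : S2 → X2 → ℝ} {pX3 : S1 → S2 → X3 → ℝ}
  (h₁ : ∀ s, IsPmf (pX1 s)) (h₂ : ∀ s, IsPmf (pX2 s)) (h₃ : ∀ s s', IsPmf (pX3 s s'))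

omit [Fintype W] [Fintype W3] [Fintype X1] [Fintype X2] [Fintype X3]
  [DecidableEq S1] [DecidableEq S2] [DecidableEq W] [DecidableEq W3]
  [DecidableEq X1] [DecidableEq X2] [DecidableEq X3] [DecidableEq Y] [DecidableEq Y3] in
include hQ in
theorem sum_sum_channel (x : X1 × X2 × X3) : ∑ y3, ∑ y, Q x (y, y3) = 1 := by
  rw [← (hQ x).2, Fintype.sum_prod_type_right]

theorem IsPmf.prod_mul {α β : Type*} [Fintype α] [Fintype β] {u : α → ℝ} {v : β → ℝ}
    (hu : IsPmf u) (hv : IsPmf v) : IsPmf fun x : α × β => u x.1 * v x.2 :=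
  ⟨fun x => mul_nonneg (hu.1 _) (hv.1 _), by
    rw [Fintype.sum_prod_type]
    simp only [← Finset.mul_sum, hv.2, mul_one, hu.2]⟩

omit [DecidableEq W3] [DecidableEq Y3] in
include hp hQ h₁ h₂ h₃ in
theorem hasDerivAt_destLetter_moment₁ :
    HasDerivAt (destLetter p Q pX1 pX2 pX3).moment₁
      (condEntropyOf (thm2Joint p Q pX1 pX2 pX3) (fun (s1,_,_,_,_,_,_,_,_) => s1)
          (fun (_,s2,_,w,_,_,_,_,_) => (s2, w))
        - condMutualInfoOf (thm2Joint p Q pX1 pX2 pX3) (fun (_,_,_,_,x1,_,x3,_,_) => (x1, x3))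
            (fun (_,_,_,_,_,_,_,_,y) => y) (fun (_,s2,_,w,_,x2,_,_,_) => (s2, x2, w))) 0 := by
  have hE := condEntropyOf_eq (μ := thm2Joint p Q pX1 pX2 pX3)
    (X := fun (s1,_,_,_,_,_,_,_,_) => s1) (Y := fun (_,s2,_,w,_,_,_,_,_) => (s2, w))
    (fun s1 t => srcDest p s1 t.1 t.2) fun s1 t => by
      rw [pushSum_equiv (R := W3 × X1 × X2 × X3 × Y3 × Y) _ _
        { toFun := fun u => (u.1.1, u.1.2.1, u.2.1, u.1.2.2, u.2.2)
          invFun := fun v => ((v.1, v.2.1, v.2.2.2.1), v.2.2.1, v.2.2.2.2)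
          left_inv := fun _ => rfl
          right_inv := fun _ => rfl } fun _ => rfl]
      simp only [Fintype.sum_prod_type, Equiv.coe_fn_mk, thm2Joint, ← Finset.mul_sum,
        sum_sum_channel hQ, (h₁ _).2, (h₂ _).2, (h₃ _ _).2, mul_one, srcDest]
  have hI := condMutualInfoOf_eq (μ := thm2Joint p Q pX1 pX2 pX3)
    (X := fun (_,_,_,_,x1,_,x3,_,_) => (x1, x3)) (Y := fun (_,_,_,_,_,_,_,_,y) => y)
    (Z := fun (_,s2,_,w,_,x2,_,_,_) => (s2, x2, w))
    (fun x c => ∑ s1, srcDest p s1 c.1 c.2.2 * (pX1 s1 x.1 * pX3 s1 c.1 x.2) * pX2 c.1 c.2.1)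
    (fun x c => chanDest Q (x.1, c.2.1, x.2)) (fun x c => (isPmf_chanDest hQ _).2)
    fun x y c => by
      rw [pushSum_equiv (R := S1 × W3 × Y3) _ _
        { toFun := fun u => (u.2.1, u.1.2.2.1, u.2.2.1, u.1.2.2.2.2, u.1.1.1, u.1.2.2.2.1, u.1.1.2,
            u.2.2.2, u.1.2.1)
          invFun := fun v => (((v.2.2.2.2.1, v.2.2.2.2.2.2.1), v.2.2.2.2.2.2.2.2, v.2.1,
            v.2.2.2.2.2.1, v.2.2.2.1), v.1, v.2.2.1, v.2.2.2.2.2.2.2.1)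
          left_inv := fun _ => rfl
          right_inv := fun _ => rfl } fun _ => rfl]
      simp only [Fintype.sum_prod_type, Equiv.coe_fn_mk, thm2Joint, ← Finset.mul_sum,
        ← Finset.sum_mul, srcDest, chanDest]
      simp only [Finset.sum_mul]
      exact Finset.sum_congr rfl fun s1 _ => Finset.sum_congr rfl fun w3 _ => by ring
  rw [hE, hI]
  have hS := sum_log_ratio_eq (P := fun s1 (t : S2 × W) => srcDest p s1 t.1 t.2)
    (r := fun t => pX2 t.1) (q := fun s1 t (x : X1 × X3) => pX1 s1 x.1 * pX3 s1 t.1 x.2)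
    (V := fun x k => chanDest Q (x.1, k, x.2)) (fun s1 t => srcDest_nonneg hp.1 _ _ _)
    (fun t => h₂ _) (fun s1 t => (h₁ _).prod_mul (h₃ _ _)) (fun x k => isPmf_chanDest hQ _)
  have hD := hasDerivAt_ratioMoment
    (c := fun g : S2 × X2 × W × Y => pX2 g.1 g.2.1)
    (q := fun (v : S1 × X1 × X3) g => pX1 v.1 v.2.1 * pX3 v.1 g.1 v.2.2)
    (K := fun v g => srcDest p v.1 g.1 g.2.2.1 * chanDest Q (v.2.1, g.2.1, v.2.2) g.2.2.2)
    (fun v g => mul_nonneg ((h₁ _).1 _) ((h₃ _ _).1 _))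
    (fun v g => mul_nonneg (srcDest_nonneg hp.1 _ _ _) ((isPmf_chanDest hQ _).1 _))
  refine hD.congr_deriv ?_
  refine Eq.trans ?_ (hS.trans ?_)
  · simp only [Fintype.sum_prod_type]
    exact Finset.sum_congr rfl fun s2 _ => Finset.sum_comm
  · congr 1
    simp only [Fintype.sum_prod_type]
    refine Finset.sum_congr rfl fun x1 _ => Finset.sum_congr rfl fun x3 _ =>
      Finset.sum_congr rfl fun y _ => Finset.sum_congr rfl fun s2 _ => Finset.sum_comm

omit [DecidableEq W3] [DecidableEq Y3] in
include hp hQ h₁ h₂ h₃ in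
theorem hasDerivAt_destLetter_moment₁₂ :
    HasDerivAt (destLetter p Q pX1 pX2 pX3).moment₁₂
      (condEntropyOf (thm2Joint p Q pX1 pX2 pX3) (fun (s1,s2,_,_,_,_,_,_,_) => (s1, s2))
          (fun (_,_,_,w,_,_,_,_,_) => w)
        - condMutualInfoOf (thm2Joint p Q pX1 pX2 pX3) (fun (_,_,_,_,x1,x2,x3,_,_) => (x1, x2, x3))
            (fun (_,_,_,_,_,_,_,_,y) => y) (fun (_,_,_,w,_,_,_,_,_) => w)) 0 := by
  have hE := condEntropyOf_eq (μ := thm2Joint p Q pX1 pX2 pX3)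
    (X := fun (s1,s2,_,_,_,_,_,_,_) => (s1, s2)) (Y := fun (_,_,_,w,_,_,_,_,_) => w)
    (fun s w => srcDest p s.1 s.2 w) fun s w => by
      rw [pushSum_equiv (R := W3 × X1 × X2 × X3 × Y3 × Y) _ _
        { toFun := fun u => (u.1.1.1, u.1.1.2, u.2.1, u.1.2, u.2.2)
          invFun := fun v => (((v.1, v.2.1), v.2.2.2.1), v.2.2.1, v.2.2.2.2)
          left_inv := fun _ => rfl
          right_inv := fun _ => rfl } fun _ => rfl]
      simp only [Fintype.sum_prod_type, Equiv.coe_fn_mk, thm2Joint, ← Finset.mul_sum,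
        sum_sum_channel hQ, (h₁ _).2, (h₂ _).2, (h₃ _ _).2, mul_one, srcDest]
  have hI := condMutualInfoOf_eq (μ := thm2Joint p Q pX1 pX2 pX3)
    (X := fun (_,_,_,_,x1,x2,x3,_,_) => (x1, x2, x3)) (Y := fun (_,_,_,_,_,_,_,_,y) => y)
    (Z := fun (_,_,_,w,_,_,_,_,_) => w)
    (fun x w => ∑ s : S1 × S2, srcDest p s.1 s.2 w *
      (pX1 s.1 x.1 * (pX2 s.2 x.2.1 * pX3 s.1 s.2 x.2.2)) * 1)
    (fun x _ => chanDest Q x) (fun x _ => (isPmf_chanDest hQ _).2)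
    fun x y w => by
      rw [pushSum_equiv (R := S1 × S2 × W3 × Y3) _ _
        { toFun := fun u => (u.2.1, u.2.2.1, u.2.2.2.1, u.1.2.2, u.1.1.1, u.1.1.2.1, u.1.1.2.2,
            u.2.2.2.2, u.1.2.1)
          invFun := fun v => (((v.2.2.2.2.1, v.2.2.2.2.2.1, v.2.2.2.2.2.2.1),
            v.2.2.2.2.2.2.2.2, v.2.2.2.1), v.1, v.2.1, v.2.2.1, v.2.2.2.2.2.2.2.1)
          left_inv := fun _ => rfl
          right_inv := fun _ => rfl } fun _ => rfl]
      simp only [Fintype.sum_prod_type, Equiv.coe_fn_mk, thm2Joint, ← Finset.mul_sum,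
        srcDest, chanDest]
      simp only [Finset.sum_mul]
      exact Finset.sum_congr rfl fun s1 _ => Finset.sum_congr rfl fun s2 _ =>
        Finset.sum_congr rfl fun w3 _ => by ring
  rw [hE, hI]
  have hS := sum_log_ratio_eq (P := fun (s : S1 × S2) w => srcDest p s.1 s.2 w)
    (r := fun _ (_ : Unit) => 1)
    (q := fun s _ (x : X1 × X2 × X3) => pX1 s.1 x.1 * (pX2 s.2 x.2.1 * pX3 s.1 s.2 x.2.2))
    (V := fun x _ => chanDest Q x) (fun s w => srcDest_nonneg hp.1 _ _ _)
    (fun _ => ⟨fun _ => zero_le_one, by simp⟩)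
    (fun s _ => (h₁ _).prod_mul ((h₂ _).prod_mul (h₃ _ _))) (fun x _ => isPmf_chanDest hQ _)
  have hD := hasDerivAt_ratioMoment (c := fun _ : W × Y => 1)
    (q := fun (v : S1 × S2 × X1 × X2 × X3) _ =>
      pX1 v.1 v.2.2.1 * pX2 v.2.1 v.2.2.2.1 * pX3 v.1 v.2.1 v.2.2.2.2)
    (K := fun v g => srcDest p v.1 v.2.1 g.1 * chanDest Q v.2.2 g.2)
    (fun v g => mul_nonneg (mul_nonneg ((h₁ _).1 _) ((h₂ _).1 _)) ((h₃ _ _).1 _))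
    (fun v g => mul_nonneg (srcDest_nonneg hp.1 _ _ _) ((isPmf_chanDest hQ _).1 _))
  refine hD.congr_deriv ?_
  refine Eq.trans ?_ (hS.trans ?_)
  · simp only [Fintype.sum_prod_type, Fintype.sum_unique, mul_assoc]
  · congr 1
    simp only [Fintype.sum_prod_type, Fintype.sum_unique]

end Derivatives

theorem condMutualInfoOf_eq_of_channel {Ω α β γ : Type*} [Fintype Ω] [Fintype α] [Fintype β]
    [Fintype γ] [DecidableEq α] [DecidableEq β] [DecidableEq γ] {μ : Ω → ℝ} {X : Ω → α}
    {Y : Ω → β} {Z : Ω → γ} (q : α → γ → ℝ) (R : γ → ℝ) (V : α → γ → β → ℝ)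
    (hq : ∀ c, IsPmf fun a => q a c) (hV : ∀ a c, IsPmf (V a c))
    (h : ∀ a b c, pushSum μ (fun ω => (X ω, Y ω, Z ω)) (a, b, c) = q a c * R c * V a c b) :
    condMutualInfoOf μ X Y Z = ∑ c, R c * ∑ a, ∑ b, q a c * V a c b *
      (Real.log (V a c b) - Real.log (∑ a', q a' c * V a' c b)) := by
  rw [condMutualInfoOf_eq (fun a c => q a c * R c) V (fun a c => (hV a c).2) h]
  have hl : ∀ a b c, q a c * R c * V a c b * (Real.log (V a c b) + Real.log (∑ a', q a' c * R c)
      - Real.log (∑ a', q a' c * R c * V a' c b))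
      = R c * (q a c * V a c b *
        (Real.log (V a c b) - Real.log (∑ a', q a' c * V a' c b))) := by
    intro a b c
    have e1 : ∑ a', q a' c * R c = R c := by rw [← Finset.sum_mul, (hq c).2, one_mul]
    have e2 : ∑ a', q a' c * R c * V a' c b = R c * ∑ a', q a' c * V a' c b := by
      rw [Finset.mul_sum]
      exact Finset.sum_congr rfl fun _ _ => by ring
    rw [e1, e2]
    rcases eq_or_ne (q a c) 0 with h2 | h2
    · simp [h2]
    rcases eq_or_ne (R c) 0 with h3 | h3
    · simp [h3]
    rcases eq_or_ne (V a c b) 0 with h4 | h4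
    · simp [h4]
    have n2 := ((hq c).1 a).lt_of_ne' h2
    have n4 := ((hV a c).1 b).lt_of_ne' h4
    have hJ : 0 < ∑ a', q a' c * V a' c b := (mul_pos n2 n4).trans_le
      (Finset.single_le_sum (f := fun a' => q a' c * V a' c b)
        (fun _ _ => mul_nonneg ((hq _).1 _) ((hV _ _).1 _)) (Finset.mem_univ a))
    rw [Real.log_mul h3 hJ.ne']
    ring
  simp only [hl, Finset.mul_sum, ← Fintype.sum_prod_type']
  exact Fintype.sum_equiv
    { toFun := fun v => (v.2.2, v.1, v.2.1)
      invFun := fun v => (v.2.1, v.2.2, v.1)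
      left_inv := fun _ => rfl
      right_inv := fun _ => rfl } _ _ fun x => rfl

section RelayDerivatives

variable {S1 S2 W W3 X1 X2 X3 Y Y3 : Type*} [Fintype S1] [Fintype S2] [Fintype W] [Fintype W3]
  [Fintype X1] [Fintype X2] [Fintype X3] [Fintype Y] [Fintype Y3]
  [DecidableEq S1] [DecidableEq S2] [DecidableEq W] [DecidableEq W3]
  [DecidableEq X1] [DecidableEq X2] [DecidableEq X3] [DecidableEq Y] [DecidableEq Y3]
  {p : S1 × S2 × W × W3 → ℝ} (hp : IsPmf p) {Q : X1 × X2 × X3 → Y × Y3 → ℝ}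
  (hQ : ∀ x, IsPmf (Q x)) {pX1 : S1 → X1 → ℝ} {pX2 : S2 → X2 → ℝ} {pX3 : S1 → S2 → X3 → ℝ}
  (h₁ : ∀ s, IsPmf (pX1 s)) (h₂ : ∀ s, IsPmf (pX2 s)) (h₃ : ∀ s s', IsPmf (pX3 s s'))

omit [Fintype X1] [Fintype X2] [Fintype Y] [Fintype Y3]
  [DecidableEq S1] [DecidableEq S2] [DecidableEq W] [DecidableEq W3]
  [DecidableEq X1] [DecidableEq X2] [DecidableEq X3] [DecidableEq Y] [DecidableEq Y3] in
theorem HasDerivAt.relayAverage {F : S1 → S2 → X3 → ℝ → ℝ} {F' : S1 → S2 → X3 → ℝ} {t : ℝ}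
    (h : ∀ s1 s2 x3, HasDerivAt (F s1 s2 x3) (F' s1 s2 x3) t) :
    HasDerivAt (fun τ => relayAverage p pX3 fun s1 s2 x3 => F s1 s2 x3 τ)
      (relayAverage p pX3 F') t := by
  unfold _root_.relayAverage
  exact HasDerivAt.fun_sum fun f _ => HasDerivAt.const_mul _ <|
    HasDerivAt.fun_sum fun x3 _ => HasDerivAt.const_mul _ (h _ _ _)

omit [Fintype X1] [Fintype X2] [Fintype Y] [Fintype Y3]
  [DecidableEq S1] [DecidableEq S2] [DecidableEq W] [DecidableEq W3]
  [DecidableEq X1] [DecidableEq X2] [DecidableEq X3] [DecidableEq Y] [DecidableEq Y3] in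
include hp h₃ in
theorem relayAverage_const_sub (C : ℝ) (h : S1 → S2 → X3 → ℝ) :
    (relayAverage p pX3 fun s1 s2 x3 => C - h s1 s2 x3) = C - relayAverage p pX3 h := by
  simp only [relayAverage, mul_sub, Finset.sum_sub_distrib, ← Finset.sum_mul, (h₃ _ _).2, hp.2,
    one_mul]

omit [DecidableEq W] [DecidableEq Y] in
include hp hQ h₁ h₂ h₃ in
theorem hasDerivAt_relayLetter_moment₁ :
    HasDerivAt (fun τ => relayAverage p pX3 fun s1 s2 x3 =>
        (relayLetter p Q pX1 pX2 s1 s2 x3).moment₁ τ)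
      (condEntropyOf (thm2Joint p Q pX1 pX2 pX3) (fun (s1,_,_,_,_,_,_,_,_) => s1)
          (fun (_,s2,w3,_,_,_,_,_,_) => (s2, w3))
        - condMutualInfoOf (thm2Joint p Q pX1 pX2 pX3) (fun (_,_,_,_,x1,_,_,_,_) => x1)
            (fun (_,_,_,_,_,_,_,y3,_) => y3) (fun (s1,_,_,_,_,x2,x3,_,_) => (s1, x2, x3))) 0 := by
  have hE := condEntropyOf_eq (μ := thm2Joint p Q pX1 pX2 pX3)
    (X := fun (s1,_,_,_,_,_,_,_,_) => s1) (Y := fun (_,s2,w3,_,_,_,_,_,_) => (s2, w3))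
    (fun s1 t => srcRelay p s1 t.1 t.2) fun s1 t => by
      rw [pushSum_equiv (R := W × X1 × X2 × X3 × Y3 × Y) _ _
        { toFun := fun u => (u.1.1, u.1.2.1, u.1.2.2, u.2.1, u.2.2)
          invFun := fun v => ((v.1, v.2.1, v.2.2.1), v.2.2.2.1, v.2.2.2.2)
          left_inv := fun _ => rfl
          right_inv := fun _ => rfl } fun _ => rfl]
      simp only [Fintype.sum_prod_type, Equiv.coe_fn_mk, thm2Joint, ← Finset.mul_sum,
        sum_sum_channel hQ, (h₁ _).2, (h₂ _).2, (h₃ _ _).2, mul_one, srcRelay]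
  have hI := condMutualInfoOf_eq_of_channel (μ := thm2Joint p Q pX1 pX2 pX3)
    (X := fun (_,_,_,_,x1,_,_,_,_) => x1) (Y := fun (_,_,_,_,_,_,_,y3,_) => y3)
    (Z := fun (s1,_,_,_,_,x2,x3,_,_) => (s1, x2, x3))
    (fun x1 c => pX1 c.1 x1)
    (fun c => ∑ s2, ∑ w, ∑ w3, p (c.1, s2, w, w3) * pX2 s2 c.2.1 * pX3 c.1 s2 c.2.2)
    (fun x1 c => chanRelay Q (x1, c.2)) (fun c => h₁ _) (fun x c => isPmf_chanRelay hQ _)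
    fun x y c => by
      rw [pushSum_equiv (R := S2 × W × W3 × Y) _ _
        { toFun := fun u => (u.1.2.2.1, u.2.1, u.2.2.2.1, u.2.2.1, u.1.1, u.1.2.2.2.1,
            u.1.2.2.2.2, u.1.2.1, u.2.2.2.2)
          invFun := fun v => ((v.2.2.2.2.1, v.2.2.2.2.2.2.2.1, v.1, v.2.2.2.2.2.1,
            v.2.2.2.2.2.2.1), v.2.1, v.2.2.2.1, v.2.2.1, v.2.2.2.2.2.2.2.2)
          left_inv := fun _ => rfl
          right_inv := fun _ => rfl } fun _ => rfl]
      obtain ⟨s1, x2, x3⟩ := c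
      simp only [Fintype.sum_prod_type, Equiv.coe_fn_mk, thm2Joint, ← Finset.mul_sum, chanRelay]
      generalize ∑ i, Q (x, x2, x3) (i, y) = v
      simp only [Finset.sum_mul, Finset.mul_sum]
      exact Finset.sum_congr rfl fun s2 _ => Finset.sum_congr rfl fun w _ =>
        Finset.sum_congr rfl fun w3 _ => by ring
  rw [hE, hI]
  have hS := fun r1 r2 x3 => sum_log_ratio_eq_of_indep
    (P := fun s1 (t : S2 × W3) => srcRelay p s1 t.1 t.2) (fun s1 t => srcRelay_nonneg hp.1 _ _ _)
    (by simpa only [Fintype.sum_prod_type] using sum_srcRelay hp)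
    (h₂ r2) (h₁ r1) (V := fun x k => chanRelay Q (x, k, x3)) (fun x k => isPmf_chanRelay hQ _)
  have hD := fun r1 r2 x3 => hasDerivAt_ratioMoment
    (c := fun g : S2 × X2 × W3 × Y3 => pX2 r2 g.2.1)
    (q := fun (v : S1 × X1 × Unit) _ => pX1 r1 v.2.1 * 1)
    (K := fun v g => srcRelay p v.1 g.1 g.2.2.1 * chanRelay Q (v.2.1, g.2.1, x3) g.2.2.2)
    (fun v g => mul_nonneg ((h₁ _).1 _) zero_le_one)
    (fun v g => mul_nonneg (srcRelay_nonneg hp.1 _ _ _) ((isPmf_chanRelay hQ _).1 _))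
  refine (HasDerivAt.relayAverage fun r1 r2 x3 =>
    (hD r1 r2 x3).congr_deriv (Eq.trans ?_ (hS r1 r2 x3))).congr_deriv ?_
  · simp only [Fintype.sum_prod_type, Fintype.sum_unique, mul_one]
    exact Finset.sum_congr rfl fun s2 _ => Finset.sum_comm
  · rw [relayAverage_const_sub hp h₃]
    congr 1
    simp only [relayAverage, Finset.mul_sum, Finset.sum_mul, ← Fintype.sum_prod_type']
    refine Fintype.sum_equiv
      { toFun := fun v => ((v.1.1, v.2.2.2.2, v.2.1), (v.2.2.1, v.2.2.2.1), v.1.2)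
        invFun := fun v => ((v.1.1, v.2.2), v.1.2.2, v.2.1.1, v.2.1.2, v.1.2.1)
        left_inv := fun _ => rfl
        right_inv := fun _ => rfl } _ _ fun x => ?_
    simp only [Equiv.coe_fn_mk]
    ring

omit [DecidableEq W] [DecidableEq Y] in
include hp hQ h₁ h₂ h₃ in
theorem hasDerivAt_relayLetter_moment₁₂ :
    HasDerivAt (fun τ => relayAverage p pX3 fun s1 s2 x3 =>
        (relayLetter p Q pX1 pX2 s1 s2 x3).moment₁₂ τ)
      (condEntropyOf (thm2Joint p Q pX1 pX2 pX3) (fun (s1,s2,_,_,_,_,_,_,_) => (s1, s2))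
          (fun (_,_,w3,_,_,_,_,_,_) => w3)
        - condMutualInfoOf (thm2Joint p Q pX1 pX2 pX3) (fun (_,_,_,_,x1,x2,_,_,_) => (x1, x2))
            (fun (_,_,_,_,_,_,_,y3,_) => y3)
            (fun (s1,s2,_,_,_,_,x3,_,_) => (s1, s2, x3))) 0 := by
  have hE := condEntropyOf_eq (μ := thm2Joint p Q pX1 pX2 pX3)
    (X := fun (s1,s2,_,_,_,_,_,_,_) => (s1, s2)) (Y := fun (_,_,w3,_,_,_,_,_,_) => w3)
    (fun s w3 => srcRelay p s.1 s.2 w3) fun s w3 => by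
      rw [pushSum_equiv (R := W × X1 × X2 × X3 × Y3 × Y) _ _
        { toFun := fun u => (u.1.1.1, u.1.1.2, u.1.2, u.2.1, u.2.2)
          invFun := fun v => (((v.1, v.2.1), v.2.2.1), v.2.2.2.1, v.2.2.2.2)
          left_inv := fun _ => rfl
          right_inv := fun _ => rfl } fun _ => rfl]
      simp only [Fintype.sum_prod_type, Equiv.coe_fn_mk, thm2Joint, ← Finset.mul_sum,
        sum_sum_channel hQ, (h₁ _).2, (h₂ _).2, (h₃ _ _).2, mul_one, srcRelay]
  have hI := condMutualInfoOf_eq_of_channel (μ := thm2Joint p Q pX1 pX2 pX3)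
    (X := fun (_,_,_,_,x1,x2,_,_,_) => (x1, x2)) (Y := fun (_,_,_,_,_,_,_,y3,_) => y3)
    (Z := fun (s1,s2,_,_,_,_,x3,_,_) => (s1, s2, x3))
    (fun x c => pX1 c.1 x.1 * pX2 c.2.1 x.2)
    (fun c => ∑ w, ∑ w3, p (c.1, c.2.1, w, w3) * pX3 c.1 c.2.1 c.2.2)
    (fun x c => chanRelay Q (x.1, x.2, c.2.2)) (fun c => (h₁ _).prod_mul (h₂ _))
    (fun x c => isPmf_chanRelay hQ _)
    fun x y c => by
      rw [pushSum_equiv (R := W × W3 × Y) _ _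
        { toFun := fun u => (u.1.2.2.1, u.1.2.2.2.1, u.2.2.1, u.2.1, u.1.1.1, u.1.1.2,
            u.1.2.2.2.2, u.1.2.1, u.2.2.2)
          invFun := fun v => (((v.2.2.2.2.1, v.2.2.2.2.2.1), v.2.2.2.2.2.2.2.1, v.1, v.2.1,
            v.2.2.2.2.2.2.1), v.2.2.2.1, v.2.2.1, v.2.2.2.2.2.2.2.2)
          left_inv := fun _ => rfl
          right_inv := fun _ => rfl } fun _ => rfl]
      obtain ⟨s1, s2, x3⟩ := c
      simp only [Fintype.sum_prod_type, Equiv.coe_fn_mk, thm2Joint, ← Finset.mul_sum, chanRelay]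
      generalize ∑ i, Q (x.1, x.2, x3) (i, y) = v
      simp only [Finset.sum_mul, Finset.mul_sum]
      exact Finset.sum_congr rfl fun w _ => Finset.sum_congr rfl fun w3 _ => by ring
  rw [hE, hI]
  have hS := fun r1 r2 x3 => sum_log_ratio_eq_of_indep
    (P := fun (s : S1 × S2) w3 => srcRelay p s.1 s.2 w3) (fun s w3 => srcRelay_nonneg hp.1 _ _ _)
    (by simpa only [Fintype.sum_prod_type] using sum_srcRelay hp)
    (r := fun _ : Unit => 1) ⟨fun _ => zero_le_one, by simp⟩ ((h₁ r1).prod_mul (h₂ r2))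
    (V := fun x _ => chanRelay Q (x.1, x.2, x3)) (fun x k => isPmf_chanRelay hQ _)
  have hD := fun r1 r2 x3 => hasDerivAt_ratioMoment (c := fun _ : W3 × Y3 => 1)
    (q := fun (v : S1 × S2 × X1 × X2 × Unit) _ => pX1 r1 v.2.2.1 * pX2 r2 v.2.2.2.1 * 1)
    (K := fun v g => srcRelay p v.1 v.2.1 g.1 * chanRelay Q (v.2.2.1, v.2.2.2.1, x3) g.2)
    (fun v g => mul_nonneg (mul_nonneg ((h₁ _).1 _) ((h₂ _).1 _)) zero_le_one)
    (fun v g => mul_nonneg (srcRelay_nonneg hp.1 _ _ _) ((isPmf_chanRelay hQ _).1 _))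
  refine (HasDerivAt.relayAverage fun r1 r2 x3 =>
    (hD r1 r2 x3).congr_deriv (Eq.trans ?_ (hS r1 r2 x3))).congr_deriv ?_
  · simp only [Fintype.sum_prod_type, Fintype.sum_unique, mul_one]
  · rw [relayAverage_const_sub hp h₃]
    congr 1
    simp only [relayAverage, Finset.mul_sum, Finset.sum_mul, ← Fintype.sum_prod_type',
      Fintype.sum_unique, one_mul]
    refine Fintype.sum_equiv
      { toFun := fun v => ((v.1.1, v.1.2.1, v.2.1), (v.2.2.1, v.2.2.2), v.1.2.2)
        invFun := fun v => ((v.1.1, v.1.2.1, v.2.2), v.1.2.2, v.2.1.1, v.2.1.2)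
        left_inv := fun _ => rfl
        right_inv := fun _ => rfl } _ _ fun x => ?_
    simp only [Equiv.coe_fn_mk]
    ring

end RelayDerivatives

theorem MacEnsemble.moment₁_zero {A1 A2 U1 U2 U3 Z : Type*} [Fintype A1] [Fintype A2]
    [Fintype U1] [Fintype U2] [Fintype U3] [Fintype Z] (M : MacEnsemble A1 A2 U1 U2 U3 Z) :
    M.moment₁ 0 = M.mass := by
  rw [moment₁, ratioMoment_zero, mass]
  simp only [Finset.mul_sum, ← Fintype.sum_prod_type']
  refine Fintype.sum_equiv
    { toFun := fun v => (v.2.1, v.1.1, v.2.2.1, v.1.2.1, v.2.2.2, v.1.2.2)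
      invFun := fun v => ((v.2.1, v.2.2.2.1, v.2.2.2.2.2), v.1, v.2.2.1, v.2.2.2.2.1)
      left_inv := fun _ => rfl
      right_inv := fun _ => rfl } _ _ fun x => ?_
  simp only [Equiv.coe_fn_mk]
  ring

theorem MacEnsemble.moment₂_zero {A1 A2 U1 U2 U3 Z : Type*} [Fintype A1] [Fintype A2]
    [Fintype U1] [Fintype U2] [Fintype U3] [Fintype Z] (M : MacEnsemble A1 A2 U1 U2 U3 Z) :
    M.moment₂ 0 = M.mass := by
  rw [moment₂, ratioMoment_zero, mass]
  simp only [Finset.mul_sum, ← Fintype.sum_prod_type']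
  refine Fintype.sum_equiv
    { toFun := fun v => (v.1.1, v.2.1, v.1.2.1, v.2.2.1, v.2.2.2, v.1.2.2)
      invFun := fun v => ((v.1, v.2.2.1, v.2.2.2.2.2), v.2.1, v.2.2.2.1, v.2.2.2.2.1)
      left_inv := fun _ => rfl
      right_inv := fun _ => rfl } _ _ fun x => ?_
  simp only [Equiv.coe_fn_mk]
  ring

theorem MacEnsemble.sideMoment₁_zero {S1 S2 Z : Type*} [Fintype S1] [Fintype S2] [Fintype Z]
    (K : S1 → S2 → Z → ℝ) : sideMoment₁ K 0 = ∑ s1, ∑ s2, ∑ z, K s1 s2 z := by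
  rw [sideMoment₁, ratioMoment_zero, Finset.sum_congr rfl fun _ _ => one_mul _, Finset.sum_comm]
  simp only [one_mul, Fintype.sum_prod_type]

theorem MacEnsemble.sideMoment₂_zero {S1 S2 Z : Type*} [Fintype S1] [Fintype S2] [Fintype Z]
    (K : S1 → S2 → Z → ℝ) : sideMoment₂ K 0 = ∑ s1, ∑ s2, ∑ z, K s1 s2 z := by
  rw [sideMoment₂, ratioMoment_zero]
  simp only [one_mul, Fintype.sum_prod_type]
  exact Finset.sum_congr rfl fun _ _ => Finset.sum_comm

section Reindexing

variable {Ω Ω' α β γ : Type*} [Fintype Ω] [Fintype Ω'] [Fintype α] [Fintype β] [Fintype γ]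
  [DecidableEq α] [DecidableEq β] [DecidableEq γ] {μ : Ω → ℝ} {μ' : Ω' → ℝ} (e : Ω ≃ Ω')
  (h : ∀ ω, μ ω = μ' (e ω))

include h

theorem entropyOf_equiv (X : Ω' → α) : entropyOf μ (fun ω => X (e ω)) = entropyOf μ' X := by
  unfold entropyOf
  exact Finset.sum_congr rfl fun a _ => congrArg _ <|
    Fintype.sum_equiv e _ _ fun ω => by rw [h]

theorem condEntropyOf_equiv (X : Ω' → α) (Y : Ω' → β) :
    condEntropyOf μ (fun ω => X (e ω)) (fun ω => Y (e ω)) = condEntropyOf μ' X Y :=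
  congrArg₂ _ (entropyOf_equiv e h fun ω => (X ω, Y ω)) (entropyOf_equiv e h Y)

theorem condMutualInfoOf_equiv (X : Ω' → α) (Y : Ω' → β) (Z : Ω' → γ) :
    condMutualInfoOf μ (fun ω => X (e ω)) (fun ω => Y (e ω)) (fun ω => Z (e ω))
      = condMutualInfoOf μ' X Y Z := by
  unfold condMutualInfoOf
  rw [← entropyOf_equiv e h fun ω => (X ω, Z ω), ← entropyOf_equiv e h fun ω => (Y ω, Z ω),
    ← entropyOf_equiv e h fun ω => (X ω, Y ω, Z ω), ← entropyOf_equiv e h Z]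

end Reindexing

section Swap

variable {S1 S2 W W3 X1 X2 X3 Y Y3 : Type*}

/-- Exchange of the first two components. -/
def tripleSwap (A B C : Type*) : A × B × C ≃ B × A × C where
  toFun v := (v.2.1, v.1, v.2.2)
  invFun v := (v.2.1, v.1, v.2.2)
  left_inv _ := rfl
  right_inv _ := rfl

/-- Exchange of the two users in the joint law. -/
def userSwap : S1 × S2 × W3 × W × X1 × X2 × X3 × Y3 × Y ≃
    S2 × S1 × W3 × W × X2 × X1 × X3 × Y3 × Y where
  toFun v := (v.2.1, v.1, v.2.2.1, v.2.2.2.1, v.2.2.2.2.2.1, v.2.2.2.2.1, v.2.2.2.2.2.2)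
  invFun v := (v.2.1, v.1, v.2.2.1, v.2.2.2.1, v.2.2.2.2.2.1, v.2.2.2.2.1, v.2.2.2.2.2.2)
  left_inv _ := rfl
  right_inv _ := rfl

theorem thm2Joint_userSwap (p : S1 × S2 × W × W3 → ℝ) (Q : X1 × X2 × X3 → Y × Y3 → ℝ)
    (pX1 : S1 → X1 → ℝ) (pX2 : S2 → X2 → ℝ) (pX3 : S1 → S2 → X3 → ℝ)
    (ω : S1 × S2 × W3 × W × X1 × X2 × X3 × Y3 × Y) :
    thm2Joint p Q pX1 pX2 pX3 ω
      = thm2Joint (fun f => p (tripleSwap _ _ _ f)) (fun x => Q (tripleSwap _ _ _ x)) pX2 pX1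
        (fun s2 s1 => pX3 s1 s2) (userSwap ω) := by
  simp only [thm2Joint, userSwap, tripleSwap, Equiv.coe_fn_mk]
  ring

theorem IsPmf.comp_equiv {α β : Type*} [Fintype α] [Fintype β] {p : β → ℝ} (hp : IsPmf p)
    (e : α ≃ β) : IsPmf fun a => p (e a) :=
  ⟨fun _ => hp.1 _, (e.sum_comp p).trans hp.2⟩

variable [Fintype S1] [Fintype S2] [Fintype W] [Fintype W3]
  [Fintype X1] [Fintype X2] [Fintype X3] [Fintype Y] [Fintype Y3]
  [DecidableEq S1] [DecidableEq S2] [DecidableEq W] [DecidableEq W3]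
  [DecidableEq X1] [DecidableEq X2] [DecidableEq X3] [DecidableEq Y] [DecidableEq Y3]
  {p : S1 × S2 × W × W3 → ℝ} (hp : IsPmf p) {Q : X1 × X2 × X3 → Y × Y3 → ℝ}
  (hQ : ∀ x, IsPmf (Q x)) {pX1 : S1 → X1 → ℝ} {pX2 : S2 → X2 → ℝ} {pX3 : S1 → S2 → X3 → ℝ}
  (h₁ : ∀ s, IsPmf (pX1 s)) (h₂ : ∀ s, IsPmf (pX2 s)) (h₃ : ∀ s s', IsPmf (pX3 s s'))

omit [DecidableEq W3] [DecidableEq Y3] in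
include hp hQ h₁ h₂ h₃ in
theorem hasDerivAt_destLetter_moment₂ :
    HasDerivAt (destLetter p Q pX1 pX2 pX3).moment₂
      (condEntropyOf (thm2Joint p Q pX1 pX2 pX3) (fun (_,s2,_,_,_,_,_,_,_) => s2)
          (fun (s1,_,_,w,_,_,_,_,_) => (s1, w))
        - condMutualInfoOf (thm2Joint p Q pX1 pX2 pX3) (fun (_,_,_,_,_,x2,x3,_,_) => (x2, x3))
            (fun (_,_,_,_,_,_,_,_,y) => y) (fun (s1,_,_,w,x1,_,_,_,_) => (s1, x1, w))) 0 :=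
  (hasDerivAt_destLetter_moment₁ (hp.comp_equiv (tripleSwap _ _ _))
    (fun x => hQ (tripleSwap _ _ _ x)) h₂ h₁ fun s2 s1 => h₃ s1 s2).congr_deriv <|
  congrArg₂ _ (condEntropyOf_equiv userSwap (thm2Joint_userSwap p Q pX1 pX2 pX3) _ _).symm
    (condMutualInfoOf_equiv userSwap (thm2Joint_userSwap p Q pX1 pX2 pX3) _ _ _).symm

omit [DecidableEq W] [DecidableEq Y] in
include hp hQ h₁ h₂ h₃ in
theorem hasDerivAt_relayLetter_moment₂ :
    HasDerivAt (fun τ => relayAverage p pX3 fun s1 s2 x3 =>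
        (relayLetter p Q pX1 pX2 s1 s2 x3).moment₂ τ)
      (condEntropyOf (thm2Joint p Q pX1 pX2 pX3) (fun (_,s2,_,_,_,_,_,_,_) => s2)
          (fun (s1,_,w3,_,_,_,_,_,_) => (s1, w3))
        - condMutualInfoOf (thm2Joint p Q pX1 pX2 pX3) (fun (_,_,_,_,_,x2,_,_,_) => x2)
            (fun (_,_,_,_,_,_,_,y3,_) => y3) (fun (_,s2,_,_,x1,_,x3,_,_) => (s2, x1, x3))) 0 := by
  refine ((hasDerivAt_relayLetter_moment₁ (hp.comp_equiv (tripleSwap _ _ _))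
    (fun x => hQ (tripleSwap _ _ _ x)) h₂ h₁ fun s2 s1 => h₃ s1 s2).congr_deriv <|
    congrArg₂ _ (condEntropyOf_equiv userSwap (thm2Joint_userSwap p Q pX1 pX2 pX3) _ _).symm
    (condMutualInfoOf_equiv userSwap (thm2Joint_userSwap p Q pX1 pX2 pX3)
      _ _ _).symm).congr_of_eventuallyEq
    (.of_forall fun τ => ?_)
  exact Fintype.sum_equiv (tripleSwap _ _ _) _ _ fun f => rfl

end Swap

section Asymptotics

theorem tendsto_blockBound {B : ℕ} {γ τ₁ τ₂ τ₃ : ℝ} {Φ₁ Φ₂ Φ₃ Ψ₁ Ψ₂ Ψ₃ : ℝ → ℝ}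
    (h₁ : 0 ≤ Φ₁ τ₁ ^ B * Ψ₁ τ₁ ∧ Φ₁ τ₁ ^ B * Ψ₁ τ₁ < 1)
    (h₂ : 0 ≤ Φ₂ τ₂ ^ B * Ψ₂ τ₂ ∧ Φ₂ τ₂ ^ B * Ψ₂ τ₂ < 1)
    (h₃ : 0 ≤ Φ₃ τ₃ ^ B * Ψ₃ τ₃ ∧ Φ₃ τ₃ ^ B * Ψ₃ τ₃ < 1) :
    Filter.Tendsto (fun t : ℕ => blockBound (B * t) t γ τ₁ τ₂ τ₃ Φ₁ Φ₂ Φ₃ Ψ₁ Ψ₂ Ψ₃)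
      Filter.atTop (nhds (3 * γ)) := by
  have key : ∀ {Φ Ψ : ℝ → ℝ} {τ : ℝ}, (0 ≤ Φ τ ^ B * Ψ τ ∧ Φ τ ^ B * Ψ τ < 1) →
      Filter.Tendsto (fun t : ℕ => γ⁻¹ ^ τ * (Φ τ ^ (B * t) * Ψ τ ^ t)) Filter.atTop (nhds 0) := by
    intro Φ Ψ τ h
    simpa only [mul_zero, pow_mul, ← mul_pow] using
      (tendsto_pow_atTop_nhds_zero_of_lt_one h.1 h.2).const_mul (γ⁻¹ ^ τ)
  simpa only [zero_add, blockBound] using (((key h₁).add (key h₂)).add (key h₃)).add_const (3 * γ)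

/-- If the three single-letter exponents have negative derivative at `0`, the threshold bound for
blocks of `B * t` channel letters and `t` further source letters becomes small for all large `B`. -/
theorem eventually_blockBound_lt {Φ₁ Φ₂ Φ₃ Ψ₁ Ψ₂ Ψ₃ : ℝ → ℝ} {a₁ a₂ a₃ b₁ b₂ b₃ : ℝ}
    (hΦ₁ : HasDerivAt Φ₁ a₁ 0) (hΦ₂ : HasDerivAt Φ₂ a₂ 0) (hΦ₃ : HasDerivAt Φ₃ a₃ 0)
    (hΨ₁ : HasDerivAt Ψ₁ b₁ 0) (hΨ₂ : HasDerivAt Ψ₂ b₂ 0) (hΨ₃ : HasDerivAt Ψ₃ b₃ 0)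
    (hΦ₁0 : Φ₁ 0 = 1) (hΦ₂0 : Φ₂ 0 = 1) (hΦ₃0 : Φ₃ 0 = 1)
    (hΨ₁0 : Ψ₁ 0 = 1) (hΨ₂0 : Ψ₂ 0 = 1) (hΨ₃0 : Ψ₃ 0 = 1)
    (h₁ : a₁ < 0) (h₂ : a₂ < 0) (h₃ : a₃ < 0) :
    ∀ᶠ B : ℕ in Filter.atTop, ∃ τ₁ > 0, ∃ τ₂ > 0, ∃ τ₃ > 0, ∀ γ δ : ℝ, 3 * γ < δ →
      ∀ᶠ t : ℕ in Filter.atTop,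
        blockBound (B * t) t γ τ₁ τ₂ τ₃ Φ₁ Φ₂ Φ₃ Ψ₁ Ψ₂ Ψ₃ < δ := by
  filter_upwards [eventually_exists_pow_mul_lt_one hΦ₁ hΨ₁ hΦ₁0 hΨ₁0 h₁,
    eventually_exists_pow_mul_lt_one hΦ₂ hΨ₂ hΦ₂0 hΨ₂0 h₂,
    eventually_exists_pow_mul_lt_one hΦ₃ hΨ₃ hΦ₃0 hΨ₃0 h₃] with B ⟨τ₁, ht₁, H₁⟩ ⟨τ₂, ht₂, H₂⟩
      ⟨τ₃, ht₃, H₃⟩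
  exact ⟨τ₁, ht₁, τ₂, ht₂, τ₃, ht₃, fun γ δ h =>
    (tendsto_blockBound H₁ H₂ H₃).eventually_lt_const h⟩

variable {S1 S2 W W3 X1 X2 X3 Y Y3 : Type*} [Fintype S1] [Fintype S2] [Fintype W] [Fintype W3]
  [Fintype X1] [Fintype X2] [Fintype X3] [Fintype Y] [Fintype Y3]

theorem MacEnsemble.exists_hasDerivAt_sideMoments {Z : Type*} [Fintype Z] {K : S1 → S2 → Z → ℝ}
    (hK : ∀ s1 s2 z, 0 ≤ K s1 s2 z) :
    (∃ b, HasDerivAt (sideMoment₁ K) b 0) ∧ (∃ b, HasDerivAt (sideMoment₂ K) b 0) ∧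
      ∃ b, HasDerivAt (sideMoment₁₂ K) b 0 :=
  ⟨⟨_, hasDerivAt_ratioMoment (fun _ _ => zero_le_one) fun _ _ => hK _ _ _⟩,
    ⟨_, hasDerivAt_ratioMoment (fun _ _ => zero_le_one) fun _ _ => hK _ _ _⟩,
    ⟨_, hasDerivAt_ratioMoment (fun _ _ => zero_le_one) fun _ _ => hK _ _ _⟩⟩

omit [Fintype X1] [Fintype X2] [Fintype Y] [Fintype Y3] in
theorem relayAverage_one {p : S1 × S2 × W × W3 → ℝ} (hp : IsPmf p) {pX3 : S1 → S2 → X3 → ℝ}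
    (h₃ : ∀ s s', IsPmf (pX3 s s')) : relayAverage p pX3 (fun _ _ _ => 1) = 1 := by
  simp only [relayAverage, mul_one, (h₃ _ _).2, hp.2]

variable {p : S1 × S2 × W × W3 → ℝ} (hp : IsPmf p) {Q : X1 × X2 × X3 → Y × Y3 → ℝ}
  (hQ : ∀ x, IsPmf (Q x)) {pX1 : S1 → X1 → ℝ} {pX2 : S2 → X2 → ℝ} {pX3 : S1 → S2 → X3 → ℝ}
  (h₁ : ∀ s, IsPmf (pX1 s)) (h₂ : ∀ s, IsPmf (pX2 s)) (h₃ : ∀ s s', IsPmf (pX3 s s'))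

include hp hQ h₁ h₂ h₃

theorem eventually_blockBound_destLetter_lt {a₁ a₂ a₃ : ℝ}
    (hd₁ : HasDerivAt (destLetter p Q pX1 pX2 pX3).moment₁ a₁ 0)
    (hd₂ : HasDerivAt (destLetter p Q pX1 pX2 pX3).moment₂ a₂ 0)
    (hd₃ : HasDerivAt (destLetter p Q pX1 pX2 pX3).moment₁₂ a₃ 0)
    (ha₁ : a₁ < 0) (ha₂ : a₂ < 0) (ha₃ : a₃ < 0) :
    ∀ᶠ B : ℕ in Filter.atTop, ∃ τ₁ > 0, ∃ τ₂ > 0, ∃ τ₃ > 0, ∀ γ δ : ℝ, 3 * γ < δ →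
      ∀ᶠ t : ℕ in Filter.atTop, blockBound (B * t) t γ τ₁ τ₂ τ₃
        (destLetter p Q pX1 pX2 pX3).moment₁ (destLetter p Q pX1 pX2 pX3).moment₂
        (destLetter p Q pX1 pX2 pX3).moment₁₂ (MacEnsemble.sideMoment₁ (srcDest p))
        (MacEnsemble.sideMoment₂ (srcDest p)) (MacEnsemble.sideMoment₁₂ (srcDest p)) < δ := by
  obtain ⟨⟨_, hb₁⟩, ⟨_, hb₂⟩, _, hb₃⟩ :=
    MacEnsemble.exists_hasDerivAt_sideMoments (srcDest_nonneg hp.1)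
  have hM := destLetter_mass hp hQ h₁ h₂ h₃
  refine eventually_blockBound_lt hd₁ hd₂ hd₃ hb₁ hb₂ hb₃ ?_ ?_ ?_ ?_ ?_ ?_ ha₁ ha₂ ha₃
  · rw [MacEnsemble.moment₁_zero, hM]
  · rw [MacEnsemble.moment₂_zero, hM]
  · rw [← MacEnsemble.mass_eq_moment₁₂, hM]
  · rw [MacEnsemble.sideMoment₁_zero, sum_srcDest hp]
  · rw [MacEnsemble.sideMoment₂_zero, sum_srcDest hp]
  · exact MacEnsemble.sideMoment₁₂_srcDest hp

theorem eventually_blockBound_relayLetter_lt {a₁ a₂ a₃ : ℝ}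
    (hd₁ : HasDerivAt (fun τ => relayAverage p pX3 fun s1 s2 x3 =>
      (relayLetter p Q pX1 pX2 s1 s2 x3).moment₁ τ) a₁ 0)
    (hd₂ : HasDerivAt (fun τ => relayAverage p pX3 fun s1 s2 x3 =>
      (relayLetter p Q pX1 pX2 s1 s2 x3).moment₂ τ) a₂ 0)
    (hd₃ : HasDerivAt (fun τ => relayAverage p pX3 fun s1 s2 x3 =>
      (relayLetter p Q pX1 pX2 s1 s2 x3).moment₁₂ τ) a₃ 0)
    (ha₁ : a₁ < 0) (ha₂ : a₂ < 0) (ha₃ : a₃ < 0) :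
    ∀ᶠ B : ℕ in Filter.atTop, ∃ τ₁ > 0, ∃ τ₂ > 0, ∃ τ₃ > 0, ∀ γ δ : ℝ, 3 * γ < δ →
      ∀ᶠ t : ℕ in Filter.atTop, blockBound (B * t) t γ τ₁ τ₂ τ₃
        (fun τ => relayAverage p pX3 fun s1 s2 x3 =>
          (relayLetter p Q pX1 pX2 s1 s2 x3).moment₁ τ)
        (fun τ => relayAverage p pX3 fun s1 s2 x3 =>
          (relayLetter p Q pX1 pX2 s1 s2 x3).moment₂ τ)
        (fun τ => relayAverage p pX3 fun s1 s2 x3 =>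
          (relayLetter p Q pX1 pX2 s1 s2 x3).moment₁₂ τ)
        (MacEnsemble.sideMoment₁ (srcRelay p)) (MacEnsemble.sideMoment₂ (srcRelay p))
        (MacEnsemble.sideMoment₁₂ (srcRelay p)) < δ := by
  obtain ⟨⟨_, hb₁⟩, ⟨_, hb₂⟩, _, hb₃⟩ :=
    MacEnsemble.exists_hasDerivAt_sideMoments (srcRelay_nonneg hp.1)
  have hM := relayLetter_mass hp hQ h₁ h₂
  refine eventually_blockBound_lt hd₁ hd₂ hd₃ hb₁ hb₂ hb₃ ?_ ?_ ?_ ?_ ?_ ?_ ha₁ ha₂ ha₃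
  · simp only [MacEnsemble.moment₁_zero, hM, relayAverage_one hp h₃]
  · simp only [MacEnsemble.moment₂_zero, hM, relayAverage_one hp h₃]
  · simp only [← MacEnsemble.mass_eq_moment₁₂, hM, relayAverage_one hp h₃]
  · rw [MacEnsemble.sideMoment₁_zero, sum_srcRelay hp]
  · rw [MacEnsemble.sideMoment₂_zero, sum_srcRelay hp]
  · exact MacEnsemble.sideMoment₁₂_srcRelay hp

end Asymptotics

section BlockCode

theorem finProdFinEquiv_lt_of_lt {B m : ℕ} {b b' : Fin B} (h : b < b') (d d' : Fin m) :
    finProdFinEquiv (b, d) < finProdFinEquiv (b', d') := by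
  rw [Fin.lt_def, finProdFinEquiv_apply_val, finProdFinEquiv_apply_val]
  have h1 : m * ((b : ℕ) + 1) ≤ m * b' := Nat.mul_le_mul_left _ h
  have h2 := d.isLt
  simp only
  lia

/-- Splitting four sequences into blocks. -/
def seqBlocks {n B : ℕ} {I : Type*} (e : Fin B × I ≃ Fin n) (S1 S2 W W3 : Type*) :
    (Fin n → S1) × (Fin n → S2) × (Fin n → W) × (Fin n → W3) ≃
      (Fin B → (I → S1) × (I → S2) × (I → W) × (I → W3)) where
  toFun x i := (fun j => x.1 (e (i, j)), fun j => x.2.1 (e (i, j)), fun j => x.2.2.1 (e (i, j)),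
    fun j => x.2.2.2 (e (i, j)))
  invFun f := (fun k => (f (e.symm k).1).1 (e.symm k).2, fun k => (f (e.symm k).1).2.1 (e.symm k).2,
    fun k => (f (e.symm k).1).2.2.1 (e.symm k).2, fun k => (f (e.symm k).1).2.2.2 (e.symm k).2)
  left_inv x := by simp
  right_inv f := by simp

/-- Splitting two sequences into blocks. -/
def pairBlocks {n B : ℕ} {D : Type*} (e : Fin B × D ≃ Fin n) (Y Y3 : Type*) :
    (Fin n → Y) × (Fin n → Y3) ≃ (Fin B → (D → Y) × (D → Y3)) where
  toFun x i := (fun j => x.1 (e (i, j)), fun j => x.2 (e (i, j)))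
  invFun f := (fun k => (f (e.symm k).1).1 (e.symm k).2, fun k => (f (e.symm k).1).2 (e.symm k).2)
  left_inv x := by simp
  right_inv f := by simp

variable {I S1 S2 W W3 X1 X2 X3 Y Y3 : Type*} [Fintype I] [DecidableEq I] [Fintype S1]
  [Fintype S2] [Fintype W] [Fintype W3] [Fintype Y] [Fintype Y3] [DecidableEq S1] [DecidableEq S2]

/-- The block Markov scheme is a causal code for the relay channel whose error probability is
bounded by the sum of the error probabilities of the blocks. -/
theorem exists_code_of_blockMarkov {p : S1 × S2 × W × W3 → ℝ} (hp : IsPmf p)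
    {Q : X1 × X2 × X3 → Y × Y3 → ℝ} (hQ : ∀ x, IsPmf (Q x)) {B m : ℕ}
    (e : Fin B × I ≃ Fin ((B + 1) * m))
    (c1 : (I → S1) × (I → S1) → Fin m → X1) (c2 : (I → S2) × (I → S2) → Fin m → X2)
    (c3 : (I → S1) × (I → S2) → Fin m → X3)
    (dr : (I → S1) × (I → S2) → (Fin m → Y3) → (I → W3) → (I → S1) × (I → S2))
    (dd : (I → S1) × (I → S2) → (Fin m → Y) → (I → W) → (I → S1) × (I → S2))
    (a a' : (I → S1) × (I → S2)) :
    ∃ (f1 : (Fin ((B + 1) * m) → S1) → Fin ((B + 1) * m) → X1)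
      (f2 : (Fin ((B + 1) * m) → S2) → Fin ((B + 1) * m) → X2)
      (f3 : Fin ((B + 1) * m) → (Fin ((B + 1) * m) → Y3) → (Fin ((B + 1) * m) → W3) → X3)
      (g : (Fin ((B + 1) * m) → Y) → (Fin ((B + 1) * m) → W) →
        (Fin ((B + 1) * m) → S1) × (Fin ((B + 1) * m) → S2)),
      CausalRelay f3 ∧ marcErrProb p Q ((B + 1) * m) f1 f2 f3 g
        ≤ ∑ f : Fin B → (I → S1) × (I → S2) × (I → W) × (I → W3), (∏ i, srcBlock I p (f i)) *
          ∑ i : Fin B, (relayErr (chanBlock (Fin m) Q) c1 c2 c3 dr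
            ((Fin.cons a (fun i => msg (f i)) : Fin (B + 1) → (I → S1) × (I → S2)) i.castSucc)
              (msg (f i)) (f i).2.2.2 +
            destErr (chanBlock (Fin m) Q) c1 c2 c3 dd
              ((Fin.snoc (fun i => msg (f i)) a' : Fin (B + 1) → (I → S1) × (I → S2)) i.succ)
              (msg (f i)) (f i).2.2.1) := by
  let eC : Fin (B + 1) × Fin m ≃ Fin ((B + 1) * m) := finProdFinEquiv
  let g : (Fin ((B + 1) * m) → Y) → (Fin ((B + 1) * m) → W) → Fin B → (I → S1) × (I → S2) :=
    fun y w i => destEstimate dd a' (fun b d => y (eC (b, d))) (fun i j => w (e (i, j))) i.castSucc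
  refine ⟨fun s k => c1 ((Fin.snoc (fun i j => s (e (i, j))) a'.1 : Fin (B + 1) → I → S1)
        (eC.symm k).1, (Fin.cons a.1 (fun i j => s (e (i, j))) : Fin (B + 1) → I → S1)
        (eC.symm k).1) (eC.symm k).2,
    fun s k => c2 ((Fin.snoc (fun i j => s (e (i, j))) a'.2 : Fin (B + 1) → I → S2)
        (eC.symm k).1, (Fin.cons a.2 (fun i j => s (e (i, j))) : Fin (B + 1) → I → S2)
        (eC.symm k).1) (eC.symm k).2,
    fun k y3 w3 => c3 (relayEstimate dr a (fun b d => y3 (eC (b, d))) (fun i j => w3 (e (i, j)))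
        (eC.symm k).1) (eC.symm k).2,
    fun y w => (fun k => (g y w (e.symm k).1).1 (e.symm k).2,
      fun k => (g y w (e.symm k).1).2 (e.symm k).2), ?_, ?_⟩
  · intro k y y' w h
    dsimp only
    rw [relayEstimate_congr dr a _ _ fun b hb => funext fun d => h _ ?_]
    obtain ⟨x, rfl⟩ := eC.surjective k
    rw [Equiv.symm_apply_apply] at hb
    exact finProdFinEquiv_lt_of_lt hb _ _
  · refine le_trans (le_of_eq ?_) (Finset.sum_le_sum fun f _ => mul_le_mul_of_nonneg_left
      (sum_blockMarkov_le (isPmf_chanBlock hQ) c1 c2 c3 dr dd a a' (fun i => msg (f i))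
        (fun i => (f i).2.2.1) fun i => (f i).2.2.2)
      (Finset.prod_nonneg fun i _ => (isPmf_srcBlock hp).1 (f i)))
    rw [← (seqBlocks e S1 S2 W W3).sum_comp]
    simp only [marcErrProb, Fintype.sum_prod_type]
    refine Finset.sum_congr rfl fun s1 _ => Finset.sum_congr rfl fun s2 _ =>
      Finset.sum_congr rfl fun w _ => Finset.sum_congr rfl fun w3 _ => ?_
    rw [← (pairBlocks eC Y Y3).sum_comp, Finset.mul_sum, Fintype.sum_prod_type]
    refine Finset.sum_congr rfl fun y _ => Finset.sum_congr rfl fun y3 _ => ?_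
    have hsrc : ∏ k, p (s1 k, s2 k, w k, w3 k)
        = ∏ i, srcBlock I p (seqBlocks e S1 S2 W W3 (s1, s2, w, w3) i) := by
      rw [← e.prod_comp, Fintype.prod_prod_type]
      rfl
    have hdec : ((fun k => (g y w (e.symm k).1).1 (e.symm k).2,
        fun k => (g y w (e.symm k).1).2 (e.symm k).2) = (s1, s2)) ↔
        g y w = fun i => msg (seqBlocks e S1 S2 W W3 (s1, s2, w, w3) i) := by
      constructor
      · intro h
        rw [Prod.mk.injEq] at h
        funext i
        refine Prod.ext (funext fun j => ?_) (funext fun j => ?_)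
        · simpa [msg, seqBlocks] using congrFun h.1 (e (i, j))
        · simpa [msg, seqBlocks] using congrFun h.2 (e (i, j))
      · intro h
        simp [h, msg, seqBlocks]
    rw [← hsrc, ite_not, if_congr hdec rfl rfl]
    by_cases h : g y w = fun i => msg (seqBlocks e S1 S2 W W3 (s1, s2, w, w3) i)
    · rw [if_pos h, if_pos (by exact h), mul_zero, mul_zero]
    · rw [if_neg h, if_neg (by exact h), mul_one]
      congr 1
      rw [← eC.prod_comp, Fintype.prod_prod_type]
      refine Finset.prod_congr rfl fun b _ => Finset.prod_congr rfl fun d _ => ?_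
      simp only [Equiv.symm_apply_apply]
      set M : Fin B → (I → S1) × (I → S2) :=
        fun i => msg (seqBlocks e S1 S2 W W3 (s1, s2, w, w3) i)
      rw [show (Fin.snoc (fun i j => s1 (e (i, j))) a'.1 : Fin (B + 1) → I → S1) b = _ from
          (congrFun (Fin.comp_snoc Prod.fst M a') b).symm,
        show (Fin.snoc (fun i j => s2 (e (i, j))) a'.2 : Fin (B + 1) → I → S2) b = _ from
          (congrFun (Fin.comp_snoc Prod.snd M a') b).symm,
        show (Fin.cons a.1 (fun i j => s1 (e (i, j))) : Fin (B + 1) → I → S1) b = _ from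
          (congrFun (Fin.comp_cons Prod.fst a M) b).symm,
        show (Fin.cons a.2 (fun i j => s2 (e (i, j))) : Fin (B + 1) → I → S2) b = _ from
          (congrFun (Fin.comp_cons Prod.snd a M) b).symm]
      rfl

end BlockCode

/-- Random coding: some codebooks and some start pair make the block Markov scheme good. -/
theorem exists_codebook_blockMarkov_le {Θ A1 A2 W W3 U1 U2 U3 Y Y3 : Type*} [Fintype Θ]
    [Fintype A1] [Fintype A2] [Fintype W] [Fintype W3] [Fintype Y] [Fintype Y3] [DecidableEq A1]
    [DecidableEq A2] {ω : Θ → ℝ} (hω : IsPmf ω) {P : A1 × A2 × W × W3 → ℝ} (hP : IsPmf P)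
    {V : U1 × U2 × U3 → Y × Y3 → ℝ} (hV : ∀ u, IsPmf (V u)) (c1 : Θ → A1 × A1 → U1)
    (c2 : Θ → A2 × A2 → U2) (c3 : Θ → A1 × A2 → U3) (dr : Θ → A1 × A2 → Y3 → W3 → A1 × A2)
    (dd : Θ → A1 × A2 → Y → W → A1 × A2) {δ : ℝ}
    (hR : ∑ θ, ω θ * meanRelayErr P V (c1 θ) (c2 θ) (c3 θ) (dr θ) ≤ δ)
    (hD : ∀ a, ∑ θ, ω θ * meanDestErr P V (c1 θ) (c2 θ) (c3 θ) (dd θ) a ≤ δ)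
    (a' : A1 × A2) (B : ℕ) :
    ∃ θ a, ∑ f : Fin B → A1 × A2 × W × W3, (∏ i, P (f i)) *
        ∑ i : Fin B, (relayErr V (c1 θ) (c2 θ) (c3 θ) (dr θ)
          ((Fin.cons a (fun i => msg (f i)) : Fin (B + 1) → A1 × A2) i.castSucc)
            (msg (f i)) (f i).2.2.2 +
          destErr V (c1 θ) (c2 θ) (c3 θ) (dd θ)
            ((Fin.snoc (fun i => msg (f i)) a' : Fin (B + 1) → A1 × A2) i.succ)
            (msg (f i)) (f i).2.2.1) ≤ B * (3 * δ) := by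
  have hmid : ∑ θ, ω θ * ∑ f, P f * meanDestErr P V (c1 θ) (c2 θ) (c3 θ) (dd θ) (msg f) ≤ δ :=
    calc _ = ∑ f, P f * ∑ θ, ω θ * meanDestErr P V (c1 θ) (c2 θ) (c3 θ) (dd θ) (msg f) := by
          simp only [Finset.mul_sum]
          rw [Finset.sum_comm]
          exact Finset.sum_congr rfl fun _ _ => Finset.sum_congr rfl fun _ _ =>
            mul_left_comm _ _ _
      _ ≤ ∑ f, P f * δ :=
        Finset.sum_le_sum fun f _ => mul_le_mul_of_nonneg_left (hD (msg f)) (hP.1 f)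
      _ = δ := by rw [← Finset.sum_mul, hP.2, one_mul]
  obtain ⟨θ, hθ⟩ := hω.exists_le_of_sum_mul_le
    (f := fun θ => meanRelayErr P V (c1 θ) (c2 θ) (c3 θ) (dr θ) +
      (∑ f, P f * meanDestErr P V (c1 θ) (c2 θ) (c3 θ) (dd θ) (msg f) +
        meanDestErr P V (c1 θ) (c2 θ) (c3 θ) (dd θ) a')) (b := 3 * δ) (by
      simp only [mul_add, Finset.sum_add_distrib]
      linarith [hD a'])
  obtain ⟨a, ha⟩ := exists_start_blockMarkov_le hP hV (c1 θ) (c2 θ) (c3 θ) (dr θ) (dd θ) a' B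
  exact ⟨θ, a, ha.trans (mul_le_mul_of_nonneg_left hθ (Nat.cast_nonneg B))⟩

set_option synthInstance.maxSize 1000 in
theorem isPmf_blockCodebookWeight {D E S1 S2 X1 X2 X3 : Type*} [Fintype D] [DecidableEq D]
    [Fintype E] [DecidableEq E] [Fintype S1] [Fintype S2] [Fintype X1] [Fintype X2] [Fintype X3]
    [DecidableEq S1] [DecidableEq S2] {pX1 : S1 → X1 → ℝ} {pX2 : S2 → X2 → ℝ}
    {pX3 : S1 → S2 → X3 → ℝ} (h₁ : ∀ s, IsPmf (pX1 s)) (h₂ : ∀ s, IsPmf (pX2 s))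
    (h₃ : ∀ s s', IsPmf (pX3 s s')) : IsPmf (blockCodebookWeight D E pX1 pX2 pX3) :=
  isPmf_codebookWeight (fun k => isPmf_pi fun d => h₁ (k.2 (.inl d)))
    (fun k => isPmf_pi fun d => h₂ (k.2 (.inl d)))
    fun k => isPmf_pi fun d => h₃ (k.1 (.inl d)) (k.2 (.inl d))

set_option synthInstance.maxSize 1000 in
/-- If the threshold bounds for the relay and the destination are at most `δ`, some code of
blocklength `(B + 1) * (B * t)` has error probability at most `3 * B * δ`. -/
theorem exists_code_of_blockBound_le {S1 S2 W W3 X1 X2 X3 Y Y3 : Type*} [Fintype S1] [Fintype S2]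
    [Fintype W] [Fintype W3] [Fintype X1] [Fintype X2] [Fintype X3] [Fintype Y] [Fintype Y3]
    [DecidableEq S1] [DecidableEq S2] {p : S1 × S2 × W × W3 → ℝ} (hp : IsPmf p)
    {Q : X1 × X2 × X3 → Y × Y3 → ℝ} (hQ : ∀ x, IsPmf (Q x)) {pX1 : S1 → X1 → ℝ}
    {pX2 : S2 → X2 → ℝ} {pX3 : S1 → S2 → X3 → ℝ} (h₁ : ∀ s, IsPmf (pX1 s))
    (h₂ : ∀ s, IsPmf (pX2 s)) (h₃ : ∀ s s', IsPmf (pX3 s s')) {B t : ℕ}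
    {γ δ ρ₁ ρ₂ ρ₃ τ₁ τ₂ τ₃ : ℝ} (hγ : 0 < γ) (hρ₁ : 0 < ρ₁) (hρ₂ : 0 < ρ₂) (hρ₃ : 0 < ρ₃)
    (hτ₁ : 0 < τ₁) (hτ₂ : 0 < τ₂) (hτ₃ : 0 < τ₃)
    (hR : blockBound (B * t) t γ ρ₁ ρ₂ ρ₃
      (fun τ => relayAverage p pX3 fun s1 s2 x3 => (relayLetter p Q pX1 pX2 s1 s2 x3).moment₁ τ)
      (fun τ => relayAverage p pX3 fun s1 s2 x3 => (relayLetter p Q pX1 pX2 s1 s2 x3).moment₂ τ)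
      (fun τ => relayAverage p pX3 fun s1 s2 x3 => (relayLetter p Q pX1 pX2 s1 s2 x3).moment₁₂ τ)
      (MacEnsemble.sideMoment₁ (srcRelay p)) (MacEnsemble.sideMoment₂ (srcRelay p))
      (MacEnsemble.sideMoment₁₂ (srcRelay p)) ≤ δ)
    (hD : blockBound (B * t) t γ τ₁ τ₂ τ₃
      (destLetter p Q pX1 pX2 pX3).moment₁ (destLetter p Q pX1 pX2 pX3).moment₂
      (destLetter p Q pX1 pX2 pX3).moment₁₂ (MacEnsemble.sideMoment₁ (srcDest p))
      (MacEnsemble.sideMoment₂ (srcDest p)) (MacEnsemble.sideMoment₁₂ (srcDest p)) ≤ δ) :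
    ∃ (f1 : (Fin ((B + 1) * (B * t)) → S1) → Fin ((B + 1) * (B * t)) → X1)
      (f2 : (Fin ((B + 1) * (B * t)) → S2) → Fin ((B + 1) * (B * t)) → X2)
      (f3 : Fin ((B + 1) * (B * t)) → (Fin ((B + 1) * (B * t)) → Y3) →
        (Fin ((B + 1) * (B * t)) → W3) → X3)
      (g : (Fin ((B + 1) * (B * t)) → Y) → (Fin ((B + 1) * (B * t)) → W) →
        (Fin ((B + 1) * (B * t)) → S1) × (Fin ((B + 1) * (B * t)) → S2)),
      CausalRelay f3 ∧ marcErrProb p Q ((B + 1) * (B * t)) f1 f2 f3 g ≤ B * (3 * δ) := by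
  obtain ⟨s⟩ := hp.nonempty
  let a' : (Fin (B * t) ⊕ Fin t → S1) × (Fin (B * t) ⊕ Fin t → S2) :=
    (fun _ => s.1, fun _ => s.2.1)
  have : Nonempty ((Fin (B * t) ⊕ Fin t → S1) × (Fin (B * t) ⊕ Fin t → S2)) := ⟨a'⟩
  obtain ⟨θ, a, hθ⟩ := exists_codebook_blockMarkov_le (isPmf_blockCodebookWeight h₁ h₂ h₃)
    (isPmf_srcBlock hp) (isPmf_chanBlock hQ) (fun θ => θ.1) (fun θ => θ.2.1) (fun θ => θ.2.2) _ _
    ((sum_meanRelayErr_le (D := Fin (B * t)) (E := Fin t) hp hQ h₁ h₂ h₃ hγ hρ₁ hρ₂ hρ₃).trans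
      (by simpa only [Fintype.card_fin] using hR))
    (fun a => (sum_meanDestErr_le (D := Fin (B * t)) (E := Fin t) hp hQ h₁ h₂ h₃ hγ
      hτ₁ hτ₂ hτ₃ a).trans (by simpa only [Fintype.card_fin] using hD)) a' B
  have e : Fin B × (Fin (B * t) ⊕ Fin t) ≃ Fin ((B + 1) * (B * t)) :=
    Fintype.equivOfCardEq (by
      simp only [Fintype.card_prod, Fintype.card_sum, Fintype.card_fin]
      ring)
  obtain ⟨f1, f2, f3, g, hf3, hle⟩ := exists_code_of_blockMarkov hp hQ e θ.1 θ.2.1 θ.2.2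
    (relayDecoder p Q pX1 pX2 γ θ.1 θ.2.1 θ.2.2) (destDecoder p Q pX1 pX2 pX3 γ θ.1 θ.2.1 θ.2.2)
    a a'
  exact ⟨f1, f2, f3, g, hf3, hle.trans hθ⟩

theorem marc_sw_relay_cpm_destination
    {S1 S2 W W3 X1 X2 X3 Y Y3 : Type*}
    [Fintype S1] [Fintype S2] [Fintype W] [Fintype W3]
    [Fintype X1] [Fintype X2] [Fintype X3] [Fintype Y] [Fintype Y3]
    [DecidableEq S1] [DecidableEq S2] [DecidableEq W] [DecidableEq W3]
    [DecidableEq X1] [DecidableEq X2] [DecidableEq X3] [DecidableEq Y] [DecidableEq Y3]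
    (pSrc : S1 × S2 × W × W3 → ℝ) (hSrc : IsPmf pSrc)
    (Q : X1 × X2 × X3 → Y × Y3 → ℝ) (hQ : ∀ x, IsPmf (Q x))
    (h : ∃ (pX1 : S1 → X1 → ℝ) (pX2 : S2 → X2 → ℝ) (pX3 : S1 → S2 → X3 → ℝ),
        (∀ s1, IsPmf (pX1 s1)) ∧ (∀ s2, IsPmf (pX2 s2)) ∧
        (∀ s1 s2, IsPmf (pX3 s1 s2)) ∧
        (let μ := thm2Joint pSrc Q pX1 pX2 pX3
        -- H(S1|S2,W3) < I(X1;Y3|S1,X2,X3)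
        (condEntropyOf μ (fun (s1,_,_,_,_,_,_,_,_) => s1)
            (fun (_,s2,w3,_,_,_,_,_,_) => (s2, w3)) <
          condMutualInfoOf μ (fun (_,_,_,_,x1,_,_,_,_) => x1)
            (fun (_,_,_,_,_,_,_,y3,_) => y3)
            (fun (s1,_,_,_,_,x2,x3,_,_) => (s1, x2, x3))) ∧
        -- H(S2|S1,W3) < I(X2;Y3|S2,X1,X3)
        (condEntropyOf μ (fun (_,s2,_,_,_,_,_,_,_) => s2)
            (fun (s1,_,w3,_,_,_,_,_,_) => (s1, w3)) <
          condMutualInfoOf μ (fun (_,_,_,_,_,x2,_,_,_) => x2)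
            (fun (_,_,_,_,_,_,_,y3,_) => y3)
            (fun (_,s2,_,_,x1,_,x3,_,_) => (s2, x1, x3))) ∧
        -- H(S1,S2|W3) < I(X1,X2;Y3|S1,S2,X3)
        (condEntropyOf μ (fun (s1,s2,_,_,_,_,_,_,_) => (s1, s2))
            (fun (_,_,w3,_,_,_,_,_,_) => w3) <
          condMutualInfoOf μ (fun (_,_,_,_,x1,x2,_,_,_) => (x1, x2))
            (fun (_,_,_,_,_,_,_,y3,_) => y3)
            (fun (s1,s2,_,_,_,_,x3,_,_) => (s1, s2, x3))) ∧
        -- H(S1|S2,W) < I(X1,X3;Y|S2,X2,W)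
        (condEntropyOf μ (fun (s1,_,_,_,_,_,_,_,_) => s1)
            (fun (_,s2,_,w,_,_,_,_,_) => (s2, w)) <
          condMutualInfoOf μ (fun (_,_,_,_,x1,_,x3,_,_) => (x1, x3))
            (fun (_,_,_,_,_,_,_,_,y) => y)
            (fun (_,s2,_,w,_,x2,_,_,_) => (s2, x2, w))) ∧
        -- H(S2|S1,W) < I(X2,X3;Y|S1,X1,W)
        (condEntropyOf μ (fun (_,s2,_,_,_,_,_,_,_) => s2)
            (fun (s1,_,_,w,_,_,_,_,_) => (s1, w)) <
          condMutualInfoOf μ (fun (_,_,_,_,_,x2,x3,_,_) => (x2, x3))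
            (fun (_,_,_,_,_,_,_,_,y) => y)
            (fun (s1,_,_,w,x1,_,_,_,_) => (s1, x1, w))) ∧
        -- H(S1,S2|W) < I(X1,X2,X3;Y|W)
        (condEntropyOf μ (fun (s1,s2,_,_,_,_,_,_,_) => (s1, s2))
            (fun (_,_,_,w,_,_,_,_,_) => w) <
          condMutualInfoOf μ (fun (_,_,_,_,x1,x2,x3,_,_) => (x1, x2, x3))
            (fun (_,_,_,_,_,_,_,_,y) => y)
            (fun (_,_,_,w,_,_,_,_,_) => w)))) :
    MarcReliablyTransmitted pSrc Q := by
  obtain ⟨pX1, pX2, pX3, h₁, h₂, h₃, hr₁, hr₂, hr₁₂, hd₁, hd₂, hd₁₂⟩ := h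
  intro ε hε
  have hR := eventually_blockBound_relayLetter_lt hSrc hQ h₁ h₂ h₃
    (hasDerivAt_relayLetter_moment₁ hSrc hQ h₁ h₂ h₃)
    (hasDerivAt_relayLetter_moment₂ hSrc hQ h₁ h₂ h₃)
    (hasDerivAt_relayLetter_moment₁₂ hSrc hQ h₁ h₂ h₃)
    (sub_neg.2 hr₁) (sub_neg.2 hr₂) (sub_neg.2 hr₁₂)
  have hD := eventually_blockBound_destLetter_lt hSrc hQ h₁ h₂ h₃
    (hasDerivAt_destLetter_moment₁ hSrc hQ h₁ h₂ h₃)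
    (hasDerivAt_destLetter_moment₂ hSrc hQ h₁ h₂ h₃)
    (hasDerivAt_destLetter_moment₁₂ hSrc hQ h₁ h₂ h₃)
    (sub_neg.2 hd₁) (sub_neg.2 hd₂) (sub_neg.2 hd₁₂)
  obtain ⟨B, ⟨⟨ρ₁, hρ₁, ρ₂, hρ₂, ρ₃, hρ₃, hRB⟩, τ₁, hτ₁, τ₂, hτ₂, τ₃, hτ₃, hDB⟩, hB⟩ :=
    ((hR.and hD).and (Filter.eventually_ge_atTop 1)).exists
  have hB0 : (0 : ℝ) < B := by exact_mod_cast hB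
  have hδ : 0 < ε / (3 * B) := by positivity
  have hγδ : 3 * (ε / (3 * B) / 4) < ε / (3 * B) := by linarith
  obtain ⟨t, ⟨hRt, hDt⟩, ht⟩ :=
    (((hRB _ _ hγδ).and (hDB _ _ hγδ)).and (Filter.eventually_ge_atTop 1)).exists
  have hγ : 0 < ε / (3 * B) / 4 := by linarith
  obtain ⟨f1, f2, f3, g, hf3, hle⟩ := exists_code_of_blockBound_le hSrc hQ h₁ h₂ h₃ hγ hρ₁ hρ₂ hρ₃
    hτ₁ hτ₂ hτ₃ hRt.le hDt.le
  refine ⟨(B + 1) * (B * t), by positivity, f1, f2, f3, g, hf3, hle.trans (le_of_eq ?_)⟩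
  field_simp
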